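/- arXiv:math/0212156 — 4 statements merged into one kernel-verified Lean document; each statement's English description precedes it below -/
import Mathlib

section
/- Let p_1, …, p_k ∈ (0,1) with p_1 + ⋯ + p_k = 1, and let K ∈ ℕ. Then there exist an integer L ≥ 0 and a rational function Q(n, w_1, …, w_k) = ∑_{i,j⃗} c_{i,j⃗} n^i w_1^{j_1}⋯w_k^{j_k}, where c_{0,0⃗} = 1 and c_{i,j⃗} ≠ 0 only when −L ≤ i < 0 and 0 ≤ j_1 + ⋯ + j_k < −2i (so n^L·Q is a polynomial and Q(n,w) = 1 + o(1) uniformly for ‖w‖ ≤ C√(n log n)), such that for every n ∈ ℕ and all reals w_1, …, w_k with ∑ w_i = 0 and with each m_i := p_i·n + w_i a nonnegative integer, the multinomial probability B_p(n; m_1, …, m_k) = (n!/(m_1!⋯m_k!))·p_1^{m_1}⋯p_k^{m_k} satisfies B_p(n; m_1, …, m_k) = (2πn)^{−(k−1)/2}·(p_1⋯p_k)^{−1/2}·exp(−∑_{i=1}^k w_i²/(2 p_i n))·Q(n, w_1, …, w_k) + O(n^{−K}). -/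
open Finset
open scoped BigOperators

namespace MExp
open Filter Topology Asymptotics

lemma log_taylor : ∃ F : ℝ → ℝ, AnalyticAt ℝ F 0 ∧
    ∀ z, Real.log (1 + z) = z - z ^ 2 / 2 + z ^ 3 * F z := by
  have ha : AnalyticAt ℝ (fun z : ℝ => Real.log (1 + z)) 0 := by
    apply AnalyticAt.log
    · fun_prop
    · norm_num
  obtain ⟨F, hF, h⟩ := ha.exists_eq_sum_add_pow_mul 3
  refine ⟨F, hF, fun z => ?_⟩
  have hd : ∀ᶠ y in 𝓝 (0:ℝ), deriv (fun z : ℝ => Real.log (1 + z)) y = (1 + y)⁻¹ := by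
    filter_upwards [lt_mem_nhds (show (-1:ℝ) < 0 by norm_num)] with y hy
    have : HasDerivAt (fun z : ℝ => Real.log (1 + z)) (1 / (1 + y)) y :=
      ((hasDerivAt_id y).const_add 1).log (by simp; linarith)
    rw [this.deriv, one_div]
  have h2 : HasDerivAt (fun y : ℝ => (1 + y)⁻¹) (-1) 0 := by
    have := ((hasDerivAt_id (0:ℝ)).const_add 1).fun_inv (by simp)
    simpa using this
  have h3 : iteratedDeriv 2 (fun z : ℝ => Real.log (1 + z)) 0 = -1 := by
    rw [iteratedDeriv_succ, iteratedDeriv_one, Filter.EventuallyEq.deriv_eq hd, h2.deriv]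
  rw [h z]
  simp only [Finset.sum_range_succ, Finset.sum_range_zero, iteratedDeriv_zero, iteratedDeriv_one,
    h3, hd.self_of_nhds]
  simp [Nat.factorial]
  ring

lemma pow_taylor (R : ℕ) : ∃ F : ℝ → ℝ, AnalyticAt ℝ F 0 ∧
    ∀ z, ((1 + z)⁻¹) ^ R = 1 - R * z + z ^ 2 * F z := by
  have ha : AnalyticAt ℝ (fun z : ℝ => ((1 + z)⁻¹) ^ R) 0 := by
    apply AnalyticAt.fun_pow
    apply AnalyticAt.fun_inv
    · fun_prop
    · norm_num
  obtain ⟨F, hF, h⟩ := ha.exists_eq_sum_add_pow_mul 2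
  refine ⟨F, hF, fun z => ?_⟩
  have h2 : HasDerivAt (fun y : ℝ => ((1 + y)⁻¹) ^ R) (-R) 0 := by
    have := (((hasDerivAt_id (0:ℝ)).const_add 1).fun_inv (by simp)).fun_pow R
    simpa using this
  rw [h z]
  simp only [Finset.sum_range_succ, Finset.sum_range_zero, iteratedDeriv_zero, iteratedDeriv_one,
    h2.deriv]
  simp
  ring

/-- The difference operator equation solved to any order. -/
lemma diff_solve (g h : ℝ → ℝ) (hh : AnalyticAt ℝ h 0) (hg : ∀ x, x ≠ 0 → g x = x ^ 2 * h x)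
    (R : ℕ) : ∃ (P : Polynomial ℝ) (h : ℝ → ℝ), P.coeff 0 = 0 ∧ AnalyticAt ℝ h 0 ∧
      ∀ x, x ≠ 0 → g x = P.eval x - P.eval (x / (1 + x)) + x ^ (R + 2) * h x := by
  induction R with
  | zero => exact ⟨0, h, by simp, hh, fun x hx => by simp [hg x hx]⟩
  | succ R ih =>
    obtain ⟨P, u, hP, hu, hgu⟩ := ih
    obtain ⟨v, hv, huv⟩ := hu.exists_eq_sum_add_pow_mul 1
    obtain ⟨F, hF, hRF⟩ := pow_taylor (R + 1)
    refine ⟨P + Polynomial.C (u 0 / (R + 1)) * Polynomial.X ^ (R + 1),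
      fun x => v x + (u 0 / (R + 1)) * F x, by simp [hP], ?_, ?_⟩
    · fun_prop
    · intro x hx
      have h1 := hRF x
      have h2 := huv x
      simp only [Finset.sum_range_one, iteratedDeriv_zero] at h2
      simp at h2
      rw [hgu x hx, h2]
      simp only [Polynomial.eval_add, Polynomial.eval_mul, Polynomial.eval_C, Polynomial.eval_pow,
        Polynomial.eval_X]
      rw [div_eq_mul_inv x, mul_pow, h1]
      have : (R : ℝ) + 1 ≠ 0 := by positivity
      push_cast
      field_simp
      ring

lemma telescope (d : ℕ → ℝ) (hd : Tendsto d atTop (𝓝 0)) (R : ℕ) (C : ℝ) (n0 : ℕ) (hn0 : 1 ≤ n0)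
    (h : ∀ n, n0 ≤ n → d n - d (n + 1) ≤ C / (n : ℝ) ^ (R + 2)) (hC : 0 ≤ C) :
    ∀ n, n0 ≤ n → d n ≤ 2 * C / (n : ℝ) ^ (R + 1) := by
  have key : Tendsto (fun n : ℕ => 2 * C / (n : ℝ) ^ (R + 1)) atTop (𝓝 0) := by
    apply Tendsto.const_div_atTop
    exact (tendsto_pow_atTop (by omega)).comp tendsto_natCast_atTop_atTop
  have hm : Monotone (fun j : ℕ => d (n0 + j) - 2 * C / ((n0 + j : ℕ) : ℝ) ^ (R + 1)) := by
    apply monotone_nat_of_le_succ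
    intro j
    set n := n0 + j with hn
    have hn1 : 1 ≤ n := by omega
    have h1 := h n (by omega)
    rw [← add_assoc, ← hn]
    have hx : (1:ℝ) ≤ n := by exact_mod_cast hn1
    push_cast
    have h3 : C / (n : ℝ) ^ (R + 2) + 2 * C / ((n : ℝ) + 1) ^ (R + 1) ≤ 2 * C / (n : ℝ) ^ (R + 1) := by
      have h4 : 1 / ((n : ℝ) + 1) ^ (R + 1) ≤ 1 / ((n : ℝ) ^ R * (n + 1)) := by
        apply one_div_le_one_div_of_le (by positivity)
        rw [pow_succ]
        gcongr
        linarith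
      have h5 : 1 / (n : ℝ) ^ (R + 2) + 2 * (1 / ((n : ℝ) ^ R * (n + 1))) ≤ 2 * (1 / (n : ℝ) ^ (R + 1)) := by
        have : 2 * (1 / (n : ℝ) ^ (R + 1)) - (1 / (n : ℝ) ^ (R + 2) + 2 * (1 / ((n : ℝ) ^ R * (n + 1))))
            = (n - 1) / (n ^ (R+2) * (n + 1)) := by
          field_simp
          ring
        have h6 : 0 ≤ ((n:ℝ) - 1) / (n ^ (R+2) * (n + 1)) := by
          apply div_nonneg <;> [linarith; positivity]
        linarith
      have : 1 / (n : ℝ) ^ (R + 2) + 2 * (1 / ((n : ℝ) + 1) ^ (R + 1)) ≤ 2 * (1 / (n : ℝ) ^ (R + 1)) := by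
        linarith
      have := mul_le_mul_of_nonneg_left this hC
      calc _ = C * (1 / (n : ℝ) ^ (R + 2) + 2 * (1 / ((n : ℝ) + 1) ^ (R + 1))) := by ring
        _ ≤ _ := this
        _ = _ := by ring
    linarith
  have ht : Tendsto (fun j : ℕ => d (n0 + j) - 2 * C / ((n0 + j : ℕ) : ℝ) ^ (R + 1)) atTop (𝓝 0) := by
    have := (hd.sub key).comp (tendsto_add_atTop_nat n0)
    simp only [sub_zero] at this
    refine this.congr (fun j => ?_)
    simp [add_comm]
  intro n hn
  obtain ⟨j, rfl⟩ := Nat.exists_eq_add_of_le hn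
  have := hm.ge_of_tendsto ht j
  linarith

/-- The logarithmic remainder in the Stirling formula. -/
noncomputable def sr (n : ℕ) : ℝ := Real.log (Stirling.stirlingSeq n) - Real.log (√Real.pi)

lemma sr_tendsto : Tendsto sr atTop (𝓝 0) := by
  have h := (Real.continuousAt_log (by positivity : √Real.pi ≠ 0)).tendsto.comp
    Stirling.tendsto_stirlingSeq_sqrt_pi
  have := h.sub_const (Real.log (√Real.pi))
  rw [sub_self] at this
  exact this

lemma sr_diff (n : ℕ) (hn : 1 ≤ n) :
    sr n - sr (n + 1) = ((n : ℝ) + 1 / 2) * Real.log (1 + (n : ℝ)⁻¹) - 1 := by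
  have hx : (0:ℝ) < n := by exact_mod_cast hn
  have h : 1 + (n:ℝ)⁻¹ = (n + 1) / n := by field_simp
  simp only [sr, Stirling.log_stirlingSeq_formula]
  simp (disch := positivity) only [h, Nat.factorial_succ, Nat.cast_mul, Nat.cast_succ, Real.log_div, Real.log_mul,
    Real.log_exp]
  ring

lemma sr_expansion (R : ℕ) : ∃ P : Polynomial ℝ, P.coeff 0 = 0 ∧
    (fun n : ℕ => sr n - P.eval ((n : ℝ)⁻¹)) =O[atTop] (fun n : ℕ => ((n : ℝ) ^ (R + 1))⁻¹) := by
  obtain ⟨F, hF, hlog⟩ := log_taylor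
  obtain ⟨P, u, hP, hu, hgu⟩ := diff_solve (fun x => (x⁻¹ + 1 / 2) * Real.log (1 + x) - 1)
    (fun x => - 1 / 4 + (1 + x / 2) * F x) (by fun_prop) (by
      intro x hx
      simp only [hlog]
      field_simp
      ring) R
  refine ⟨P, hP, ?_⟩
  have hinv : Tendsto (fun n : ℕ => ((n : ℝ)⁻¹)) atTop (𝓝 0) :=
    tendsto_inv_atTop_zero.comp tendsto_natCast_atTop_atTop
  set d : ℕ → ℝ := fun n : ℕ => sr n - P.eval ((n : ℝ)⁻¹) with hd
  have hdt : Tendsto d atTop (𝓝 0) := by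
    have h1 : Tendsto (fun n : ℕ => P.eval ((n : ℝ)⁻¹)) atTop (𝓝 (P.eval 0)) :=
      (P.continuous.tendsto 0).comp hinv
    rw [← Polynomial.coeff_zero_eq_eval_zero, hP] at h1
    simpa using sr_tendsto.sub h1
  have hub : ∀ᶠ x in 𝓝 (0:ℝ), |u x| ≤ |u 0| + 1 := by
    have := hu.continuousAt.abs.tendsto
    filter_upwards [this.eventually (ge_mem_nhds (show |u 0| < |u 0| + 1 by linarith))] with x hx
    exact hx
  obtain ⟨n1, hn1⟩ := eventually_atTop.1 (hinv.eventually hub)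
  set C := |u 0| + 1
  have hC : 0 ≤ C := by positivity
  have hdiff : ∀ n : ℕ, max n1 1 ≤ n → |d n - d (n + 1)| ≤ C / (n : ℝ) ^ (R + 2) := by
    intro n hn
    have hn' : 1 ≤ n := le_trans (le_max_right _ _) hn
    have hx : (0:ℝ) < n := by exact_mod_cast hn'
    have h1 := hgu (n : ℝ)⁻¹ (by positivity)
    have h2 := sr_diff n hn'
    have h3 : (n : ℝ)⁻¹ / (1 + (n : ℝ)⁻¹) = ((n + 1 : ℕ) : ℝ)⁻¹ := by
      push_cast
      field_simp
    simp only [inv_inv] at h1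
    rw [h3] at h1
    have h4 : d n - d (n + 1) = ((n : ℝ)⁻¹) ^ (R + 2) * u ((n:ℝ)⁻¹) := by
      simp only [hd]
      linarith
    rw [h4, abs_mul, abs_of_pos (by positivity), inv_pow, div_eq_mul_inv, mul_comm]
    gcongr
    exact hn1 n (le_trans (le_max_left _ _) hn)
  have hA := telescope d hdt R C (max n1 1) (le_max_right _ _)
    (fun n hn => le_trans (le_abs_self _) (hdiff n hn)) hC
  have hB := telescope (fun n => - d n) (by simpa using hdt.neg) R C (max n1 1) (le_max_right _ _)
    (fun n hn => le_trans (by rw [← abs_neg]; exact le_trans (le_of_eq (by ring)) (le_abs_self _)) (hdiff n hn)) hC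
  apply IsBigO.of_bound (2 * C)
  filter_upwards [eventually_ge_atTop (max n1 1)] with n hn
  rw [Real.norm_eq_abs, Real.norm_eq_abs, abs_of_nonneg (by positivity : (0:ℝ) ≤ ((n : ℝ) ^ (R + 1))⁻¹),
    ← div_eq_mul_inv]
  exact abs_le'.2 ⟨hA n hn, hB n hn⟩


section Alg
variable {k : ℕ}

/-- The total `n = ∑ m_t` as a real number. -/
noncomputable def N (m : Fin k → ℕ) : ℝ := ((∑ t, m t : ℕ) : ℝ)

/-- The deviation `w_t = m_t - p_t n`. -/
noncomputable def W (p : Fin k → ℝ) (t : Fin k) (m : Fin k → ℕ) : ℝ := (m t : ℝ) - p t * N m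

/-- Monomials `n^i w^j`. -/
noncomputable def mono (p : Fin k → ℝ) (x : ℤ × (Fin k → ℕ)) (m : Fin k → ℕ) : ℝ :=
  N m ^ x.1 * ∏ t, W p t m ^ x.2 t

/-- Admissible exponents. -/
def good (k : ℕ) : Set (ℤ × (Fin k → ℕ)) :=
  {x | x.1 < 0 ∧ ((∑ t, x.2 t : ℕ) : ℤ) < -2 * x.1}

/-- The span of the admissible monomials. -/
noncomputable def A (p : Fin k → ℝ) : Submodule ℝ ((Fin k → ℕ) → ℝ) :=
  Submodule.span ℝ (Set.image (mono p) (good k))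

/-- The central region. -/
def Reg (p : Fin k → ℝ) : Set (Fin k → ℕ) := {m | ∀ t, |W p t m| ≤ √(N m) * Real.log (N m)}

/-- The filter for n tending to infinity inside the central region. -/
def F (p : Fin k → ℝ) : Filter (Fin k → ℕ) := cofinite ⊓ 𝓟 (Reg p)

lemma N_tendsto_cofinite : Tendsto (N (k := k)) cofinite atTop := by
  rw [tendsto_atTop]
  intro b
  rw [eventually_cofinite]
  apply (Set.finite_Iic (fun _ : Fin k => ⌈b⌉₊)).subset
  intro m hm t
  simp only [Set.mem_ofPred_eq, not_le] at hm
  have h1 : (m t : ℝ) ≤ N m := by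
    unfold N
    exact_mod_cast Finset.single_le_sum (f := m) (fun _ _ => Nat.zero_le _) (Finset.mem_univ t)
  have h2 : (m t : ℝ) ≤ (⌈b⌉₊ : ℝ) := by
    have := Nat.le_ceil b
    linarith
  exact_mod_cast h2

lemma N_tendsto (p : Fin k → ℝ) : Tendsto (N (k := k)) (F p) atTop :=
  N_tendsto_cofinite.mono_left inf_le_left

lemma F_reg (p : Fin k → ℝ) : ∀ᶠ m in F p, m ∈ Reg p :=
  mem_inf_of_right (mem_principal_self _)

lemma mono_small (p : Fin k → ℝ) {x : ℤ × (Fin k → ℕ)} (hx : x ∈ good k) :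
    mono p x =O[F p] (fun m => N m ^ (-(1 / 4) : ℝ)) := by
  obtain ⟨e, he⟩ : ∃ e : ℕ, x.1 = -(e + 1 : ℕ) := ⟨(-x.1 - 1).toNat, by have := hx.1; omega⟩
  have hd : (∑ t, x.2 t) ≤ 2 * e + 1 := by have := hx.2; omega
  have h1 : (fun y : ℝ => Real.log y ^ (2 * e + 1)) =O[atTop] (fun y => y ^ (1 / 4 : ℝ)) := by
    have := (isLittleO_log_rpow_rpow_atTop ((2 * e + 1 : ℕ) : ℝ) (show (0:ℝ) < 1 / 4 by norm_num)).isBigO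
    simpa only [Real.rpow_natCast] using this
  have h2 : (fun m => N m ^ (-(1 / 2) : ℝ) * Real.log (N m) ^ (2 * e + 1)) =O[F p]
      (fun m => N m ^ (-(1 / 4) : ℝ)) := by
    have h3 := (isBigO_refl (fun m => N m ^ (-(1 / 2) : ℝ)) (F p)).mul (h1.comp_tendsto (N_tendsto p))
    refine h3.congr' (by rfl) ?_
    filter_upwards [(N_tendsto p).eventually_gt_atTop 0] with m hm
    simp only [Function.comp]
    rw [← Real.rpow_add hm]
    norm_num
  refine IsBigO.trans (IsBigO.of_bound 1 ?_) h2
  filter_upwards [F_reg p, (N_tendsto p).eventually_ge_atTop (Real.exp 1)] with m hm hN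
  have hN1 : 1 ≤ N m := le_trans (by have := Real.add_one_le_exp (1:ℝ); linarith) hN
  have hN0 : 0 < N m := by linarith
  have hlog : 1 ≤ Real.log (N m) := by
    rw [Real.le_log_iff_exp_le hN0]; exact hN
  have hs : 1 ≤ √(N m) := by rw [Real.one_le_sqrt]; exact hN1
  have hb : 1 ≤ √(N m) * Real.log (N m) := one_le_mul_of_one_le_of_one_le hs hlog
  rw [one_mul, Real.norm_eq_abs, Real.norm_eq_abs, abs_of_nonneg (a := N m ^ (-(1 / 2) : ℝ) * _) (by positivity)]
  unfold mono
  rw [abs_mul, abs_of_pos (a := N m ^ x.1) (by positivity), Finset.abs_prod]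
  calc N m ^ x.1 * ∏ t, |W p t m ^ x.2 t|
      ≤ N m ^ x.1 * ∏ t, (√(N m) * Real.log (N m)) ^ x.2 t := by
        gcongr with t
        rw [abs_pow]
        gcongr
        exact hm t
    _ = N m ^ x.1 * (√(N m) * Real.log (N m)) ^ (∑ t, x.2 t) := by
        rw [Finset.prod_pow_eq_pow_sum]
    _ ≤ N m ^ x.1 * (√(N m) * Real.log (N m)) ^ (2 * e + 1) := by
        gcongr
    _ = _ := by
        rw [mul_pow, ← mul_assoc]
        congr 1
        rw [he, Real.sqrt_eq_rpow, ← Real.rpow_intCast, ← Real.rpow_natCast, ← Real.rpow_mul hN0.le,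
          ← Real.rpow_add hN0]
        congr 1
        push_cast
        ring

lemma A_small (p : Fin k → ℝ) {a : (Fin k → ℕ) → ℝ} (ha : a ∈ A p) :
    a =O[F p] (fun m => N m ^ (-(1 / 4) : ℝ)) := by
  induction ha using Submodule.span_induction with
  | mem x h => obtain ⟨y, hy, rfl⟩ := h; exact mono_small p hy
  | zero => exact isBigO_zero _ _
  | add x y _ _ hx hy => exact hx.add hy
  | smul c x _ hx => exact hx.const_smul_left c

lemma N_pos (p : Fin k → ℝ) : ∀ᶠ m in F p, 0 < N m := (N_tendsto p).eventually_gt_atTop 0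

lemma mono_mul (p : Fin k → ℝ) (x y : ℤ × (Fin k → ℕ)) (hx : x ∈ good k) (hy : y ∈ good k) :
    mono p x * mono p y = mono p (x + y) := by
  funext m
  simp only [mono, Pi.mul_apply, Prod.fst_add, Prod.snd_add, Pi.add_apply, pow_add, Finset.prod_mul_distrib]
  rw [zpow_add' (by have := hx.1; have := hy.1; right; left; omega)]
  ring

lemma A_mul (p : Fin k → ℝ) {a b : (Fin k → ℕ) → ℝ} (ha : a ∈ A p) (hb : b ∈ A p) : a * b ∈ A p := by
  have h : a * b ∈ A p * A p := Submodule.mul_mem_mul ha hb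
  refine (?_ : A p * A p ≤ A p) h
  unfold A
  rw [Submodule.span_mul_span]
  apply Submodule.span_mono
  rintro _ ⟨_, ⟨x, hx, rfl⟩, _, ⟨y, hy, rfl⟩, rfl⟩
  refine ⟨x + y, ?_, (mono_mul p x y hx hy).symm⟩
  have h1 := hx.1
  have h2 := hx.2
  have h3 := hy.1
  have h4 := hy.2
  constructor
  · simp only [Prod.fst_add]; omega
  · simp only [Prod.fst_add, Prod.snd_add, Pi.add_apply, Finset.sum_add_distrib]
    push_cast at *
    linarith

/-- Having an asymptotic expansion in admissible monomials to all orders. -/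
def Ex (p : Fin k → ℝ) (f : (Fin k → ℕ) → ℝ) : Prop :=
  ∀ K : ℕ, ∃ a ∈ A p, (fun m => f m - a m) =O[F p] (fun m => (N m ^ K)⁻¹)

variable {p : Fin k → ℝ} {f g : (Fin k → ℕ) → ℝ}

lemma Ex.of_mem (h : f ∈ A p) : Ex p f := fun K => ⟨f, h, by simpa using isBigO_zero _ _⟩

lemma Ex.zero : Ex p (fun _ => 0) := Ex.of_mem (A p).zero_mem

lemma Ex.add (hf : Ex p f) (hg : Ex p g) : Ex p (fun m => f m + g m) := fun K => by
  obtain ⟨a, ha, h1⟩ := hf K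
  obtain ⟨b, hb, h2⟩ := hg K
  refine ⟨a + b, (A p).add_mem ha hb, (h1.add h2).congr_left (fun m => ?_)⟩
  simp only [Pi.add_apply]; ring

lemma Ex.const_mul (c : ℝ) (hf : Ex p f) : Ex p (fun m => c * f m) := fun K => by
  obtain ⟨a, ha, h1⟩ := hf K
  refine ⟨c • a, (A p).smul_mem c ha, (h1.const_mul_left c).congr_left (fun m => ?_)⟩
  simp only [Pi.smul_apply, smul_eq_mul]; ring

lemma Ex.neg (hf : Ex p f) : Ex p (fun m => - f m) := by
  simpa using hf.const_mul (-1)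

lemma Ex.sub (hf : Ex p f) (hg : Ex p g) : Ex p (fun m => f m - g m) := by
  simpa [sub_eq_add_neg] using hf.add hg.neg

lemma Ex.sum {ι : Type*} (s : Finset ι) {f : ι → (Fin k → ℕ) → ℝ} (h : ∀ i ∈ s, Ex p (f i)) :
    Ex p (fun m => ∑ i ∈ s, f i m) := by
  classical
  induction s using Finset.induction_on with
  | empty => simpa using Ex.zero
  | insert i s hi ih =>
    simp only [Finset.sum_insert hi]
    exact (h i (by simp)).add (ih fun j hj => h j (by simp [hj]))

lemma Ex.congr' (hf : Ex p f) (h : f =ᶠ[F p] g) : Ex p g := fun K => by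
  obtain ⟨a, ha, h1⟩ := hf K
  refine ⟨a, ha, h1.congr' ?_ (by rfl)⟩
  filter_upwards [h] with m hm
  rw [hm]

lemma Ex.of_approx (h : ∀ K : ℕ, ∃ g, Ex p g ∧ (fun m => f m - g m) =O[F p] (fun m => (N m ^ K)⁻¹)) :
    Ex p f := fun K => by
  obtain ⟨g, hg, h1⟩ := h K
  obtain ⟨a, ha, h2⟩ := hg K
  exact ⟨a, ha, (h1.add h2).congr_left (fun m => by ring)⟩

lemma Ex.small (hf : Ex p f) : f =O[F p] (fun m => N m ^ (-(1 / 4) : ℝ)) := by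
  obtain ⟨a, ha, h1⟩ := hf 1
  have h2 : (fun m => (N m ^ 1)⁻¹) =O[F p] (fun m => N m ^ (-(1 / 4) : ℝ)) := by
    apply IsBigO.of_bound 1
    filter_upwards [(N_tendsto p).eventually_ge_atTop 1] with m hm
    rw [one_mul, Real.norm_of_nonneg (by positivity), Real.norm_of_nonneg (by positivity), pow_one,
      ← Real.rpow_neg_one]
    exact Real.rpow_le_rpow_of_exponent_le hm (by norm_num)
  exact ((h1.trans h2).add (A_small p ha)).congr_left (fun m => by ring)

lemma delta_tendsto : Tendsto (fun m => N m ^ (-(1 / 4) : ℝ)) (F p) (𝓝 0) :=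
  (tendsto_rpow_neg_atTop (show (0:ℝ) < 1 / 4 by norm_num)).comp (N_tendsto p)

lemma Ex.tendsto (hf : Ex p f) : Tendsto f (F p) (𝓝 0) := hf.small.trans_tendsto delta_tendsto

lemma Ex.bounded (hf : Ex p f) : f =O[F p] (fun _ => (1:ℝ)) := hf.tendsto.isBigO_one ℝ

lemma Ex.mul (hf : Ex p f) (hg : Ex p g) : Ex p (fun m => f m * g m) := fun K => by
  obtain ⟨a, ha, h1⟩ := hf K
  obtain ⟨b, hb, h2⟩ := hg K
  refine ⟨a * b, A_mul p ha hb, ?_⟩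
  have h3 := (hf.bounded.mul h2).add ((h1.mul (Ex.of_mem hb).bounded).congr_right
    (fun m => by rw [mul_one, one_mul]))
  refine (h3.congr_left (fun m => ?_)).congr_right (fun m => one_mul _)
  simp only [Pi.mul_apply]; ring

lemma Ex.pow (hf : Ex p f) (j : ℕ) : Ex p (fun m => f m ^ (j + 1)) := by
  induction j with
  | zero => simpa using hf
  | succ j ih => simpa only [pow_succ] using ih.mul hf

lemma Ex.pow_small (hf : Ex p f) (K : ℕ) : (fun m => f m ^ (4 * K)) =O[F p] (fun m => (N m ^ K)⁻¹) := by
  refine (hf.small.pow (4 * K)).congr' (by rfl) ?_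
  filter_upwards [N_pos p] with m hm
  rw [← Real.rpow_natCast, ← Real.rpow_mul hm.le, ← Real.rpow_natCast, ← Real.rpow_neg hm.le]
  congr 1
  push_cast
  ring

lemma Ex.comp (hf : Ex p f) {G : ℝ → ℝ} (hG : AnalyticAt ℝ G 0) : Ex p (fun m => G (f m) - G 0) := by
  apply Ex.of_approx
  intro K
  obtain ⟨H, hH, h⟩ := hG.exists_eq_sum_add_pow_mul (4 * (K + 1))
  refine ⟨fun m => ∑ i ∈ Finset.range (4 * K + 3), (iteratedDeriv (i + 1) G 0 / (i + 1).factorial) *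
    f m ^ (i + 1), Ex.sum _ (fun i _ => (hf.pow i).const_mul _), ?_⟩
  have h1 : (fun m => H (f m)) =O[F p] (fun _ => (1:ℝ)) :=
    (hH.continuousAt.tendsto.comp hf.tendsto).isBigO_one ℝ
  have h2 : (fun m => (N m ^ (K + 1))⁻¹) =O[F p] (fun m => (N m ^ K)⁻¹) := by
    apply IsBigO.of_bound 1
    filter_upwards [(N_tendsto p).eventually_ge_atTop 1] with m hm
    rw [one_mul, Real.norm_of_nonneg (by positivity), Real.norm_of_nonneg (by positivity)]
    gcongr
    omega
  have h3 := ((hf.pow_small (K + 1)).trans h2).mul h1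
  refine (h3.congr_left (fun m => ?_)).congr_right (fun m => mul_one _)
  rw [h (f m), show 4 * (K + 1) = (4 * K + 3) + 1 by ring, Finset.sum_range_succ']
  simp only [smul_eq_mul, iteratedDeriv_zero, pow_zero, Nat.factorial_zero, Nat.cast_one, div_one, one_mul]
  have : ∀ i, (f m ^ (i + 1) / ((i + 1).factorial : ℝ)) * iteratedDeriv (i + 1) G 0 =
    (iteratedDeriv (i + 1) G 0 / ((i + 1).factorial : ℝ)) * f m ^ (i + 1) := fun i => by ring
  simp only [this]
  ring

lemma Ex.poly (hf : Ex p f) (P : Polynomial ℝ) (hP : P.coeff 0 = 0) : Ex p (fun m => P.eval (f m)) := by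
  have h : AnalyticAt ℝ (fun x => P.eval x) 0 := by
    have := AnalyticAt.aeval_polynomial (𝕜 := ℝ) (analyticAt_id (z := (0:ℝ))) P
    simpa using this
  have := hf.comp h
  simpa [← Polynomial.coeff_zero_eq_eval_zero, hP] using this

end Alg

section Main
variable {k : ℕ} {p : Fin k → ℝ}

lemma Ex.single (t : Fin k) (i : ℤ) (j : ℕ) (hi : i < 0) (hj : (j : ℤ) < -2 * i) :
    Ex p (fun m => N m ^ i * W p t m ^ j) := by
  apply Ex.of_mem
  apply Submodule.subset_span
  refine ⟨(i, Pi.single t j), ⟨hi, ?_⟩, ?_⟩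
  · simpa using hj
  · funext m
    simp only [mono]
    congr 1
    rw [Finset.prod_eq_single t]
    · simp
    · intro b _ hb
      simp [hb]
    · simp

/-- The relative deviation. -/
noncomputable def V (p : Fin k → ℝ) (t : Fin k) (m : Fin k → ℕ) : ℝ := W p t m / (p t * N m)

lemma Ex_V (t : Fin k) : Ex p (V p t) := by
  have := (Ex.single (p := p) t (-1) 1 (by norm_num) (by norm_num)).const_mul (p t)⁻¹
  convert this using 2 with m
  simp only [V, zpow_neg_one, pow_one, div_eq_mul_inv, mul_inv]
  ring

lemma Ex_inv [NeZero k] : Ex p (fun m => (N m)⁻¹) := by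
  have := (Ex.single (p := p) 0 (-1) 0 (by norm_num) (by norm_num))
  simpa using this

lemma m_eq (hp : ∀ t, 0 < p t) (t : Fin k) (m : Fin k → ℕ) (hN : 0 < N m) :
    (m t : ℝ) = p t * N m * (1 + V p t m) := by
  have := hp t
  unfold V W
  field_simp
  ring

lemma Ex_m_inv [NeZero k] (hp : ∀ t, 0 < p t) (t : Fin k) : Ex p (fun m => (m t : ℝ)⁻¹) := by
  have ha : AnalyticAt ℝ (fun z : ℝ => (1 + z)⁻¹) 0 := by
    apply AnalyticAt.fun_inv
    · fun_prop
    · norm_num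
  have h1 := (Ex_V (p := p) t).comp ha
  have h2 := ((Ex_inv.mul h1).add Ex_inv).const_mul (p t)⁻¹
  refine h2.congr' ?_
  filter_upwards [N_pos p] with m hm
  rw [m_eq hp t m hm]
  simp only [mul_inv, add_zero, inv_one]
  ring

lemma m_tendsto [NeZero k] (hp : ∀ t, 0 < p t) (t : Fin k) : Tendsto (fun m => m t) (F p) atTop := by
  rw [← tendsto_natCast_atTop_iff (R := ℝ)]
  have h1 : ∀ᶠ m in F p, p t / 2 * N m ≤ (m t : ℝ) := by
    filter_upwards [N_pos p, (Ex_V (p := p) t).tendsto.eventually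
      (lt_mem_nhds (show (-1/2 : ℝ) < 0 by norm_num))] with m hm hv
    rw [m_eq hp t m hm]
    have := mul_pos (hp t) hm
    nlinarith
  exact tendsto_atTop_mono' _ h1 ((N_tendsto p).const_mul_atTop (by have := hp t; positivity))

lemma Ex_sr_N [NeZero k] : Ex p (fun m => sr (∑ t, m t)) := by
  apply Ex.of_approx
  intro K
  obtain ⟨P, hP, h⟩ := sr_expansion K
  refine ⟨_, Ex_inv.poly P hP, ?_⟩
  have ht : Tendsto (fun m : Fin k → ℕ => ∑ t, m t) (F p) atTop := by
    rw [← tendsto_natCast_atTop_iff (R := ℝ)]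
    exact N_tendsto p
  refine (h.comp_tendsto ht).trans (IsBigO.of_bound 1 ?_)
  filter_upwards [(N_tendsto p).eventually_ge_atTop 1] with m hm
  simp only [Function.comp]
  change ‖(N m ^ (K + 1))⁻¹‖ ≤ _
  rw [one_mul, Real.norm_of_nonneg (by positivity), Real.norm_of_nonneg (by positivity)]
  gcongr
  omega

lemma Ex_sr_m [NeZero k] (hp : ∀ t, 0 < p t) (t : Fin k) : Ex p (fun m => sr (m t)) := by
  apply Ex.of_approx
  intro K
  obtain ⟨P, hP, h⟩ := sr_expansion (4 * K)
  refine ⟨_, (Ex_m_inv hp t).poly P hP, ?_⟩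
  refine (h.comp_tendsto (m_tendsto hp t)).trans ?_
  have h1 := ((Ex_m_inv hp t).pow_small K).mul (Ex_m_inv hp t).bounded
  refine (h1.congr_left (fun m => ?_)).congr_right (fun m => mul_one _)
  simp only [Function.comp]
  rw [← inv_pow, pow_succ]

/-- The multinomial probability. -/
noncomputable def Bp (p : Fin k → ℝ) (m : Fin k → ℕ) : ℝ :=
  (Nat.multinomial Finset.univ m : ℝ) * ∏ t, p t ^ m t

/-- The Gaussian main term. -/
noncomputable def Mn (p : Fin k → ℝ) (m : Fin k → ℕ) : ℝ :=
  (2 * Real.pi * N m) ^ (-((k : ℝ) - 1) / 2) * (∏ t, p t) ^ (-(1 : ℝ) / 2) *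
    Real.exp (-∑ t, W p t m ^ 2 / (2 * p t * N m))

lemma log_fact (n : ℕ) (hn : 1 ≤ n) : Real.log (n.factorial : ℝ) =
    n * Real.log n - n + Real.log (2 * Real.pi) / 2 + Real.log n / 2 + sr n := by
  have hx : (0:ℝ) < n := by exact_mod_cast hn
  unfold sr
  rw [Stirling.log_stirlingSeq_formula, Real.log_mul (by norm_num) hx.ne', Real.log_div hx.ne' (by positivity),
    Real.log_exp, Real.log_mul (by norm_num) (by positivity), Real.log_sqrt (by positivity)]
  ring

lemma sum_W (hsum : ∑ t, p t = 1) (m : Fin k → ℕ) : ∑ t, W p t m = 0 := by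
  unfold W
  rw [Finset.sum_sub_distrib, ← Finset.sum_mul, hsum]
  simp [N]

lemma core [NeZero k] (hp : ∀ t, 0 < p t) (hsum : ∑ t, p t = 1) : ∃ T, Ex p T ∧
    ∀ᶠ m in F p, Bp p m = Mn p m * Real.exp (T m) := by
  obtain ⟨G, hG, hlog⟩ := log_taylor
  have ha : AnalyticAt ℝ (fun z : ℝ => Real.log (1 + z)) 0 := by
    apply AnalyticAt.log
    · fun_prop
    · norm_num
  have ha2 : AnalyticAt ℝ (fun z : ℝ => -1 / 2 + (1 + z) * G z) 0 := by fun_prop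
  set H : ℝ → ℝ := fun z : ℝ => -1 / 2 + (1 + z) * G z with hH
  have hE1 : ∀ t, Ex p (fun m => Real.log (1 + V p t m)) := fun t => by
    simpa using (Ex_V (p := p) t).comp ha
  have hE2 : ∀ t, Ex p (fun m => N m * V p t m ^ 3) := fun t => by
    refine ((Ex.single (p := p) t (-2) 3 (by norm_num) (by norm_num)).const_mul ((p t ^ 3)⁻¹)).congr' ?_
    filter_upwards [N_pos p] with m hm
    have := hp t
    unfold V
    rw [zpow_neg]
    norm_cast
    field_simp
  have hE3 : ∀ t, Ex p (fun m => p t * N m * V p t m ^ 3 * H (V p t m)) := fun t => by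
    have h1 := (((hE2 t).mul ((Ex_V (p := p) t).comp ha2)).add ((hE2 t).const_mul (H 0))).const_mul (p t)
    convert h1 using 2 with m
    ring
  refine ⟨fun m => sr (∑ t, m t) - ∑ t, (sr (m t) + 1 / 2 * Real.log (1 + V p t m) +
    p t * N m * V p t m ^ 3 * H (V p t m)), ?_, ?_⟩
  · exact Ex_sr_N.sub (Ex.sum _ fun t _ => ((Ex_sr_m hp t).add ((hE1 t).const_mul _)).add (hE3 t))
  have hmpos : ∀ᶠ m in F p, ∀ t, 1 ≤ m t := by
    rw [eventually_all]
    exact fun t => (m_tendsto hp t).eventually_ge_atTop 1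
  have hvpos : ∀ᶠ m in F p, ∀ t, -1 < V p t m := by
    rw [eventually_all]
    exact fun t => (Ex_V (p := p) t).tendsto.eventually (lt_mem_nhds (show (-1 : ℝ) < 0 by norm_num))
  filter_upwards [(N_tendsto p).eventually_ge_atTop 1, hmpos, hvpos] with m hN hm hv
  have hN0 : 0 < N m := by linarith
  have hn1 : 1 ≤ ∑ t, m t := by unfold N at hN; exact_mod_cast hN
  have hlm : ∀ t, Real.log (m t) = Real.log (p t) + Real.log (N m) + Real.log (1 + V p t m) := fun t => by
    have h1 := hp t
    have h2 := hv t
    rw [m_eq hp t m hN0, Real.log_mul (by positivity) (by linarith), Real.log_mul h1.ne' hN0.ne']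
  have hml : ∀ t, (m t : ℝ) * Real.log (1 + V p t m) =
      W p t m + W p t m ^ 2 / (2 * p t * N m) + p t * N m * V p t m ^ 3 * H (V p t m) := fun t => by
    have h1 := hp t
    have h3 : W p t m = p t * N m * V p t m := by unfold V; field_simp
    rw [m_eq hp t m hN0, hlog, h3, hH]
    field_simp
    ring
  have hfac : ∀ t, Real.log ((m t).factorial : ℝ) = m t * Real.log (p t) + m t * Real.log (N m)
      + W p t m + W p t m ^ 2 / (2 * p t * N m) - m t + (Real.log (2 * Real.pi) + Real.log (N m)) / 2
      + Real.log (p t) / 2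
      + (sr (m t) + 1 / 2 * Real.log (1 + V p t m) + p t * N m * V p t m ^ 3 * H (V p t m)) := fun t => by
    rw [log_fact _ (hm t)]
    have := hml t
    rw [hlm t, mul_add, this]
    ring
  have hBpos : 0 < Bp p m := by
    unfold Bp
    have : 0 < Nat.multinomial Finset.univ m := Nat.multinomial_pos _ _
    have h2 : 0 < ∏ t, p t ^ m t := Finset.prod_pos fun t _ => pow_pos (hp t) _
    positivity
  have hprod : 0 < ∏ t, p t := Finset.prod_pos fun t _ => hp t
  have hMpos : 0 < Mn p m := by
    unfold Mn
    positivity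
  have hlogN : Real.log ((∑ t, m t).factorial : ℝ) = N m * Real.log (N m) - N m
      + (Real.log (2 * Real.pi) + Real.log (N m)) / 2 + sr (∑ t, m t) := by
    rw [log_fact _ hn1]
    unfold N
    ring
  have hB : Real.log (Bp p m) = Real.log ((∑ t, m t).factorial : ℝ) - ∑ t, Real.log ((m t).factorial : ℝ)
      + ∑ t, m t * Real.log (p t) := by
    have hs := Nat.multinomial_spec Finset.univ m
    have h1 : (0:ℝ) < ∏ t, ((m t).factorial : ℝ) := Finset.prod_pos fun t _ => by positivity
    have h2 : (0:ℝ) < Nat.multinomial Finset.univ m := by exact_mod_cast Nat.multinomial_pos _ _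
    have h3 : (∏ t, ((m t).factorial : ℝ)) * Nat.multinomial Finset.univ m = ((∑ t, m t).factorial : ℝ) := by
      exact_mod_cast hs
    have h4 : (0:ℝ) < ∏ t, p t ^ m t := Finset.prod_pos fun t _ => pow_pos (hp t) _
    unfold Bp
    rw [← h3, Real.log_mul h2.ne' h4.ne', Real.log_mul h1.ne' h2.ne', Real.log_prod (fun t _ => (pow_pos (hp t) _).ne'),
      Real.log_prod (fun t _ => by positivity)]
    simp only [Real.log_pow]
    ring
  have hM : Real.log (Mn p m) = -((k : ℝ) - 1) / 2 * (Real.log (2 * Real.pi) + Real.log (N m))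
      - (∑ t, Real.log (p t)) / 2 - ∑ t, W p t m ^ 2 / (2 * p t * N m) := by
    unfold Mn
    rw [Real.log_mul (by positivity) (by positivity), Real.log_mul (by positivity) (by positivity), Real.log_exp,
      Real.log_rpow (by positivity), Real.log_rpow hprod, Real.log_mul (by positivity) hN0.ne',
      Real.log_prod (fun t _ => (hp t).ne')]
    ring
  have hsm : ∑ t, (m t : ℝ) = N m := by simp [N]
  rw [← Real.exp_log hBpos, ← Real.exp_log hMpos, ← Real.exp_add]
  congr 1
  rw [hB, hM, hlogN]
  simp only [hfac]
  simp only [Finset.sum_add_distrib, Finset.sum_sub_distrib, ← Finset.sum_mul, ← Finset.sum_div, hsm, sum_W hsum,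
    Finset.sum_const, Finset.card_univ, Fintype.card_fin, nsmul_eq_mul]
  ring

end Main

section Tail
variable {k : ℕ} {p : Fin k → ℝ}

lemma multinomial_le (y : Fin k → ℝ) (hy : ∀ t, 0 ≤ y t) (m : Fin k → ℕ) :
    (Nat.multinomial Finset.univ m : ℝ) * ∏ t, y t ^ m t ≤ (∑ t, y t) ^ (∑ t, m t) := by
  rw [Finset.sum_pow_eq_sum_piAntidiag]
  refine Finset.single_le_sum (f := fun m : Fin k → ℕ => (Nat.multinomial Finset.univ m : ℝ) * ∏ t, y t ^ m t)
    (fun m _ => ?_) ?_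
  · have : 0 ≤ ∏ t, y t ^ m t := Finset.prod_nonneg fun t _ => pow_nonneg (hy t) _
    positivity
  · simp

lemma Bp_chernoff (hp : ∀ t, 0 < p t) (hp1 : ∀ t, p t ≤ 1) (hsum : ∑ t, p t = 1) (t : Fin k) (m : Fin k → ℕ)
    (s : ℝ) (hs : |s| ≤ 1) : Bp p m ≤ Real.exp (N m * s ^ 2 - s * W p t m) := by
  have hN : 0 ≤ N m := by unfold N; positivity
  have h1 := multinomial_le (fun j => p j * Real.exp (if j = t then s else 0))
    (fun j => by have := hp j; positivity) m
  have h2 : ∏ j, (p j * Real.exp (if j = t then s else 0)) ^ m j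
      = (∏ j, p j ^ m j) * Real.exp (s * m t) := by
    simp only [mul_pow, Finset.prod_mul_distrib]
    congr 1
    rw [Finset.prod_eq_single t]
    · rw [if_pos rfl, ← Real.exp_nat_mul, mul_comm]
    · intro b _ hb
      simp [hb]
    · simp
  have h3 : ∑ j, p j * Real.exp (if j = t then s else 0) = 1 + p t * (Real.exp s - 1) := by
    have : ∀ j, p j * Real.exp (if j = t then s else 0) = p j + if j = t then p t * (Real.exp s - 1) else 0 := by
      intro j
      split_ifs with h
      · subst h; ring
      · simp
    simp only [this, Finset.sum_add_distrib, hsum]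
    simp
  rw [h2, h3, ← mul_assoc] at h1
  have h4 : (1 + p t * (Real.exp s - 1)) ^ (∑ t, m t) ≤ Real.exp (N m * (p t * (s + s ^ 2))) := by
    have h5 : 1 + p t * (Real.exp s - 1) ≤ Real.exp (p t * (s + s ^ 2)) := by
      have h6 := (abs_le.1 (Real.abs_exp_sub_one_sub_id_le hs)).2
      have h7 := Real.add_one_le_exp (p t * (s + s ^ 2))
      have h8 := mul_le_mul_of_nonneg_left (show Real.exp s - 1 ≤ s + s ^ 2 by linarith) (hp t).le
      linarith
    have h0 : 0 ≤ 1 + p t * (Real.exp s - 1) := by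
      have := mul_pos (hp t) (Real.exp_pos s)
      have := hp1 t
      linarith
    calc _ ≤ Real.exp (p t * (s + s ^ 2)) ^ (∑ t, m t) := pow_le_pow_left₀ h0 h5 _
      _ = _ := by rw [← Real.exp_nat_mul]; rfl
  have h5 : Bp p m = (Bp p m * Real.exp (s * m t)) * Real.exp (-(s * m t)) := by
    rw [mul_assoc, ← Real.exp_add]; simp
  rw [h5]
  calc _ ≤ Real.exp (N m * (p t * (s + s ^ 2))) * Real.exp (-(s * m t)) := by
        gcongr
        exact h1.trans h4
    _ = Real.exp (N m * (p t * s ^ 2) - s * W p t m) := by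
        rw [← Real.exp_add]
        unfold W
        ring_nf
    _ ≤ _ := by
        gcongr
        have := mul_le_mul_of_nonneg_right (hp1 t) (sq_nonneg s)
        linarith

lemma Bp_tail (hp : ∀ t, 0 < p t) (hp1 : ∀ t, p t ≤ 1) (hsum : ∑ t, p t = 1) (t : Fin k) (m : Fin k → ℕ)
    (hN : 1 ≤ N m) (h : √(N m) * Real.log (N m) < |W p t m|) :
    Bp p m ≤ Real.exp (-(Real.log (N m)) ^ 2 / 4) := by
  have hN0 : 0 < N m := by linarith
  have hl : 0 ≤ Real.log (N m) := Real.log_nonneg hN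
  have hr : 0 < √(N m) := by positivity
  have hrr : √(N m) ^ 2 = N m := Real.sq_sqrt hN0.le
  set l := Real.log (N m) with hl'
  set r := √(N m) with hr'
  have hlr : l ≤ 2 * r := by
    have h1 := Real.log_le_sub_one_of_pos hr
    rw [hr', Real.log_sqrt hN0.le, ← hl', ← hr'] at h1
    linarith
  have hs0 : 0 ≤ l / (2 * r) := by positivity
  have hs1 : l / (2 * r) ≤ 1 := by rw [div_le_one (by positivity)]; exact hlr
  have key : ∀ σ : ℝ, |σ| = 1 → σ * W p t m = |W p t m| → Bp p m ≤ Real.exp (-l ^ 2 / 4) := by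
    intro σ hσ hσW
    refine (Bp_chernoff hp hp1 hsum t m (σ * (l / (2 * r))) ?_).trans ?_
    · rw [abs_mul, hσ, one_mul, abs_of_nonneg hs0]; exact hs1
    · apply Real.exp_le_exp.2
      have h1 : σ ^ 2 = 1 := by rw [← sq_abs, hσ]; norm_num
      have h2 : N m * (σ * (l / (2 * r))) ^ 2 = l ^ 2 / 4 := by
        rw [mul_pow, h1, ← hrr]; field_simp; norm_num
      have h3 : σ * (l / (2 * r)) * W p t m = l / (2 * r) * |W p t m| := by rw [← hσW]; ring
      have h4 : l / (2 * r) * (r * l) ≤ l / (2 * r) * |W p t m| := mul_le_mul_of_nonneg_left h.le hs0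
      have h5 : l / (2 * r) * (r * l) = l ^ 2 / 2 := by field_simp
      rw [h2, h3]
      linarith
  rcases le_total 0 (W p t m) with hw | hw
  · exact key 1 (by simp) (by rw [abs_of_nonneg hw]; ring)
  · exact key (-1) (by simp) (by rw [abs_of_nonpos hw]; ring)

lemma Mn_le [NeZero k] (hp : ∀ t, 0 < p t) (m : Fin k → ℕ) (hN : 1 ≤ N m) :
    |Mn p m| ≤ (∏ t, p t) ^ (-(1 : ℝ) / 2) * Real.exp (-∑ t, W p t m ^ 2 / (2 * p t * N m)) := by
  have hprod : 0 < ∏ t, p t := Finset.prod_pos fun t _ => hp t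
  have hk : (1:ℝ) ≤ k := by exact_mod_cast NeZero.one_le
  unfold Mn
  rw [abs_of_pos (by positivity), mul_assoc]
  apply mul_le_of_le_one_left (by positivity)
  apply Real.rpow_le_one_of_one_le_of_nonpos
  · have := Real.pi_gt_three
    nlinarith
  · linarith

lemma Mn_tail [NeZero k] (hp : ∀ t, 0 < p t) (hp1 : ∀ t, p t ≤ 1) (t : Fin k) (m : Fin k → ℕ)
    (hN : 1 ≤ N m) (h : √(N m) * Real.log (N m) < |W p t m|) :
    |Mn p m| ≤ (∏ t, p t) ^ (-(1 : ℝ) / 2) * Real.exp (-(Real.log (N m)) ^ 2 / 4) := by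
  have hN0 : 0 < N m := by linarith
  have hl : 0 ≤ Real.log (N m) := Real.log_nonneg hN
  have hprod : 0 < ∏ t, p t := Finset.prod_pos fun t _ => hp t
  refine (Mn_le hp m hN).trans ?_
  gcongr
  have h1 : W p t m ^ 2 / (2 * p t * N m) ≤ ∑ t, W p t m ^ 2 / (2 * p t * N m) :=
    Finset.single_le_sum (f := fun t => W p t m ^ 2 / (2 * p t * N m))
      (fun j _ => by have := hp j; positivity) (Finset.mem_univ t)
  have h2 : N m * Real.log (N m) ^ 2 ≤ W p t m ^ 2 := by
    have := pow_le_pow_left₀ (by positivity) h.le 2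
    rwa [mul_pow, Real.sq_sqrt hN0.le, sq_abs] at this
  have h3 : Real.log (N m) ^ 2 / 2 ≤ W p t m ^ 2 / (2 * p t * N m) := by
    have h0 := hp t
    rw [div_le_div_iff₀ (by norm_num) (by positivity)]
    have h4 : p t * (N m * Real.log (N m) ^ 2) ≤ 1 * (N m * Real.log (N m) ^ 2) :=
      mul_le_mul_of_nonneg_right (hp1 t) (by positivity)
    nlinarith
  have := sq_nonneg (Real.log (N m))
  linarith

/-- The complementary filter. -/
def F' (p : Fin k → ℝ) : Filter (Fin k → ℕ) := cofinite ⊓ 𝓟 (Reg p)ᶜ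

lemma explog_small (K : ℕ) : (fun m : Fin k → ℕ => Real.exp (-(Real.log (N m)) ^ 2 / 4)) =O[cofinite]
    (fun m => (N m ^ K)⁻¹) := by
  apply IsBigO.of_bound 1
  filter_upwards [N_tendsto_cofinite.eventually_ge_atTop (Real.exp (4 * K))] with m hm
  have hN0 : 0 < N m := (Real.exp_pos _).trans_le hm
  have hl : 4 * K ≤ Real.log (N m) := by rw [Real.le_log_iff_exp_le hN0]; exact hm
  rw [one_mul, Real.norm_of_nonneg (by positivity), Real.norm_of_nonneg (by positivity)]
  have : (N m ^ K)⁻¹ = Real.exp (-(K * Real.log (N m))) := by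
    rw [Real.exp_neg, Real.exp_nat_mul, Real.exp_log hN0]
  rw [this]
  apply Real.exp_le_exp.2
  have h0 : (0:ℝ) ≤ 4 * K := by positivity
  nlinarith

lemma A_poly (hp : ∀ t, 0 < p t) (hp1 : ∀ t, p t ≤ 1) {a : (Fin k → ℕ) → ℝ} (ha : a ∈ A p) :
    ∃ D : ℕ, a =O[cofinite] (fun m => N m ^ D) := by
  have hmon : ∀ D E : ℕ, D ≤ E → (fun m : Fin k → ℕ => N m ^ D) =O[cofinite] (fun m => N m ^ E) := by
    intro D E h
    apply IsBigO.of_bound 1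
    filter_upwards [N_tendsto_cofinite.eventually_ge_atTop 1] with m hm
    rw [one_mul, Real.norm_of_nonneg (by positivity), Real.norm_of_nonneg (by positivity)]
    gcongr
  induction ha using Submodule.span_induction with
  | mem x h =>
    obtain ⟨y, hy, rfl⟩ := h
    refine ⟨∑ t, y.2 t, IsBigO.of_bound 1 ?_⟩
    filter_upwards [N_tendsto_cofinite.eventually_ge_atTop 1] with m hm
    have hN0 : 0 < N m := by linarith
    rw [one_mul, Real.norm_eq_abs, Real.norm_of_nonneg (by positivity), ← Finset.prod_pow_eq_pow_sum]
    unfold mono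
    rw [abs_mul, Finset.abs_prod, abs_of_pos (by positivity)]
    have h1 : N m ^ y.1 ≤ 1 := zpow_le_one_of_nonpos₀ hm hy.1.le
    have hW : ∀ t, |W p t m| ≤ N m := fun t => by
      have h2 : (m t : ℝ) ≤ N m := by
        unfold N
        exact_mod_cast Finset.single_le_sum (f := m) (fun _ _ => Nat.zero_le _) (Finset.mem_univ t)
      have h3 : p t * N m ≤ N m := mul_le_of_le_one_left hN0.le (hp1 t)
      have h4 : 0 ≤ p t * N m := mul_nonneg (hp t).le hN0.le
      have h5 : (0:ℝ) ≤ m t := by positivity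
      unfold W
      rw [abs_le]
      constructor <;> linarith
    calc _ ≤ 1 * ∏ t, |W p t m ^ y.2 t| := by gcongr
      _ = ∏ t, |W p t m| ^ y.2 t := by simp [abs_pow]
      _ ≤ _ := by
        gcongr with t
        exact hW t
  | zero => exact ⟨0, isBigO_zero _ _⟩
  | add x y _ _ hx hy =>
    obtain ⟨D, hD⟩ := hx
    obtain ⟨E, hE⟩ := hy
    exact ⟨max D E, (hD.trans (hmon _ _ (le_max_left _ _))).add (hE.trans (hmon _ _ (le_max_right _ _)))⟩
  | smul c x _ hx =>
    obtain ⟨D, hD⟩ := hx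
    exact ⟨D, hD.const_smul_left c⟩

lemma central [NeZero k] (hp : ∀ t, 0 < p t) (hsum : ∑ t, p t = 1) (K : ℕ) : ∃ a ∈ A p,
    (fun m => Bp p m - Mn p m * (1 + a m)) =O[F p] (fun m => (N m ^ K)⁻¹) := by
  obtain ⟨T, hT, hB⟩ := core hp hsum
  have h1 := hT.comp (G := Real.exp) analyticAt_rexp
  obtain ⟨a, ha, h2⟩ := h1 K
  refine ⟨a, ha, ?_⟩
  have hM : Mn p =O[F p] (fun _ => (1:ℝ)) := by
    apply IsBigO.of_bound ((∏ t, p t) ^ (-(1 : ℝ) / 2))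
    filter_upwards [(N_tendsto p).eventually_ge_atTop 1] with m hm
    have hprod : 0 < ∏ t, p t := Finset.prod_pos fun t _ => hp t
    rw [Real.norm_eq_abs, norm_one]
    refine (Mn_le hp m hm).trans ?_
    gcongr
    rw [Real.exp_le_one_iff, neg_nonpos]
    exact Finset.sum_nonneg fun t _ => by have := hp t; positivity
  refine (hM.mul h2).congr' ?_ ?_
  · filter_upwards [hB] with m hm
    rw [hm, Real.exp_zero]
    ring
  · filter_upwards with m
    rw [one_mul]

lemma full [NeZero k] (hp : ∀ t, 0 < p t) (hp1 : ∀ t, p t ≤ 1) (hsum : ∑ t, p t = 1) (K : ℕ) : ∃ a ∈ A p,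
    (fun m => Bp p m - Mn p m * (1 + a m)) =O[cofinite] (fun m => (N m ^ K)⁻¹) := by
  obtain ⟨a, ha, h1⟩ := central hp hsum K
  refine ⟨a, ha, ?_⟩
  have hsplit : (cofinite : Filter (Fin k → ℕ)) = F p ⊔ F' p := by
    unfold F F'
    rw [← inf_sup_left, sup_principal, Set.union_compl_self, principal_univ, inf_top_eq]
  rw [hsplit]
  refine h1.sup ?_
  have hle : F' p ≤ cofinite := inf_le_left
  have hout : ∀ᶠ m in F' p, m ∈ (Reg p)ᶜ := mem_inf_of_right (mem_principal_self _)
  have hN1 : ∀ᶠ m in F' p, 1 ≤ N m := hle (N_tendsto_cofinite.eventually_ge_atTop 1)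
  have hB : Bp p =O[F' p] (fun m : Fin k → ℕ => Real.exp (-(Real.log (N m)) ^ 2 / 4)) := by
    apply IsBigO.of_bound 1
    filter_upwards [hout, hN1] with m hm hN
    obtain ⟨t, ht⟩ : ∃ t, √(N m) * Real.log (N m) < |W p t m| := by
      by_contra! hcon
      exact hm hcon
    have h0 : 0 ≤ Bp p m := by
      unfold Bp
      have : 0 ≤ ∏ t, p t ^ m t := Finset.prod_nonneg fun t _ => pow_nonneg (hp t).le _
      positivity
    rw [one_mul, Real.norm_of_nonneg h0, Real.norm_of_nonneg (by positivity)]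
    exact Bp_tail hp hp1 hsum t m hN ht
  have hM : Mn p =O[F' p] (fun m : Fin k → ℕ => Real.exp (-(Real.log (N m)) ^ 2 / 4)) := by
    apply IsBigO.of_bound ((∏ t, p t) ^ (-(1 : ℝ) / 2))
    filter_upwards [hout, hN1] with m hm hN
    obtain ⟨t, ht⟩ : ∃ t, √(N m) * Real.log (N m) < |W p t m| := by
      by_contra! hcon
      exact hm hcon
    rw [Real.norm_eq_abs, Real.norm_of_nonneg (by positivity)]
    exact Mn_tail hp hp1 t m hN ht
  obtain ⟨D, hD⟩ := A_poly hp hp1 ha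
  have hMa : (fun m => Mn p m * a m) =O[F' p] (fun m => (N m ^ K)⁻¹) := by
    refine ((hM.trans ((explog_small (K + D)).mono hle)).mul (hD.mono hle)).congr' (by rfl) ?_
    filter_upwards [hN1] with m hm
    have : 0 < N m := by linarith
    rw [pow_add]
    field_simp
  have hE := (explog_small (k := k) K).mono hle
  exact ((hB.trans hE).sub ((hM.trans hE).add hMa)).congr_left (fun m => by ring)

end Tail

end MExp

/-- **Multinomial local limit expansion** (Lemma 1).  For `p₁,…,p_k ∈ (0,1)` with
`∑ pᵢ = 1` and any `K`, there are `L` and a rational function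
`Q(n,w) = ∑ c_{i,j⃗} n^i w^{j⃗}` with `c_{0,0⃗} = 1` and `c_{i,j⃗} ≠ 0` only for
`-L ≤ i < 0`, `0 ≤ ∑ j⃗ < -2i`, such that uniformly over all admissible `m` (writing
`wᵢ = mᵢ - pᵢ n`),
`B_p(n;m) = (2πn)^{-(k-1)/2} (p₁⋯p_k)^{-1/2} exp(-∑ wᵢ²/(2pᵢn)) Q(n,w) + O(n^{-K})`. -/
theorem multinomial_expansion (k : ℕ) (hk : 1 ≤ k) (p : Fin k → ℝ)
    (hp : ∀ t, p t ∈ Set.Ioo (0 : ℝ) 1) (hsum : ∑ t, p t = 1) (K : ℕ) :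
    ∃ (L : ℕ) (S : Finset (ℤ × (Fin k → ℕ))) (c : ℤ × (Fin k → ℕ) → ℝ),
      c (0, 0) = 1 ∧ (0, 0) ∈ S ∧
      (∀ x ∈ S, c x ≠ 0 →
        x = (0, 0) ∨ (-(L : ℤ) ≤ x.1 ∧ x.1 < 0 ∧ ((∑ t, x.2 t : ℕ) : ℤ) < -2 * x.1)) ∧
      ∃ C : ℝ, ∀ (n : ℕ) (m : Fin k → ℕ), 1 ≤ n → ∑ t, m t = n →
        |(Nat.multinomial Finset.univ m : ℝ) * ∏ t, p t ^ m t -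
            (2 * Real.pi * n) ^ (-((k : ℝ) - 1) / 2) * (∏ t, p t) ^ (-(1 : ℝ) / 2) *
              Real.exp (-∑ t, ((m t : ℝ) - p t * n) ^ 2 / (2 * p t * n)) *
              ∑ x ∈ S, c x * (n : ℝ) ^ x.1 * ∏ t, ((m t : ℝ) - p t * n) ^ x.2 t| ≤
          C / n ^ K := by
  classical
  have : NeZero k := ⟨by omega⟩
  obtain ⟨a, ha, hO⟩ := MExp.full (fun t => (hp t).1) (fun t => (hp t).2.le) hsum K
  obtain ⟨C, hC, hb⟩ := Asymptotics.bound_of_isBigO_cofinite hO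
  unfold MExp.A at ha
  rw [Finsupp.mem_span_image_iff_linearCombination] at ha
  obtain ⟨l, hl, rfl⟩ := ha
  rw [Finsupp.mem_supported] at hl
  have h00 : ((0, 0) : ℤ × (Fin k → ℕ)) ∉ l.support := fun h => by
    have := (hl h).1
    simp at this
  refine ⟨l.support.sup (fun x => x.1.natAbs), insert (0, 0) l.support,
    fun x => if x = (0, 0) then 1 else l x, by simp, by simp, ?_, C, ?_⟩
  · intro x hx _
    rcases Finset.mem_insert.1 hx with h | h
    · exact Or.inl h
    · right
      have h1 := (hl h).1
      have h2 := (hl h).2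
      have h3 : x.1.natAbs ≤ l.support.sup (fun x => x.1.natAbs) :=
        Finset.le_sup (f := fun x : ℤ × (Fin k → ℕ) => x.1.natAbs) h
      exact ⟨by omega, h1, h2⟩
  · rintro n m hn rfl
    have hN : (((∑ t, m t : ℕ)) : ℝ) = MExp.N m := rfl
    have hN0 : 0 < MExp.N m := by rw [← hN]; exact_mod_cast hn
    have := hb (x := m) (by positivity)
    rw [Real.norm_eq_abs, Real.norm_of_nonneg (by positivity), ← div_eq_mul_inv] at this
    rw [hN]
    convert this using 2
    unfold MExp.Bp MExp.Mn
    congr 2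
    rw [Finset.sum_insert h00, Finsupp.linearCombination_apply, Finsupp.sum, Finset.sum_apply]
    congr 1
    · simp
    · apply Finset.sum_congr rfl
      intro x hx
      have : x ≠ (0, 0) := fun h => h00 (h ▸ hx)
      simp only [if_neg this, Pi.smul_apply, smul_eq_mul, MExp.mono, MExp.W]
      ring
end

section
/- Let A ∈ GL_d(ℝ). Then there exists c > 0 such that for every v ∈ ℝ^d and every n ≥ 1, ∑_{z ∈ ℤ^d} exp(−‖A(z+v)‖²/n) = (πn)^{d/2}/|det A| + O(e^{−c·n}), where the implied constant depends only on A and d (in particular the estimate is uniform in v). -/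
open Finset
open scoped BigOperators

lemma aux_summable (a : ℝ) (ha : 0 < a) (w : ℝ) :
    Summable (fun z : ℤ => Real.exp (-Real.pi / a * ((z : ℝ) + w) ^ 2)) := by
  have h := HurwitzKernelBounds.summable_f_int 0 w (t := 1 / a) (by positivity)
  refine h.congr fun z => ?_
  simp only [HurwitzKernelBounds.f_int, pow_zero, one_mul]
  congr 1
  ring

lemma aux_summable' (a : ℝ) (ha : 0 < a) :
    Summable (fun z : ℤ => Real.exp (-Real.pi * a * (z : ℝ) ^ 2)) := by
  have h := aux_summable (1 / a) (by positivity) 0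
  refine h.congr fun z => ?_
  congr 1
  field_simp
  ring

lemma aux_poisson (a : ℝ) (ha : 0 < a) (w : ℝ) :
    |(∑' z : ℤ, Real.exp (-Real.pi / a * ((z : ℝ) + w) ^ 2)) - Real.sqrt a| ≤
      Real.sqrt a * ∑' k : ℤ, (if k = 0 then 0 else Real.exp (-Real.pi * a * (k : ℝ) ^ 2)) := by
  have h := Complex.tsum_exp_neg_quadratic (a := (a : ℂ)) (by simpa using ha)
    (-Complex.I * (w : ℂ))
  set F : ℤ → ℂ := fun k => Complex.exp (-Real.pi * a * k ^ 2 + 2 * Real.pi * (-Complex.I * w) * k)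
    with hF
  have hn : ∀ k : ℤ, ‖F k‖ = Real.exp (-Real.pi * a * (k : ℝ) ^ 2) := by
    intro k
    simp only [hF]
    have : (-Real.pi * a * k ^ 2 + 2 * Real.pi * (-Complex.I * w) * k : ℂ) =
      ((-Real.pi * a * (k : ℝ) ^ 2 : ℝ) : ℂ) + ((-2 * Real.pi * w * k : ℝ) : ℂ) * Complex.I := by
      push_cast
      ring
    rw [this, Complex.norm_exp]
    simp [-Complex.ofReal_mul, -Complex.ofReal_neg, -Complex.ofReal_pow]
  have hFs : Summable F := by
    apply Summable.of_norm
    simp_rw [hn]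
    exact aux_summable' a ha
  have hsq : ((a : ℂ) ^ (1 / 2 : ℂ)) = ((Real.sqrt a : ℝ) : ℂ) := by
    rw [Real.sqrt_eq_rpow, Complex.ofReal_cpow ha.le]
    norm_num
  have hR : (∑' n : ℤ, Complex.exp (-Real.pi / a * (n + Complex.I * (-Complex.I * w)) ^ 2)) =
      ((∑' z : ℤ, Real.exp (-Real.pi / a * ((z : ℝ) + w) ^ 2) : ℝ) : ℂ) := by
    rw [Complex.ofReal_tsum]
    refine tsum_congr fun z => ?_
    push_cast
    congr 3
    rw [← mul_assoc]
    simp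
  rw [hR, hsq] at h
  set S := ∑' z : ℤ, Real.exp (-Real.pi / a * ((z : ℝ) + w) ^ 2)
  have hspos : 0 < Real.sqrt a := Real.sqrt_pos.mpr ha
  have hS : ((S : ℝ) : ℂ) = Real.sqrt a * ∑' k, F k := by
    rw [h]
    have : ((Real.sqrt a : ℝ) : ℂ) ≠ 0 := by exact_mod_cast hspos.ne'
    field_simp
  have hsplit := hFs.tsum_eq_add_tsum_ite (0 : ℤ)
  have hF0 : F 0 = 1 := by simp [hF]
  rw [hF0] at hsplit
  have : ((S - Real.sqrt a : ℝ) : ℂ) = Real.sqrt a * ∑' k, (if k = 0 then 0 else F k) := by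
    push_cast
    rw [hS, hsplit]
    ring
  rw [← Real.norm_eq_abs, ← Complex.norm_real, this, norm_mul, Complex.norm_real,
    Real.norm_of_nonneg hspos.le]
  refine mul_le_mul_of_nonneg_left ?_ hspos.le
  have hnn : ∀ k : ℤ, ‖(if k = 0 then 0 else F k)‖ =
      (if k = 0 then 0 else Real.exp (-Real.pi * a * (k : ℝ) ^ 2)) := by
    intro k
    split_ifs <;> simp [hn]
  have hs2 : Summable (fun k : ℤ => ‖(if k = 0 then 0 else F k)‖) := by
    refine Summable.of_nonneg_of_le (fun _ => norm_nonneg _) (fun k => ?_) hFs.norm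
    split_ifs <;> simp
  refine (norm_tsum_le_tsum_norm hs2).trans (le_of_eq (tsum_congr hnn))

lemma aux_one (r : ℝ) (hr : r ≠ 0) : ∃ c > (0 : ℝ), ∃ K ≥ (0 : ℝ), ∀ (w n : ℝ), 1 ≤ n →
    Summable (fun z : ℤ => Real.exp (-(r * z + w) ^ 2 / n)) ∧
    |(∑' z : ℤ, Real.exp (-(r * z + w) ^ 2 / n)) - Real.sqrt (Real.pi * n) / (|r|)| ≤
      K * Real.exp (-c * n) * (Real.sqrt (Real.pi * n) / |r|) := by
  have hr2 : 0 < r ^ 2 := by positivity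
  have hpi := Real.pi_pos
  set b := Real.pi / r ^ 2 with hb
  have hbpos : 0 < b := by positivity
  set K := ∑' k : ℤ, Real.exp (-Real.pi * b * ((k : ℝ) ^ 2)) * Real.exp (Real.pi * b) with hK
  have hKs : Summable (fun k : ℤ => Real.exp (-Real.pi * b * ((k : ℝ) ^ 2)) *
      Real.exp (Real.pi * b)) := (aux_summable' b hbpos).mul_right _
  refine ⟨Real.pi * b, by positivity, K, tsum_nonneg fun _ => by positivity, ?_⟩
  intro w n hn
  have hn0 : 0 < n := by linarith
  have ha : 0 < b * n := by positivity
  have hfun : (fun z : ℤ => Real.exp (-(r * z + w) ^ 2 / n)) =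
      fun z : ℤ => Real.exp (-Real.pi / (b * n) * ((z : ℝ) + w / r) ^ 2) := by
    funext z
    congr 1
    rw [hb]
    field_simp
  have hsq : Real.sqrt (Real.pi * n) / |r| = Real.sqrt (b * n) := by
    rw [hb, div_mul_eq_mul_div, Real.sqrt_div (by positivity), Real.sqrt_sq_eq_abs]
  rw [hfun, hsq]
  refine ⟨aux_summable _ ha _, (aux_poisson _ ha _).trans ?_⟩
  rw [mul_comm]
  refine mul_le_mul_of_nonneg_right ?_ (Real.sqrt_nonneg _)
  rw [hK, ← tsum_mul_right]
  have hle : ∀ k : ℤ, (if k = 0 then 0 else Real.exp (-Real.pi * (b * n) * (k : ℝ) ^ 2)) ≤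
      Real.exp (-Real.pi * b * ((k : ℝ) ^ 2)) * Real.exp (Real.pi * b) *
        Real.exp (-(Real.pi * b) * n) := by
    intro k
    split_ifs with hk
    · positivity
    · rw [← Real.exp_add, ← Real.exp_add]
      apply Real.exp_le_exp.mpr
      have h1 : (1 : ℝ) ≤ (k : ℝ) ^ 2 := by
        have : (1 : ℤ) ≤ k ^ 2 := by
          have := sq_pos_of_ne_zero hk
          omega
        exact_mod_cast this
      have h2 : 0 ≤ Real.pi * b * ((n - 1) * ((k : ℝ) ^ 2 - 1)) := by
        have := sub_nonneg.mpr hn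
        have := sub_nonneg.mpr h1
        positivity
      nlinarith
  refine Summable.tsum_le_tsum hle ?_ (hKs.mul_right _)
  refine Summable.of_nonneg_of_le (fun k => ?_) hle (hKs.mul_right _)
  split_ifs <;> positivity

/-- The relative error estimate for upper triangular matrices. -/
lemma aux_tri (d : ℕ) : ∀ (R : Matrix (Fin d) (Fin d) ℝ), (∀ i j, j < i → R i j = 0) →
    (∀ i, R i i ≠ 0) → ∃ c > (0 : ℝ), ∃ K ≥ (0 : ℝ), ∀ (v : Fin d → ℝ) (n : ℝ), 1 ≤ n →
    Summable (fun z : Fin d → ℤ =>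
      Real.exp (-(∑ i, R.mulVec (fun j => (z j : ℝ) + v j) i ^ 2) / n)) ∧
    |(∑' z : Fin d → ℤ, Real.exp (-(∑ i, R.mulVec (fun j => (z j : ℝ) + v j) i ^ 2) / n)) -
      ∏ i, (Real.sqrt (Real.pi * n) / |R i i|)| ≤
      K * Real.exp (-c * n) * ∏ i, (Real.sqrt (Real.pi * n) / |R i i|) := by
  induction d with
  | zero =>
    intro R _ _
    refine ⟨1, one_pos, 0, le_rfl, fun v n hn => ⟨Summable.of_finite, ?_⟩⟩
    simp
  | succ d ih =>
    intro R hR hd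
    obtain ⟨c₁, hc₁, K₁, hK₁, h₁⟩ := aux_one (R 0 0) (hd 0)
    obtain ⟨c₂, hc₂, K₂, hK₂, h₂⟩ := ih (R.submatrix Fin.succ Fin.succ)
      (fun i j hij => hR _ _ (Fin.succ_lt_succ_iff.mpr hij)) (fun i => hd _)
    refine ⟨min c₁ c₂, lt_min hc₁ hc₂, K₁ * (1 + K₂) + K₂, by positivity, fun v n hn => ?_⟩
    have hn0 : 0 < n := by linarith
    obtain ⟨hs₂, hb₂⟩ := h₂ (fun j => v j.succ) n hn
    set q : (Fin d → ℤ) → ℝ := fun z => Real.exp (-(∑ i, (R.submatrix Fin.succ Fin.succ).mulVec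
      (fun j => (z j : ℝ) + v j.succ) i ^ 2) / n) with hq
    set w : (Fin d → ℤ) → ℝ := fun z => R 0 0 * v 0 + ∑ j : Fin d, R 0 j.succ *
      ((z j : ℝ) + v j.succ) with hw
    set T : ℝ → ℝ := fun w => ∑' z : ℤ, Real.exp (-(R 0 0 * z + w) ^ 2 / n) with hT
    set m := Real.sqrt (Real.pi * n) / |R 0 0| with hm
    have hmn : 0 ≤ m := by positivity
    set M := ∏ i : Fin d, (Real.sqrt (Real.pi * n) / |(R.submatrix Fin.succ Fin.succ) i i|) with hM
    have hMn : 0 ≤ M := Finset.prod_nonneg fun i _ => by positivity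
    have hprod : ∏ i, (Real.sqrt (Real.pi * n) / |R i i|) = m * M := by
      rw [Fin.prod_univ_succ]
      rfl
    set f : (Fin (d + 1) → ℤ) → ℝ := fun z =>
      Real.exp (-(∑ i, R.mulVec (fun j => (z j : ℝ) + v j) i ^ 2) / n) with hf
    let e : (Fin d → ℤ) × ℤ ≃ (Fin (d + 1) → ℤ) :=
      (Equiv.prodComm _ _).trans (Fin.consEquiv (fun _ => ℤ))
    have hfe : ∀ p : (Fin d → ℤ) × ℤ, f (e p) =
        q p.1 * Real.exp (-(R 0 0 * p.2 + w p.1) ^ 2 / n) := by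
      rintro ⟨z, k⟩
      have he : e (z, k) = Fin.cons k z := rfl
      simp only [hf, hq, he, ← Real.exp_add]
      congr 1
      rw [Fin.sum_univ_succ, ← add_div]
      congr 1
      have e0 : R.mulVec (fun j => (((Fin.cons k z : Fin (d + 1) → ℤ) j : ℤ) : ℝ) + v j) 0 =
          R 0 0 * k + w z := by
        simp only [Matrix.mulVec, dotProduct, Fin.sum_univ_succ, Fin.cons_zero, Fin.cons_succ, hw]
        ring
      have e1 : ∀ i : Fin d,
          R.mulVec (fun j => (((Fin.cons k z : Fin (d + 1) → ℤ) j : ℤ) : ℝ) + v j) i.succ =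
          (R.submatrix Fin.succ Fin.succ).mulVec (fun j => (z j : ℝ) + v j.succ) i := by
        intro i
        simp only [Matrix.mulVec, dotProduct, Fin.sum_univ_succ (n := d), Fin.cons_zero,
          Fin.cons_succ, Matrix.submatrix_apply, hR i.succ 0 (Fin.succ_pos i)]
        ring
      rw [e0]
      simp only [e1]
      ring
    have hslice : ∀ z, Summable (fun k : ℤ => f (e (z, k))) := fun z => by
      simp only [hfe]
      exact (h₁ (w z) n hn).1.mul_left _
    have hsl : ∀ z, ∑' k : ℤ, f (e (z, k)) = q z * T (w z) := fun z => by
      simp only [hfe]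
      rw [tsum_mul_left]
    set ε := K₁ * Real.exp (-c₁ * n) with hε
    have hεn : 0 ≤ ε := by positivity
    have hTb : ∀ z, |T (w z) - m| ≤ ε * m := fun z => (h₁ (w z) n hn).2
    have hqn : ∀ z, 0 ≤ q z := fun z => (Real.exp_pos _).le
    have hTn : ∀ z, 0 ≤ T (w z) := fun z => tsum_nonneg fun _ => (Real.exp_pos _).le
    have hsT : Summable (fun z => q z * T (w z)) := by
      refine Summable.of_nonneg_of_le (fun z => mul_nonneg (hqn z) (hTn z)) (fun z => ?_)
        (hs₂.mul_right (m + ε * m))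
      refine mul_le_mul_of_nonneg_left ?_ (hqn z)
      linarith [(abs_le.mp (hTb z)).2]
    have hsum : Summable (fun p => f (e p)) := by
      refine (summable_prod_of_nonneg (fun p => (Real.exp_pos _).le)).mpr ⟨hslice, ?_⟩
      exact hsT.congr fun z => (hsl z).symm
    refine ⟨e.summable_iff.mp hsum, ?_⟩
    have hS : ∑' z, f z = ∑' z, q z * T (w z) := by
      rw [← e.tsum_eq, hsum.tsum_prod]
      simp only [hsl]
    rw [hS, hprod]
    have hd1 : |(∑' z, q z * T (w z)) - (∑' z, q z) * m| ≤ (∑' z, q z) * (ε * m) := by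
      rw [← tsum_mul_right, ← tsum_mul_right, ← hsT.tsum_sub (hs₂.mul_right m)]
      have hb : ∀ z, ‖q z * T (w z) - q z * m‖ ≤ q z * (ε * m) := fun z => by
        rw [← mul_sub, norm_mul, Real.norm_of_nonneg (hqn z)]
        exact mul_le_mul_of_nonneg_left (hTb z) (hqn z)
      exact tsum_of_norm_bounded (hs₂.mul_right (ε * m)).hasSum hb
    set Q := ∑' z, q z with hQ
    have hE1 : Real.exp (-c₁ * n) ≤ Real.exp (-(min c₁ c₂) * n) := by
      apply Real.exp_le_exp.mpr
      have := min_le_left c₁ c₂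
      nlinarith
    have hE2 : Real.exp (-c₂ * n) ≤ Real.exp (-(min c₁ c₂) * n) := by
      apply Real.exp_le_exp.mpr
      have := min_le_right c₁ c₂
      nlinarith
    have hE3 : Real.exp (-c₂ * n) ≤ 1 := Real.exp_le_one_iff.mpr (by nlinarith)
    have hQle : Q ≤ (1 + K₂) * M := by
      have := (abs_le.mp hb₂).2
      have : K₂ * Real.exp (-c₂ * n) * M ≤ K₂ * 1 * M := by gcongr
      linarith
    have hd2 : |Q * m - m * M| ≤ m * (K₂ * Real.exp (-c₂ * n) * M) := by
      rw [mul_comm Q m, ← mul_sub, abs_mul, abs_of_nonneg hmn]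
      exact mul_le_mul_of_nonneg_left hb₂ hmn
    calc _ ≤ _ := abs_sub_le _ (Q * m) _
      _ ≤ Q * (ε * m) + m * (K₂ * Real.exp (-c₂ * n) * M) := add_le_add hd1 hd2
      _ ≤ ((1 + K₂) * M) * ((K₁ * Real.exp (-(min c₁ c₂) * n)) * m) +
          m * (K₂ * Real.exp (-(min c₁ c₂) * n) * M) := by
        rw [hε]
        gcongr
      _ = _ := by ring

lemma aux_qr (d : ℕ) (A : Matrix (Fin d) (Fin d) ℝ) : ∃ R : Matrix (Fin d) (Fin d) ℝ,
    (∀ i j, j < i → R i j = 0) ∧ R.transpose * R = A.transpose * A := by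
  let f : Fin d → EuclideanSpace ℝ (Fin d) := fun j => WithLp.toLp 2 (fun i => A i j)
  let b := InnerProductSpace.gramSchmidtOrthonormalBasis (𝕜 := ℝ) (ι := Fin d)
    (E := EuclideanSpace ℝ (Fin d)) (by simp) f
  refine ⟨Matrix.of fun i j => inner ℝ (b i) (f j), fun i j hij =>
    InnerProductSpace.gramSchmidtOrthonormalBasis_inv_triangular _ f hij, ?_⟩
  ext j k
  have h := b.sum_inner_mul_inner (f j) (f k)
  simp only [Matrix.mul_apply, Matrix.transpose_apply, Matrix.of_apply]
  simp only [real_inner_comm (b _) (f j)] at h ⊢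
  rw [h]
  simp [f, PiLp.inner_apply, mul_comm]

lemma aux_form (d : ℕ) (A : Matrix (Fin d) (Fin d) ℝ) (x : Fin d → ℝ) :
    ∑ i, A.mulVec x i ^ 2 = dotProduct x ((A.transpose * A).mulVec x) := by
  rw [← Matrix.mulVec_mulVec, Matrix.dotProduct_mulVec, Matrix.vecMul_transpose]
  simp [dotProduct, sq]

/-- **Theta-function estimate** (Lemma 2, first part).  For invertible `A ∈ GL_d(ℝ)` there
is `c > 0` with
`∑_{z ∈ ℤ^d} exp(-‖A(z+v)‖²/n) = (πn)^{d/2}/|det A| + O(e^{-cn})`,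
uniformly in `v ∈ ℝ^d`, for all `n ≥ 1`. -/
theorem lattice_gaussian_sum (d : ℕ) (A : Matrix (Fin d) (Fin d) ℝ) (hA : IsUnit A.det) :
    ∃ c > (0 : ℝ), ∃ C : ℝ, ∀ (v : Fin d → ℝ) (n : ℝ), 1 ≤ n →
      abs ((∑' z : Fin d → ℤ,
            Real.exp (-(∑ i, A.mulVec (fun j => (z j : ℝ) + v j) i ^ 2) / n)) -
          (Real.pi * n) ^ ((d : ℝ) / 2) / |A.det|) ≤ C * Real.exp (-c * n) := by
  obtain ⟨R, hR, hRA⟩ := aux_qr d A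
  have hdet : |R.det| = |A.det| := by
    have := congrArg Matrix.det hRA
    rw [Matrix.det_mul, Matrix.det_mul, Matrix.det_transpose, Matrix.det_transpose] at this
    exact abs_eq_abs.mpr (mul_self_eq_mul_self_iff.mp this)
  have hdR : R.det = ∏ i, R i i := Matrix.det_of_isUpperTriangular (fun i j hij => hR i j hij)
  have hA0 : 0 < |A.det| := abs_pos.mpr hA.ne_zero
  have hR0 : ∀ i, R i i ≠ 0 := by
    have : R.det ≠ 0 := abs_pos.mp (hdet ▸ hA0)
    rw [hdR] at this
    exact fun i => Finset.prod_ne_zero_iff.mp this i (Finset.mem_univ i)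
  obtain ⟨c, hc, K, hK, h⟩ := aux_tri d R hR hR0
  refine ⟨c / 2, by positivity,
    K * (Real.pi ^ ((d : ℝ) / 2) * ((d.factorial : ℝ) / (c / 2) ^ d) / |A.det|), fun v n hn => ?_⟩
  have hn0 : 0 < n := by linarith
  have hpi := Real.pi_pos
  have hb := (h v n hn).2
  simp only [aux_form, hRA] at hb ⊢
  have hprod : ∏ i, (Real.sqrt (Real.pi * n) / |R i i|) =
      (Real.pi * n) ^ ((d : ℝ) / 2) / |A.det| := by
    rw [Finset.prod_div_distrib, ← Finset.abs_prod, ← hdR, hdet]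
    congr 1
    rw [Finset.prod_const, Finset.card_univ, Fintype.card_fin, Real.sqrt_eq_rpow,
      ← Real.rpow_natCast, ← Real.rpow_mul (by positivity)]
    congr 1
    ring
  rw [hprod] at hb
  refine hb.trans ?_
  have hnd : n ^ ((d : ℝ) / 2) ≤ n ^ d := by
    rw [← Real.rpow_natCast]
    apply Real.rpow_le_rpow_of_exponent_le hn
    have : (0 : ℝ) ≤ d := by positivity
    linarith
  have hfac := Real.pow_div_factorial_le_exp (x := c / 2 * n) (by positivity) d
  have hnd2 : n ^ d ≤ (d.factorial : ℝ) / (c / 2) ^ d * Real.exp (c / 2 * n) := by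
    rw [mul_pow, div_le_iff₀ (by positivity)] at hfac
    rw [div_mul_eq_mul_div, le_div_iff₀ (by positivity)]
    linarith
  have hexp : Real.exp (-c * n) * Real.exp (c / 2 * n) = Real.exp (-(c / 2) * n) := by
    rw [← Real.exp_add]
    congr 1
    ring
  rw [Real.mul_rpow hpi.le hn0.le]
  calc K * Real.exp (-c * n) * (Real.pi ^ ((d : ℝ) / 2) * n ^ ((d : ℝ) / 2) / |A.det|)
      ≤ K * Real.exp (-c * n) * (Real.pi ^ ((d : ℝ) / 2) *
        ((d.factorial : ℝ) / (c / 2) ^ d * Real.exp (c / 2 * n)) / |A.det|) := by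
        gcongr
        exact hnd.trans hnd2
    _ = _ := by
        rw [← hexp]
        ring
end

section
/- Let R be a d-dimensional balanced bounded random walk on a lattice Z and let K ∈ ℕ. Then there exist a (d+1)-dimensional sublattice Y ⊆ ℤ × Z, a constant τ' > 0, a positive definite quadratic form B on ℝ^d, an integer L ≥ 0 and a function Q(n,z) such that n^L·Q(n,z) is a polynomial in n and in the coordinates of z, Q(n,z) = 1 + o(1) uniformly for ‖z‖ ≤ C√(n log n), and P_n(z) = τ'·n^{−d/2}·e^{−B(z)/n}·Q(n,z) + O(n^{−K}) for all (n,z) ∈ Y, while P_n(z) = 0 for all (n,z) ∈ (ℕ × Z) \ Y. -/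
open Finset
open scoped BigOperators Classical

noncomputable section

/-- A bounded random walk on `ℝ^d`, given by its finitely supported step
distribution `p` (nonnegative, total mass one). Finite support encodes boundedness. -/
structure RW (d : ℕ) where
  p : EuclideanSpace ℝ (Fin d) →₀ ℝ
  nonneg : ∀ v, 0 ≤ p v
  total : ∑ v ∈ p.support, p v = 1

namespace RW

variable {d : ℕ}

/-- `P R n z` is the probability that the walk is at `z` after `n` steps. -/
def P (R : RW d) : ℕ → EuclideanSpace ℝ (Fin d) → ℝ
  | 0 => fun z => if z = 0 then 1 else 0
  | n + 1 => fun z => ∑ v ∈ R.p.support, R.p v * R.P n (z - v)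

/-- The discrete harmonic potential `a(z) = ∑ₙ (Pₙ(0) - Pₙ(z))`. -/
def pot (R : RW d) (z : EuclideanSpace ℝ (Fin d)) : ℝ :=
  ∑' n : ℕ, (R.P n 0 - R.P n z)

/-- The walk is balanced: zero drift. -/
def Balanced (R : RW d) : Prop :=
  ∑ v ∈ R.p.support, R.p v • v = 0

/-- The walk lives on the lattice `Z` and reaches every point of `Z`. -/
def OnLattice (R : RW d) (Z : AddSubgroup (EuclideanSpace ℝ (Fin d))) : Prop :=
  (∀ v ∈ R.p.support, v ∈ Z) ∧ ∀ z ∈ Z, ∃ n, 0 < R.P n z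

/-- The correlation matrix `M i j = 𝔼⟨X₁,eᵢ⟩⟨X₁,eⱼ⟩` of the walk. -/
def corr (R : RW d) : Matrix (Fin d) (Fin d) ℝ :=
  Matrix.of fun i j => ∑ v ∈ R.p.support, R.p v * v i * v j

/-- A spherical walk: balanced with correlation matrix a positive multiple of the identity. -/
def Spherical (R : RW d) : Prop :=
  R.Balanced ∧ ∃ C > 0, ∀ i j, R.corr i j = if i = j then C else 0

end RW

/-- `Z` is a `d`-dimensional lattice in `ℝ^d`: a discrete additive subgroup spanning `ℝ^d`. -/
def IsLattice {d : ℕ} (Z : AddSubgroup (EuclideanSpace ℝ (Fin d))) : Prop :=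
  (∃ ε > 0, ∀ z ∈ Z, z ≠ 0 → ε ≤ ‖z‖) ∧
    Submodule.span ℝ (Z : Set (EuclideanSpace ℝ (Fin d))) = ⊤

/-- `μ_d(r)`: `log r` in dimension `2`, and `r^(2-d)` otherwise. -/
def mu (d : ℕ) (r : ℝ) : ℝ :=
  if d = 2 then Real.log r else r ^ ((2 : ℝ) - d)

namespace LocExp
open MeasureTheory

/-- Normalised one-dimensional oscillating Gaussian moments. -/
def gp : ℕ → ℝ → ℝ → ℂ
  | 0, _, _ => 1
  | 1, a, w => -(Complex.I * w) / a
  | (k + 2), a, w => ((k + 1 : ℂ) * gp k a w - Complex.I * w * gp (k + 1) a w) / a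

/-- one-dimensional oscillating Gaussian -/
def g1 (a w t : ℝ) : ℂ := Complex.exp (-((a / 2 : ℝ) : ℂ) * (t : ℂ) ^ 2 - Complex.I * w * t)

lemma norm_g1 (a w t : ℝ) : ‖g1 a w t‖ = Real.exp (-(a / 2) * t ^ 2) := by
  unfold g1
  rw [Complex.norm_exp]
  congr 1
  have : (-((a / 2 : ℝ) : ℂ) * (t : ℂ) ^ 2 - Complex.I * w * t) =
    ((-(a / 2) * t ^ 2 : ℝ) : ℂ) + ((-(w * t) : ℝ) : ℂ) * Complex.I := by
    push_cast; ring
  rw [this]; simp [-Complex.ofReal_mul, -Complex.ofReal_neg]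

lemma continuous_g1 (a w : ℝ) : Continuous (g1 a w) := by
  unfold g1; fun_prop

lemma g1_int (a w : ℝ) (ha : 0 < a) (k : ℕ) :
    Integrable (fun t : ℝ => (t : ℂ) ^ k * g1 a w t) := by
  have h := integrable_rpow_mul_exp_neg_mul_sq (b := a / 2) (by positivity) (s := (k : ℝ))
    (by have : (0 : ℝ) ≤ k := Nat.cast_nonneg k
        linarith)
  refine h.mono ?_ ?_
  · exact ((Complex.continuous_ofReal.pow k).mul (continuous_g1 a w)).aestronglyMeasurable
  · refine Filter.Eventually.of_forall fun t => ?_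
    rw [norm_mul, norm_mul, norm_g1, norm_pow, Complex.norm_real, Real.rpow_natCast, norm_pow,
      Real.norm_of_nonneg (Real.exp_pos _).le]

lemma g1_deriv (a w t : ℝ) : HasDerivAt (g1 a w) ((-(a * t) - Complex.I * w) * g1 a w t) t := by
  unfold g1
  have h1 : HasDerivAt (fun t : ℝ => (t : ℂ)) 1 t := Complex.ofRealCLM.hasDerivAt
  have h2 : HasDerivAt (fun t : ℝ => -((a / 2 : ℝ) : ℂ) * (t : ℂ) ^ 2 - Complex.I * w * t)
      (-((a / 2 : ℝ) : ℂ) * (((2 : ℕ) : ℂ) * (t : ℂ) ^ (2 - 1) * 1) - Complex.I * w * 1) t :=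
    ((h1.pow 2).const_mul _).sub (h1.const_mul _)
  convert h2.cexp using 1
  push_cast
  ring

lemma g1_rec (a w : ℝ) (ha : 0 < a) (k : ℕ) :
    (k : ℂ) * ∫ t : ℝ, (t : ℂ) ^ (k - 1) * g1 a w t =
      a * (∫ t : ℝ, (t : ℂ) ^ (k + 1) * g1 a w t) +
        Complex.I * w * ∫ t : ℝ, (t : ℂ) ^ k * g1 a w t := by
  have h1 : ∀ t : ℝ, HasDerivAt (fun t : ℝ => (t : ℂ)) 1 t := fun t =>
    Complex.ofRealCLM.hasDerivAt
  have hd : ∀ t : ℝ, HasDerivAt (fun t : ℝ => (t : ℂ) ^ k * g1 a w t)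
      ((k : ℂ) * ((t : ℂ) ^ (k - 1) * g1 a w t) - a * ((t : ℂ) ^ (k + 1) * g1 a w t) -
        Complex.I * w * ((t : ℂ) ^ k * g1 a w t)) t := by
    intro t
    refine (((h1 t).pow k).mul (g1_deriv a w t)).congr_deriv ?_
    simp only [Pi.pow_apply]
    ring
  have i1 := (g1_int a w ha (k - 1)).const_mul (k : ℂ)
  have i2 := (g1_int a w ha (k + 1)).const_mul (a : ℂ)
  have i3 := (g1_int a w ha k).const_mul (Complex.I * w)
  have h0 := integral_eq_zero_of_hasDerivAt_of_integrable hd ((i1.sub i2).sub i3)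
    (g1_int a w ha k)
  have e1 := integral_sub (i1.sub i2) i3
  have e2 := integral_sub i1 i2
  simp only [Pi.sub_apply] at e1 e2
  rw [e1, e2, integral_const_mul, integral_const_mul, integral_const_mul] at h0
  linear_combination h0

lemma g1_zero (a w : ℝ) (ha : 0 < a) :
    ∫ t : ℝ, g1 a w t = ((Real.sqrt (2 * Real.pi / a) * Real.exp (-(w ^ 2) / (2 * a)) : ℝ) : ℂ) := by
  have h := fourierIntegral_gaussian (b := ((a / 2 : ℝ) : ℂ)) (by
    rw [Complex.ofReal_re]; positivity) (-(w : ℂ))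
  have e : ∀ t : ℝ, g1 a w t = Complex.exp (Complex.I * (-(w : ℂ)) * t) *
      Complex.exp (-((a / 2 : ℝ) : ℂ) * (t : ℂ) ^ 2) := by
    intro t
    unfold g1
    rw [← Complex.exp_add]; congr 1; ring
  simp_rw [e]
  rw [h, Complex.ofReal_mul]
  congr 1
  · rw [Real.sqrt_eq_rpow, Complex.ofReal_cpow (by positivity)]
    congr 1
    · push_cast; field_simp
    · push_cast; rfl
  · rw [Complex.ofReal_exp]
    congr 1
    push_cast
    field_simp; ring

lemma g1_moment (a w : ℝ) (ha : 0 < a) : ∀ k : ℕ,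
    (∫ t : ℝ, (t : ℂ) ^ k * g1 a w t) =
      ((Real.sqrt (2 * Real.pi / a) * Real.exp (-(w ^ 2) / (2 * a)) : ℝ) : ℂ) * gp k a w
  | 0 => by simp only [pow_zero, one_mul, gp, mul_one]; exact g1_zero a w ha
  | 1 => by
    have ha' : (a : ℂ) ≠ 0 := by exact_mod_cast ha.ne'
    have h := g1_rec a w ha 0
    have h0 := g1_moment a w ha 0
    rw [h0] at h
    generalize ((Real.sqrt (2 * Real.pi / a) * Real.exp (-(w ^ 2) / (2 * a)) : ℝ) : ℂ) = c at *
    simp only [gp, Nat.cast_zero, zero_mul, zero_add] at h ⊢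
    generalize (∫ t : ℝ, (t : ℂ) ^ 1 * g1 a w t) = J at *
    field_simp
    linear_combination -h
  | (k + 2) => by
    have ha' : (a : ℂ) ≠ 0 := by exact_mod_cast ha.ne'
    have h := g1_rec a w ha (k + 1)
    have h0 := g1_moment a w ha k
    have h1 := g1_moment a w ha (k + 1)
    rw [h1, Nat.add_sub_cancel, h0] at h
    generalize ((Real.sqrt (2 * Real.pi / a) * Real.exp (-(w ^ 2) / (2 * a)) : ℝ) : ℂ) = c at *
    simp only [gp]
    rw [show k + 1 + 1 = k + 2 from rfl] at h
    generalize (∫ t : ℝ, (t : ℂ) ^ (k + 2) * g1 a w t) = J at *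
    push_cast at h ⊢
    field_simp
    linear_combination -h

variable {d : ℕ}

/-- coefficients class: `n^L F` polynomial and `F = O(n^{-m/2} (1+|x|/√n)^N)`. -/
def Good (d m : ℕ) (F : ℕ → (Fin d → ℝ) → ℂ) : Prop :=
  (∃ (L : ℕ) (Q : MvPolynomial (Fin (d + 1)) ℂ), ∀ n : ℕ, 1 ≤ n → ∀ x : Fin d → ℝ,
    F n x * (n : ℂ) ^ L = MvPolynomial.eval (Fin.cons (n : ℂ) (fun i => (x i : ℂ))) Q) ∧
  ∃ (C : ℝ) (N : ℕ), 0 ≤ C ∧ ∀ n : ℕ, 1 ≤ n → ∀ x : Fin d → ℝ,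
    ‖F n x‖ ≤ C * (1 / Real.sqrt n) ^ m * (1 + ‖x‖ / Real.sqrt n) ^ N

lemma Good.mul {m m' : ℕ} {F G : ℕ → (Fin d → ℝ) → ℂ} (hF : Good d m F) (hG : Good d m' G) :
    Good d (m + m') (fun n x => F n x * G n x) := by
  obtain ⟨⟨L, Q, hQ⟩, C, N, hC, hb⟩ := hF
  obtain ⟨⟨L', Q', hQ'⟩, C', N', hC', hb'⟩ := hG
  refine ⟨⟨L + L', Q * Q', fun n hn x => ?_⟩, C * C', N + N', by positivity, fun n hn x => ?_⟩
  · rw [map_mul, ← hQ n hn x, ← hQ' n hn x]; ring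
  · rw [norm_mul]
    refine (mul_le_mul (hb n hn x) (hb' n hn x) (norm_nonneg _) (by positivity)).trans ?_
    apply le_of_eq; ring

lemma Good.add {m : ℕ} {F G : ℕ → (Fin d → ℝ) → ℂ} (hF : Good d m F) (hG : Good d m G) :
    Good d m (fun n x => F n x + G n x) := by
  obtain ⟨⟨L, Q, hQ⟩, C, N, hC, hb⟩ := hF
  obtain ⟨⟨L', Q', hQ'⟩, C', N', hC', hb'⟩ := hG
  refine ⟨⟨L + L', Q * MvPolynomial.X 0 ^ L' + Q' * MvPolynomial.X 0 ^ L, fun n hn x => ?_⟩,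
    C + C', N + N', by positivity, fun n hn x => ?_⟩
  · simp only [map_add, map_mul, map_pow, ← hQ n hn x, ← hQ' n hn x, MvPolynomial.eval_X,
      Fin.cons_zero]
    ring
  · refine (norm_add_le _ _).trans ((add_le_add (hb n hn x) (hb' n hn x)).trans ?_)
    have h1 : (1 : ℝ) ≤ 1 + ‖x‖ / Real.sqrt n := by
      have : 0 ≤ ‖x‖ / Real.sqrt n := by positivity
      linarith
    have e1 := pow_le_pow_right₀ h1 (Nat.le_add_right N N')
    have e2 := pow_le_pow_right₀ h1 (Nat.le_add_left N' N)
    rw [add_mul, add_mul]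
    gcongr

lemma inv_sqrt_le_one {n : ℕ} (hn : 1 ≤ n) : 1 / Real.sqrt n ≤ 1 := by
  have : 1 ≤ Real.sqrt n := Real.one_le_sqrt.mpr (by exact_mod_cast hn)
  rw [div_le_one (by linarith)]; exact this

lemma Good.mono {m m' : ℕ} (hm : m ≤ m') {F : ℕ → (Fin d → ℝ) → ℂ} (hF : Good d m' F) :
    Good d m F := by
  obtain ⟨h, C, N, hC, hb⟩ := hF
  refine ⟨h, C, N, hC, fun n hn x => (hb n hn x).trans ?_⟩
  have := pow_le_pow_of_le_one (by positivity) (inv_sqrt_le_one hn) hm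
  gcongr

lemma Good.const (c : ℂ) : Good d 0 (fun _ _ => c) :=
  ⟨⟨0, MvPolynomial.C c, fun n _ x => by simp⟩, ‖c‖, 0, norm_nonneg _, fun n _ x => by simp⟩

lemma Good.sum {m : ℕ} {ι : Type*} (s : Finset ι) {F : ι → ℕ → (Fin d → ℝ) → ℂ}
    (hF : ∀ i ∈ s, Good d m (F i)) : Good d m (fun n x => ∑ i ∈ s, F i n x) := by
  induction s using Finset.induction_on with
  | empty =>
    simp only [Finset.sum_empty]
    exact ⟨⟨0, 0, fun n _ x => by simp⟩, 0, 0, le_rfl, fun n _ x => by simp⟩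
  | insert a s ha ih =>
    simp only [Finset.sum_insert ha]
    exact (hF a (Finset.mem_insert_self _ _)).add
      (ih fun i hi => hF i (Finset.mem_insert_of_mem hi))

lemma Good.prod {ι : Type*} (s : Finset ι) {m : ι → ℕ} {F : ι → ℕ → (Fin d → ℝ) → ℂ}
    (hF : ∀ i ∈ s, Good d (m i) (F i)) : Good d (∑ i ∈ s, m i) (fun n x => ∏ i ∈ s, F i n x) := by
  induction s using Finset.induction_on with
  | empty =>
    simp only [Finset.sum_empty, Finset.prod_empty]
    exact Good.const 1
  | insert a s ha ih =>
    simp only [Finset.sum_insert ha, Finset.prod_insert ha]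
    exact (hF a (Finset.mem_insert_self _ _)).mul
      (ih fun i hi => hF i (Finset.mem_insert_of_mem hi))

lemma good_xn (i : Fin d) : Good d 1 (fun n x => (x i : ℂ) / n) := by
  refine ⟨⟨1, MvPolynomial.X i.succ, fun n hn x => ?_⟩, 1, 1, zero_le_one, fun n hn x => ?_⟩
  · have : (n : ℂ) ≠ 0 := by exact_mod_cast (by omega : n ≠ 0)
    simp [this]
  · have hx : |x i| ≤ ‖x‖ := by simpa using norm_le_pi_norm x i
    have hn0 : (0 : ℝ) < n := by exact_mod_cast hn
    rw [norm_div, Complex.norm_real, Complex.norm_natCast, pow_one, pow_one, one_mul,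
      Real.norm_eq_abs]
    have : (n : ℝ) = Real.sqrt n * Real.sqrt n := (Real.mul_self_sqrt hn0.le).symm
    have hs : 0 < Real.sqrt n := Real.sqrt_pos.mpr hn0
    calc |x i| / n ≤ ‖x‖ / n := by gcongr
      _ = 1 / Real.sqrt n * (‖x‖ / Real.sqrt n) := by
        rw [div_mul_div_comm, ← this, one_mul]
      _ ≤ _ := by gcongr; linarith

lemma good_invn : Good d 2 (fun n _ => 1 / (n : ℂ)) := by
  refine ⟨⟨1, 1, fun n hn x => ?_⟩, 1, 0, zero_le_one, fun n hn x => ?_⟩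
  · have : (n : ℂ) ≠ 0 := by exact_mod_cast (by omega : n ≠ 0)
    simp [this]
  · have hn0 : (0 : ℝ) < n := by exact_mod_cast hn
    rw [norm_div, norm_one, Complex.norm_natCast, pow_zero, div_pow, Real.sq_sqrt hn0.le]
    simp

lemma good_gp (i : Fin d) : ∀ k, Good d k (fun n x => gp k n (x i))
  | 0 => Good.const 1
  | 1 => by
    have := (Good.const (d := d) (-Complex.I)).mul (good_xn i)
    convert this using 3
    simp only [gp]; push_cast; ring
  | (k + 2) => by
    have h1 := ((Good.const (d := d) (k + 1)).mul good_invn).mul (good_gp i k)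
    have h2 := ((Good.const (d := d) (-Complex.I)).mul (good_xn i)).mul (good_gp i (k + 1))
    have h1' := h1.mono (m := k + 2) (by omega)
    have h2' := h2.mono (m := k + 2) (by omega)
    convert h1'.add h2' using 3
    simp only [gp]; push_cast; ring

lemma choose_poly (j : ℕ) : ∃ Q : MvPolynomial (Fin (d + 1)) ℂ, ∀ (n : ℕ) (x : Fin d → ℂ),
    MvPolynomial.eval (Fin.cons (n : ℂ) x) Q = (n.choose j : ℂ) := by
  induction j with
  | zero => exact ⟨1, fun n x => by simp⟩
  | succ j ih =>
    obtain ⟨Q, hQ⟩ := ih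
    refine ⟨MvPolynomial.C (1 / ((j : ℂ) + 1)) * Q * (MvPolynomial.X 0 - MvPolynomial.C (j : ℂ)),
      fun n x => ?_⟩
    simp only [map_mul, map_sub, MvPolynomial.eval_C, MvPolynomial.eval_X, hQ, Fin.cons_zero]
    have h := Nat.choose_succ_right_eq n j
    have hj : (j : ℂ) + 1 ≠ 0 := by exact_mod_cast Nat.succ_ne_zero j
    rcases le_or_gt j n with hjn | hjn
    · have h' : (n.choose (j + 1) : ℂ) * (j + 1) = n.choose j * (n - j) := by
        rw [← Nat.cast_sub hjn]; exact_mod_cast h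
      field_simp
      linear_combination -h'
    · rw [Nat.choose_eq_zero_of_lt hjn, Nat.choose_eq_zero_of_lt (by omega)]; simp

lemma Good.choose {m j : ℕ} {F : ℕ → (Fin d → ℝ) → ℂ} (hF : Good d (m + 2 * j) F) :
    Good d m (fun n x => (n.choose j : ℂ) * F n x) := by
  obtain ⟨⟨L, Q, hQ⟩, C, N, hC, hb⟩ := hF
  obtain ⟨Q', hQ'⟩ := choose_poly (d := d) j
  refine ⟨⟨L, Q' * Q, fun n hn x => ?_⟩, C, N, hC, fun n hn x => ?_⟩
  · rw [map_mul, ← hQ n hn x, hQ']; ring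
  · have hn0 : (0 : ℝ) < n := by exact_mod_cast hn
    rw [norm_mul, Complex.norm_natCast]
    have h1 : (n.choose j : ℝ) ≤ (n : ℝ) ^ j := by exact_mod_cast Nat.choose_le_pow n j
    have h2 : (1 / Real.sqrt n) ^ (m + 2 * j) * (n : ℝ) ^ j = (1 / Real.sqrt n) ^ m := by
      rw [pow_add, pow_mul, div_pow _ _ 2, Real.sq_sqrt hn0.le, mul_assoc, ← mul_pow]
      field_simp; simp
    calc (n.choose j : ℝ) * ‖F n x‖ ≤
        (n : ℝ) ^ j * (C * (1 / Real.sqrt n) ^ (m + 2 * j) * (1 + ‖x‖ / Real.sqrt n) ^ N) :=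
          mul_le_mul h1 (hb n hn x) (norm_nonneg _) (by positivity)
      _ = C * ((1 / Real.sqrt n) ^ (m + 2 * j) * (n : ℝ) ^ j) * (1 + ‖x‖ / Real.sqrt n) ^ N := by
        ring
      _ = _ := by rw [h2]

end LocExp

namespace LocExp
open MeasureTheory
variable {d : ℕ}

/-- monomial function -/
def mono (α : Fin d → ℕ) : (Fin d → ℝ) → ℂ := fun s => ∏ i, (s i : ℂ) ^ (α i)

/-- polynomial functions all of whose monomials have degree at least `m` -/
def PO (d m : ℕ) : Submodule ℂ ((Fin d → ℝ) → ℂ) :=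
  Submodule.span ℂ {f | ∃ α : Fin d → ℕ, m ≤ ∑ i, α i ∧ f = mono α}

/-- oscillating Gaussian -/
def GG (a : ℝ) (x s : Fin d → ℝ) : ℂ := ∏ i, g1 a (x i) (s i)

lemma norm_GG (a : ℝ) (x s : Fin d → ℝ) :
    ‖GG a x s‖ = Real.exp (-(a / 2) * ∑ i, s i ^ 2) := by
  simp only [GG, norm_prod, norm_g1, ← Real.exp_sum, Finset.mul_sum]

lemma continuous_GG (a : ℝ) (x : Fin d → ℝ) : Continuous (GG a x) := by
  unfold GG
  exact continuous_finsetProd _ fun i _ => (continuous_g1 a (x i)).comp (continuous_apply i)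

lemma GG_eq (a : ℝ) (x s : Fin d → ℝ) : GG a x s =
    Complex.exp (-((a / 2 * ∑ i, s i ^ 2 : ℝ) : ℂ) - Complex.I * ((∑ i, s i * x i : ℝ) : ℂ)) := by
  unfold GG g1
  rw [← Complex.exp_sum]
  congr 1
  push_cast
  rw [Finset.mul_sum, Finset.mul_sum, ← Finset.sum_neg_distrib, ← Finset.sum_sub_distrib]
  exact Finset.sum_congr rfl fun i _ => by ring

lemma mono_mul (α β : Fin d → ℕ) : mono α * mono β = mono (α + β) := by
  funext s
  simp only [mono, Pi.mul_apply, Pi.add_apply, pow_add, Finset.prod_mul_distrib]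

lemma PO.mul {m m' : ℕ} {f g : (Fin d → ℝ) → ℂ} (hf : f ∈ PO d m) (hg : g ∈ PO d m') :
    f * g ∈ PO d (m + m') := by
  have h := Submodule.mul_mem_mul hf hg
  unfold PO at h
  rw [Submodule.span_mul_span] at h
  refine Submodule.span_mono ?_ h
  rintro _ ⟨_, ⟨α, hα, rfl⟩, _, ⟨β, hβ, rfl⟩, rfl⟩
  refine ⟨α + β, ?_, mono_mul α β⟩
  simp only [Pi.add_apply, Finset.sum_add_distrib]; omega

lemma PO.anti {m m' : ℕ} (h : m ≤ m') : PO d m' ≤ PO d m := by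
  refine Submodule.span_mono ?_
  rintro _ ⟨α, hα, rfl⟩
  exact ⟨α, h.trans hα, rfl⟩

lemma PO.weaken {m m' : ℕ} (h : m ≤ m') {f : (Fin d → ℝ) → ℂ} (hf : f ∈ PO d m') :
    f ∈ PO d m := PO.anti h hf

lemma PO.one : (1 : (Fin d → ℝ) → ℂ) ∈ PO d 0 :=
  Submodule.subset_span ⟨0, by simp, by funext s; simp [mono]⟩

lemma PO.pow {m : ℕ} {f : (Fin d → ℝ) → ℂ} (hf : f ∈ PO d m) (k : ℕ) : f ^ k ∈ PO d (m * k) := by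
  induction k with
  | zero => simpa using PO.one
  | succ k ih => rw [pow_succ, Nat.mul_succ]; exact PO.mul ih hf

lemma PO.coord (i : Fin d) : (fun s : Fin d → ℝ => (s i : ℂ)) ∈ PO d 1 := by
  refine Submodule.subset_span ⟨Pi.single i 1, by simp, ?_⟩
  funext s
  simp only [mono]
  rw [Finset.prod_eq_single i]
  · simp
  · intro j _ hj; simp [hj]
  · simp

lemma PO.lin (c : Fin d → ℝ) : (fun s : Fin d → ℝ => ((∑ i, s i * c i : ℝ) : ℂ)) ∈ PO d 1 := by
  have h : (∑ i, (c i : ℂ) • (fun s : Fin d → ℝ => (s i : ℂ))) ∈ PO d 1 :=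
    Submodule.sum_mem _ fun i _ => Submodule.smul_mem _ _ (PO.coord i)
  convert h using 1
  funext s
  simp [Finset.sum_apply, mul_comm]

lemma PO.sq : (fun s : Fin d → ℝ => ((∑ i, s i ^ 2 : ℝ) : ℂ)) ∈ PO d 2 := by
  have h : (∑ i, (fun s : Fin d → ℝ => (s i : ℂ)) ^ 2) ∈ PO d (1 * 2) :=
    Submodule.sum_mem _ fun i _ => PO.pow (PO.coord i) 2
  convert h using 1
  funext s
  simp [Finset.sum_apply]

lemma PO.bound {m : ℕ} {f : (Fin d → ℝ) → ℂ} (hf : f ∈ PO d m) :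
    ∃ C : ℝ, 0 ≤ C ∧ ∀ s : Fin d → ℝ, ‖s‖ ≤ 1 → ‖f s‖ ≤ C * ‖s‖ ^ m := by
  induction hf using Submodule.span_induction with
  | mem f hf =>
    obtain ⟨α, hα, rfl⟩ := hf
    refine ⟨1, zero_le_one, fun s hs => ?_⟩
    have h1 : ‖mono α s‖ ≤ ∏ i, ‖s‖ ^ α i := by
      simp only [mono, norm_prod, norm_pow, Complex.norm_real]
      exact Finset.prod_le_prod (fun i _ => by positivity) fun i _ =>
        pow_le_pow_left₀ (norm_nonneg _) (norm_le_pi_norm s i) _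
    rw [Finset.prod_pow_eq_pow_sum] at h1
    rw [one_mul]
    exact h1.trans (pow_le_pow_of_le_one (norm_nonneg _) hs hα)
  | zero => exact ⟨0, le_rfl, fun s _ => by simp⟩
  | add f g _ _ hf hg =>
    obtain ⟨C, hC, h⟩ := hf
    obtain ⟨C', hC', h'⟩ := hg
    refine ⟨C + C', by positivity, fun s hs => ?_⟩
    rw [add_mul]
    exact (norm_add_le _ _).trans (add_le_add (h s hs) (h' s hs))
  | smul c f _ hf =>
    obtain ⟨C, hC, h⟩ := hf
    refine ⟨‖c‖ * C, by positivity, fun s hs => ?_⟩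
    rw [Pi.smul_apply, norm_smul, mul_assoc]
    exact mul_le_mul_of_nonneg_left (h s hs) (norm_nonneg _)

lemma PO.continuous {m : ℕ} {f : (Fin d → ℝ) → ℂ} (hf : f ∈ PO d m) : Continuous f := by
  induction hf using Submodule.span_induction with
  | mem f hf =>
    obtain ⟨α, hα, rfl⟩ := hf
    unfold mono
    fun_prop
  | zero => exact continuous_zero
  | add f g _ _ hf hg => exact hf.add hg
  | smul c f _ hf => exact hf.const_smul c

lemma PO.integrable {m : ℕ} {f : (Fin d → ℝ) → ℂ} (hf : f ∈ PO d m) (a : ℝ) (ha : 0 < a)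
    (x : Fin d → ℝ) : Integrable (fun s => f s * GG a x s) := by
  induction hf using Submodule.span_induction with
  | mem f hf =>
    obtain ⟨α, hα, rfl⟩ := hf
    have h := Integrable.fintype_prod (μ := fun _ : Fin d => (volume : Measure ℝ))
      (fun i => g1_int a (x i) ha (α i))
    have e : (fun s => mono α s * GG a x s) =
        fun s : Fin d → ℝ => ∏ i, ((s i : ℂ) ^ (α i) * g1 a (x i) (s i)) := by
      funext s
      simp only [mono, GG, Finset.prod_mul_distrib]
    rw [e]
    exact h
  | zero => simp
  | add f g _ _ hf hg =>
    simp only [Pi.add_apply, add_mul]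
    exact hf.add hg
  | smul c f _ hf =>
    simp only [Pi.smul_apply, smul_eq_mul, mul_assoc]
    exact hf.const_mul c

/-- Gaussian prefactor -/
def pref (n : ℕ) (x : Fin d → ℝ) : ℝ :=
  Real.sqrt (2 * Real.pi / n) ^ d * Real.exp (-(∑ i, x i ^ 2) / (2 * n))

lemma PO.gauss {m : ℕ} {f : (Fin d → ℝ) → ℂ} (hf : f ∈ PO d m) :
    ∃ F, Good d m F ∧ ∀ n : ℕ, 1 ≤ n → ∀ x : Fin d → ℝ,
      ∫ s, f s * GG n x s = (pref n x : ℂ) * F n x := by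
  induction hf using Submodule.span_induction with
  | mem f hf =>
    obtain ⟨α, hα, rfl⟩ := hf
    refine ⟨fun n x => ∏ i, gp (α i) n (x i),
      (Good.prod Finset.univ fun i _ => good_gp i (α i)).mono hα, fun n hn x => ?_⟩
    have hn0 : (0 : ℝ) < n := by exact_mod_cast hn
    have e : ∀ s : Fin d → ℝ, mono α s * GG n x s =
        ∏ i, ((s i : ℂ) ^ (α i) * g1 n (x i) (s i)) := fun s => by
      simp only [mono, GG, Finset.prod_mul_distrib]
    simp_rw [e]
    rw [integral_fintype_prod_volume_eq_prod (fun (i : Fin d) (t : ℝ) => (t : ℂ) ^ (α i) * g1 n (x i) t)]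
    simp_rw [fun i => g1_moment n (x i) hn0 (α i)]
    rw [Finset.prod_mul_distrib, ← Complex.ofReal_prod, Finset.prod_mul_distrib]
    congr 2
    rw [pref, ← Real.exp_sum, Finset.prod_const, Finset.card_univ, Fintype.card_fin]
    congr 2
    rw [neg_div, Finset.sum_div, ← Finset.sum_neg_distrib]
    exact Finset.sum_congr rfl fun i _ => by ring
  | zero => exact ⟨fun _ _ => 0, (Good.sum (∅ : Finset ℕ) (F := fun _ _ _ => 0) (by simp)),
      fun n _ x => by simp⟩
  | add f g hfm hgm hf hg =>
    obtain ⟨F, hF, h⟩ := hf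
    obtain ⟨G, hG, h'⟩ := hg
    refine ⟨_, hF.add hG, fun n hn x => ?_⟩
    have hn0 : (0 : ℝ) < n := by exact_mod_cast hn
    simp only [Pi.add_apply, add_mul]
    rw [integral_add (PO.integrable hfm n hn0 x) (PO.integrable hgm n hn0 x), h n hn x, h' n hn x]
    ring
  | smul c f hfm hf =>
    obtain ⟨F, hF, h⟩ := hf
    refine ⟨fun n x => c * F n x, by simpa using (Good.const c).mul hF, fun n hn x => ?_⟩
    simp only [Pi.smul_apply, smul_eq_mul, mul_assoc]
    rw [integral_const_mul, h n hn x]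
    ring

end LocExp

namespace LocExp
open MeasureTheory
variable {d : ℕ}

/-- dot product -/
def dt (s x : Fin d → ℝ) : ℝ := ∑ i, s i * x i

/-- characteristic function -/
def phi {ι : Type*} (S : Finset ι) (p : ι → ℝ) (X : ι → Fin d → ℝ) (s : Fin d → ℝ) : ℂ :=
  ∑ v ∈ S, (p v : ℂ) * Complex.exp (Complex.I * (dt s (X v) : ℂ))

/-- half of the squared norm -/
def qq (s : Fin d → ℝ) : ℝ := (∑ i, s i ^ 2) / 2

lemma sum_dt {ι : Type*} (S : Finset ι) (p : ι → ℝ) (X : ι → Fin d → ℝ)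
    (hm : ∀ i, ∑ v ∈ S, p v * X v i = 0) (s : Fin d → ℝ) : ∑ v ∈ S, p v * dt s (X v) = 0 := by
  simp only [dt, Finset.mul_sum]
  rw [Finset.sum_comm]
  refine Finset.sum_eq_zero fun i _ => ?_
  have : ∑ v ∈ S, p v * (s i * X v i) = s i * ∑ v ∈ S, p v * X v i := by
    rw [Finset.mul_sum]; exact Finset.sum_congr rfl fun v _ => by ring
  rw [this, hm, mul_zero]

lemma sum_dt_sq {ι : Type*} (S : Finset ι) (p : ι → ℝ) (X : ι → Fin d → ℝ)
    (hc : ∀ i j, ∑ v ∈ S, p v * X v i * X v j = if i = j then 1 else 0) (s : Fin d → ℝ) :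
    ∑ v ∈ S, p v * dt s (X v) ^ 2 = 2 * qq s := by
  have h : ∀ v, p v * dt s (X v) ^ 2 = ∑ i, ∑ j, s i * s j * (p v * X v i * X v j) := by
    intro v
    rw [sq, dt, Finset.sum_mul_sum, Finset.mul_sum]
    refine Finset.sum_congr rfl fun i _ => ?_
    rw [Finset.mul_sum]
    exact Finset.sum_congr rfl fun j _ => by ring
  simp_rw [h]
  rw [Finset.sum_comm]
  have h2 : ∀ i, ∑ v ∈ S, ∑ j, s i * s j * (p v * X v i * X v j) = s i ^ 2 := by
    intro i
    rw [Finset.sum_comm]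
    simp_rw [← Finset.mul_sum, hc]
    simp [sq]
  simp_rw [h2]
  rw [qq]; ring

set_option maxHeartbeats 1000000 in
lemma taylor {ι : Type*} (S : Finset ι) (p : ι → ℝ) (X : ι → Fin d → ℝ)
    (ht : ∑ v ∈ S, p v = 1)
    (hm : ∀ i, ∑ v ∈ S, p v * X v i = 0)
    (hc : ∀ i j, ∑ v ∈ S, p v * X v i * X v j = if i = j then 1 else 0) (D : ℕ) :
    ∃ T ∈ PO d 3, ∃ C : ℝ, 0 ≤ C ∧ ∀ s : Fin d → ℝ, ‖s‖ ≤ 1 →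
      ‖phi S p X s * Complex.exp (qq s : ℂ) - 1 - T s‖ ≤ C * ‖s‖ ^ (D + 3) := by
  set u : ι → (Fin d → ℝ) → ℂ := fun v s => (dt s (X v) : ℂ) with hu
  set q : (Fin d → ℝ) → ℂ := fun s => (qq s : ℂ) with hq
  have hu1 : ∀ v, u v ∈ PO d 1 := fun v => PO.lin (X v)
  have hq2 : q ∈ PO d 2 := by
    have := Submodule.smul_mem _ ((1 : ℂ) / 2) (PO.sq (d := d))
    convert this using 1
    funext s
    simp only [hq, qq, Pi.smul_apply, smul_eq_mul]
    push_cast; ring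
  set y : ι → (Fin d → ℝ) → ℂ := fun v => Complex.I • u v + q with hy
  have hy1 : ∀ v, y v ∈ PO d 1 := fun v =>
    Submodule.add_mem _ (Submodule.smul_mem _ _ (hu1 v)) (PO.weaken (m := 1) (m' := 2) (by norm_num) hq2)
  choose Cy hCy0 hCy using fun v => PO.bound (hy1 v)
  refine ⟨∑ v ∈ S, (p v : ℂ) • (Complex.I • (u v * q) + ((1 : ℂ) / 2) • (q * q) +
    ∑ k ∈ Finset.range D, ((1 : ℂ) / ((k + 3).factorial : ℂ)) • (y v) ^ (k + 3)), ?_,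
    ∑ v ∈ S, |p v| * (Cy v ^ (D + 3) * Real.exp (Cy v)), ?_, ?_⟩
  · have a1 : ∀ v, u v * q ∈ PO d 3 := fun v => PO.mul (m := 1) (m' := 2) (hu1 v) hq2
    have a2 : q * q ∈ PO d 3 :=
      PO.weaken (m := 3) (m' := 2 + 2) (by norm_num) (PO.mul hq2 hq2)
    have a3 : ∀ v (k : ℕ), y v ^ (k + 3) ∈ PO d 3 := fun v k =>
      PO.weaken (m := 3) (m' := 1 * (k + 3)) (by omega) (PO.pow (hy1 v) (k + 3))
    clear_value u q y
    refine Submodule.sum_mem _ fun v _ => Submodule.smul_mem _ _ (Submodule.add_mem _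
      (Submodule.add_mem _ (Submodule.smul_mem _ _ (a1 v)) (Submodule.smul_mem _ _ a2))
      (Submodule.sum_mem _ fun k _ => Submodule.smul_mem _ _ (a3 v k)))
  · exact Finset.sum_nonneg fun v _ => by have := hCy0 v; positivity
  · intro s hs
    have e1 : phi S p X s * Complex.exp (qq s : ℂ) = ∑ v ∈ S, (p v : ℂ) * Complex.exp (y v s) := by
      rw [phi, Finset.sum_mul]
      refine Finset.sum_congr rfl fun v _ => ?_
      rw [mul_assoc, ← Complex.exp_add]
      simp [hy, hu, hq]
    have m0 : ∑ v ∈ S, (p v : ℂ) = 1 := by exact_mod_cast ht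
    have m1 : ∑ v ∈ S, (p v : ℂ) * u v s = 0 := by
      have := sum_dt S p X hm s
      simp only [hu]; exact_mod_cast this
    have m2 : ∑ v ∈ S, (p v : ℂ) * u v s ^ 2 = 2 * q s := by
      have := sum_dt_sq S p X hc s
      simp only [hu, hq]; exact_mod_cast this
    have e2 : 1 + (∑ v ∈ S, (p v : ℂ) • (Complex.I • (u v * q) + ((1 : ℂ) / 2) • (q * q) +
        ∑ k ∈ Finset.range D, ((1 : ℂ) / ((k + 3).factorial : ℂ)) • (y v) ^ (k + 3))) s =
        ∑ v ∈ S, (p v : ℂ) * ∑ k ∈ Finset.range (D + 3), (y v s) ^ k / (k.factorial : ℂ) := by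
      have e3 : ∀ v, (p v : ℂ) * ∑ k ∈ Finset.range (D + 3), (y v s) ^ k / (k.factorial : ℂ) =
          ((p v : ℂ) • (Complex.I • (u v * q) + ((1 : ℂ) / 2) • (q * q) +
        ∑ k ∈ Finset.range D, ((1 : ℂ) / ((k + 3).factorial : ℂ)) • (y v) ^ (k + 3))) s +
          (p v * (1 + q s) + p v * u v s * Complex.I - p v * u v s ^ 2 * (1 / 2)) := by
        intro v
        rw [Finset.sum_range_succ', Finset.sum_range_succ', Finset.sum_range_succ']
        simp only [Pi.smul_apply, Pi.add_apply, Pi.mul_apply, Finset.sum_apply, smul_eq_mul,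
          Pi.pow_apply]
        have e4 : ∀ k, (y v s) ^ (k + 1 + 1 + 1) / ((k + 1 + 1 + 1).factorial : ℂ) =
          (1 : ℂ) / ((k + 3).factorial : ℂ) * (y v s) ^ (k + 3) := fun k => by ring
        simp_rw [e4]
        have e5 : y v s = Complex.I * u v s + q s := by simp [hy]
        generalize ∑ k ∈ Finset.range D, (1 : ℂ) / ((k + 3).factorial : ℂ) * (y v s) ^ (k + 3) = Z
        rw [e5]
        simp only [Nat.factorial]
        push_cast
        linear_combination (p v * u v s ^ 2 / 2 : ℂ) * Complex.I_sq
      simp_rw [e3]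
      rw [Finset.sum_add_distrib, Finset.sum_sub_distrib, Finset.sum_add_distrib,
        ← Finset.sum_mul, ← Finset.sum_mul, ← Finset.sum_mul, m0, m1, m2, Finset.sum_apply]
      ring
    rw [sub_sub, e2, e1, ← Finset.sum_sub_distrib, Finset.sum_mul]
    refine (norm_sum_le _ _).trans (Finset.sum_le_sum fun v _ => ?_)
    rw [← mul_sub, norm_mul, Complex.norm_real, Real.norm_eq_abs, mul_assoc]
    refine mul_le_mul_of_nonneg_left ?_ (abs_nonneg _)
    refine (Complex.norm_exp_sub_sum_le_norm_mul_exp _ _).trans ?_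
    have hb : ‖y v s‖ ≤ Cy v * ‖s‖ := by simpa using hCy v s hs
    have hb' : ‖y v s‖ ≤ Cy v := hb.trans (by
      have := mul_le_mul_of_nonneg_left hs (hCy0 v); simpa using this)
    calc ‖y v s‖ ^ (D + 3) * Real.exp ‖y v s‖ ≤ (Cy v * ‖s‖) ^ (D + 3) * Real.exp (Cy v) := by
          have := hCy0 v
          gcongr
      _ = _ := by ring

lemma binom_rem (T : ℂ) (J : ℕ) : ∀ n : ℕ,
    ‖(1 + T) ^ n - ∑ j ∈ Finset.range J, (n.choose j : ℂ) * T ^ j‖ ≤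
      (n * ‖T‖) ^ J * (1 + ‖T‖) ^ n := by
  induction J with
  | zero =>
    intro n
    simp only [Finset.range_zero, Finset.sum_empty, sub_zero, pow_zero, one_mul, norm_pow]
    gcongr
    exact (norm_add_le _ _).trans (by simp)
  | succ J ih =>
    intro n
    induction n with
    | zero => simp [Finset.sum_range_succ']
    | succ n ihn =>
      have e : (1 + T) ^ (n + 1) - ∑ j ∈ Finset.range (J + 1), ((n + 1).choose j : ℂ) * T ^ j =
          ((1 + T) ^ n - ∑ j ∈ Finset.range (J + 1), (n.choose j : ℂ) * T ^ j) +
          T * ((1 + T) ^ n - ∑ j ∈ Finset.range J, (n.choose j : ℂ) * T ^ j) := by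
        rw [Finset.sum_range_succ', Finset.sum_range_succ' (fun j => (n.choose j : ℂ) * T ^ j)]
        simp only [Nat.choose_succ_succ', Nat.cast_add, add_mul, Finset.sum_add_distrib, pow_succ T]
        simp only [← mul_assoc]
        rw [← Finset.sum_mul]
        simp only [Nat.choose_zero_right]
        ring
      rw [e]
      refine (norm_add_le _ _).trans ?_
      rw [norm_mul]
      have h1 := mul_le_mul_of_nonneg_left (ih n) (norm_nonneg T)
      refine (add_le_add ihn h1).trans ?_
      set t := ‖T‖
      have ht : 0 ≤ t := norm_nonneg T
      calc (n * t) ^ (J + 1) * (1 + t) ^ n + t * ((n * t) ^ J * (1 + t) ^ n)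
          = ((n : ℝ) ^ J * (n + 1)) * t ^ (J + 1) * (1 + t) ^ n := by ring
        _ ≤ (((n : ℝ) + 1) ^ J * (n + 1)) * t ^ (J + 1) * (1 + t) ^ (n + 1) := by
          have : (1 + t) ^ n ≤ (1 + t) ^ (n + 1) := pow_le_pow_right₀ (by linarith) (by omega)
          gcongr
          linarith
        _ = _ := by push_cast; rw [mul_pow]; ring

lemma pow_diff (a b : ℂ) (M : ℝ) (hM : 1 ≤ M) (ha : ‖a‖ ≤ M) (hb : ‖b‖ ≤ M) (n : ℕ) :
    ‖a ^ n - b ^ n‖ ≤ n * ‖a - b‖ * M ^ n := by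
  induction n with
  | zero => simp
  | succ n ih =>
    have e : a ^ (n + 1) - b ^ (n + 1) = a * (a ^ n - b ^ n) + (a - b) * b ^ n := by ring
    rw [e]
    refine (norm_add_le _ _).trans ?_
    rw [norm_mul, norm_mul, norm_pow]
    have h1 : ‖b‖ ^ n ≤ M ^ (n + 1) :=
      (pow_le_pow_left₀ (norm_nonneg _) hb n).trans (pow_le_pow_right₀ hM (by omega))
    calc ‖a‖ * ‖a ^ n - b ^ n‖ + ‖a - b‖ * ‖b‖ ^ n ≤
        M * (n * ‖a - b‖ * M ^ n) + ‖a - b‖ * M ^ (n + 1) := by gcongr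
      _ = _ := by push_cast; ring

lemma pow_exp_le (m : ℕ) (y : ℝ) (hy : 0 ≤ y) :
    y ^ m * Real.exp (-(y / 4)) ≤ 4 ^ m * m.factorial := by
  have h := Real.pow_div_factorial_le_exp (y / 4) (by positivity) m
  have hf : (0 : ℝ) < m.factorial := by exact_mod_cast Nat.factorial_pos m
  rw [div_le_iff₀ hf] at h
  rw [Real.exp_neg, ← div_eq_mul_inv, div_le_iff₀ (Real.exp_pos _)]
  calc y ^ m = 4 ^ m * (y / 4) ^ m := by rw [← mul_pow]; congr 1; ring
    _ ≤ 4 ^ m * (Real.exp (y / 4) * m.factorial) := by gcongr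
    _ = _ := by ring

lemma norm_sq_le (s : Fin d → ℝ) : ‖s‖ ^ 2 ≤ 2 * qq s := by
  have hq : 0 ≤ 2 * qq s := by
    rw [qq]; have := Finset.sum_nonneg (fun i (_ : i ∈ Finset.univ) => sq_nonneg (s i)); linarith
  have : ‖s‖ ≤ Real.sqrt (2 * qq s) := by
    rw [pi_norm_le_iff_of_nonneg (Real.sqrt_nonneg _)]
    intro i
    rw [Real.norm_eq_abs]
    refine Real.abs_le_sqrt ?_
    have := Finset.single_le_sum (fun i (_ : i ∈ Finset.univ) => sq_nonneg (s i))
      (Finset.mem_univ i)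
    rw [qq]; linarith
  calc ‖s‖ ^ 2 ≤ Real.sqrt (2 * qq s) ^ 2 := by gcongr
    _ = _ := Real.sq_sqrt hq

lemma local_est {ι : Type*} (S : Finset ι) (p : ι → ℝ) (X : ι → Fin d → ℝ)
    (ht : ∑ v ∈ S, p v = 1)
    (hm : ∀ i, ∑ v ∈ S, p v * X v i = 0)
    (hc : ∀ i j, ∑ v ∈ S, p v * X v i * X v j = if i = j then 1 else 0) (K : ℕ) :
    ∃ T ∈ PO d 3, ∃ δ : ℝ, 0 < δ ∧ ∃ C : ℝ, 0 ≤ C ∧ ∀ s : Fin d → ℝ, ‖s‖ ≤ δ → ∀ n : ℕ, 1 ≤ n →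
      ‖phi S p X s ^ n - (∑ j ∈ Finset.range (2 * (K + 1)), (n.choose j : ℂ) * T s ^ j) *
        Complex.exp (-(n * qq s : ℝ))‖ ≤ C / (n : ℝ) ^ K := by
  obtain ⟨T, hT, C₁, hC₁, h1⟩ := taylor S p X ht hm hc (2 * K + 1)
  obtain ⟨C₂, hC₂, h2⟩ := PO.bound hT
  refine ⟨T, hT, min 1 (1 / (4 * (C₁ + C₂ + 1))), by positivity,
    C₁ * (4 ^ (K + 2) * (K + 2).factorial) +
      C₂ ^ (2 * (K + 1)) * (4 ^ (3 * (K + 1)) * (3 * (K + 1)).factorial),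
    by positivity, ?_⟩
  intro s hs n hn
  have hn0 : (1 : ℝ) ≤ n := by exact_mod_cast hn
  have hs1 : ‖s‖ ≤ 1 := hs.trans (min_le_left _ _)
  have hsd : (C₁ + C₂) * ‖s‖ ≤ 1 / 4 := by
    have h3 := hs.trans (min_le_right _ _)
    rw [le_div_iff₀ (by positivity)] at h3
    nlinarith [norm_nonneg s]
  set r := ‖s‖ with hr
  have hr0 : 0 ≤ r := norm_nonneg s
  have hq := norm_sq_le s
  set q := qq s with hqd
  have hq0 : 0 ≤ q := by nlinarith [sq_nonneg r]
  set h : ℂ := phi S p X s * Complex.exp (q : ℂ) - 1 with hh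
  have hT3 : ‖T s‖ ≤ C₂ * r ^ 3 := h2 s hs1
  have hTq : ‖T s‖ ≤ q / 2 := by
    have : C₂ * r ^ 3 ≤ (C₁ + C₂) * r * r ^ 2 := by nlinarith [pow_nonneg hr0 3]
    nlinarith [sq_nonneg r]
  have hhT : ‖h - T s‖ ≤ C₁ * r ^ (2 * K + 1 + 3) := h1 s hs1
  have hhq : ‖h‖ ≤ q / 2 := by
    have e1 : ‖h‖ ≤ ‖h - T s‖ + ‖T s‖ := by
      simpa using norm_add_le (h - T s) (T s)
    have e2 : r ^ (2 * K + 1 + 3) ≤ r ^ 3 := pow_le_pow_of_le_one hr0 hs1 (by omega)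
    have e3 : C₁ * r ^ (2 * K + 1 + 3) ≤ C₁ * r ^ 3 := by gcongr
    have : C₁ * r ^ 3 + C₂ * r ^ 3 = (C₁ + C₂) * r * r ^ 2 := by ring
    nlinarith [sq_nonneg r]
  set M := 1 + q / 2 with hM
  have hM1 : 1 ≤ M := by linarith
  have b1 : ‖1 + h‖ ≤ M := (norm_add_le _ _).trans (by simp; linarith)
  have b2 : ‖1 + T s‖ ≤ M := (norm_add_le _ _).trans (by simp; linarith)
  have p1 := pow_diff (1 + h) (1 + T s) M hM1 b1 b2 n
  have p2 := binom_rem (T s) (2 * (K + 1)) n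
  have hMe : M ^ n ≤ Real.exp (n * q / 2) := by
    have : M ≤ Real.exp (q / 2) := by have := Real.add_one_le_exp (q / 2); linarith
    calc M ^ n ≤ Real.exp (q / 2) ^ n := by gcongr
      _ = _ := by rw [← Real.exp_nat_mul]; congr 1; ring
  have hphi : phi S p X s ^ n = (1 + h) ^ n * Complex.exp (-(n * q : ℝ)) := by
    have : phi S p X s = (1 + h) * Complex.exp (-(q : ℂ)) := by
      rw [hh, add_sub_cancel, mul_assoc, ← Complex.exp_add]; simp
    rw [this, mul_pow, ← Complex.exp_nat_mul]
    congr 2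
    push_cast; ring
  rw [hphi, ← sub_mul, norm_mul]
  have hE : ‖Complex.exp (-(n * q : ℝ))‖ = Real.exp (-(n * q)) := by
    rw [← Complex.ofReal_neg, ← Complex.ofReal_exp, Complex.norm_real,
      Real.norm_of_nonneg (Real.exp_pos _).le]
  rw [hE]
  have hsum : ‖(1 + h) ^ n - ∑ j ∈ Finset.range (2 * (K + 1)), (n.choose j : ℂ) * T s ^ j‖ ≤
      (n * (C₁ * r ^ (2 * K + 1 + 3)) + (n * (C₂ * r ^ 3)) ^ (2 * (K + 1))) *
        Real.exp (n * q / 2) := by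
    have e1 : (1 + h) ^ n - ∑ j ∈ Finset.range (2 * (K + 1)), (n.choose j : ℂ) * T s ^ j =
      ((1 + h) ^ n - (1 + T s) ^ n) + ((1 + T s) ^ n -
        ∑ j ∈ Finset.range (2 * (K + 1)), (n.choose j : ℂ) * T s ^ j) := by ring
    rw [e1, add_mul]
    refine (norm_add_le _ _).trans (add_le_add (p1.trans ?_) (p2.trans ?_))
    · have : ‖1 + h - (1 + T s)‖ ≤ C₁ * r ^ (2 * K + 1 + 3) := by
        rw [add_sub_add_left_eq_sub]; exact hhT
      gcongr
    · have : (1 + ‖T s‖) ^ n ≤ Real.exp (n * q / 2) := by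
        refine le_trans ?_ hMe
        have : 1 + ‖T s‖ ≤ M := by linarith
        gcongr
      gcongr
  have hexp : Real.exp (n * q / 2) * Real.exp (-(n * q)) ≤ Real.exp (-((n * r ^ 2) / 4)) := by
    rw [← Real.exp_add]
    apply Real.exp_le_exp.mpr
    nlinarith
  have hy : 0 ≤ (n : ℝ) * r ^ 2 := by positivity
  have f1 := pow_exp_le (K + 2) (n * r ^ 2) hy
  have f2 := pow_exp_le (3 * (K + 1)) (n * r ^ 2) hy
  have hnK : (0 : ℝ) < (n : ℝ) ^ K := by positivity
  set E := Real.exp (-((n * r ^ 2) / 4)) with hEd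
  have hE0 : 0 ≤ E := (Real.exp_pos _).le
  rw [le_div_iff₀ hnK]
  calc _ ≤ (n * (C₁ * r ^ (2 * K + 1 + 3)) + (n * (C₂ * r ^ 3)) ^ (2 * (K + 1))) *
        Real.exp (n * q / 2) * Real.exp (-(n * q)) * (n : ℝ) ^ K := by gcongr
    _ = (n * (C₁ * r ^ (2 * K + 1 + 3)) + (n * (C₂ * r ^ 3)) ^ (2 * (K + 1))) *
        (Real.exp (n * q / 2) * Real.exp (-(n * q))) * (n : ℝ) ^ K := by ring
    _ ≤ (n * (C₁ * r ^ (2 * K + 1 + 3)) + (n * (C₂ * r ^ 3)) ^ (2 * (K + 1))) *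
        E * (n : ℝ) ^ K := by gcongr
    _ = C₁ * ((n : ℝ) ^ (K + 1) * r ^ (2 * (K + 2)) * E) +
        C₂ ^ (2 * (K + 1)) * ((n : ℝ) ^ (3 * K + 2) * r ^ (6 * (K + 1)) * E) := by ring
    _ ≤ C₁ * ((n : ℝ) ^ (K + 2) * r ^ (2 * (K + 2)) * E) +
        C₂ ^ (2 * (K + 1)) * ((n : ℝ) ^ (3 * (K + 1)) * r ^ (6 * (K + 1)) * E) := by
        have g1 : (n : ℝ) ^ (K + 1) ≤ (n : ℝ) ^ (K + 2) := pow_le_pow_right₀ hn0 (by omega)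
        have g2 : (n : ℝ) ^ (3 * K + 2) ≤ (n : ℝ) ^ (3 * (K + 1)) :=
          pow_le_pow_right₀ hn0 (by omega)
        gcongr
    _ = C₁ * ((n * r ^ 2) ^ (K + 2) * E) +
        C₂ ^ (2 * (K + 1)) * ((n * r ^ 2) ^ (3 * (K + 1)) * E) := by ring
    _ ≤ _ := by gcongr

end LocExp

namespace LocExp
open MeasureTheory
variable {d : ℕ}

lemma pow_geom_bdd (ρ : ℝ) (h0 : 0 ≤ ρ) (h1 : ρ < 1) (k : ℕ) :
    ∃ C : ℝ, 0 ≤ C ∧ ∀ n : ℕ, (n : ℝ) ^ k * ρ ^ n ≤ C := by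
  have h := tendsto_pow_const_mul_const_pow_of_abs_lt_one k (r := ρ) (by rwa [abs_of_nonneg h0])
  obtain ⟨C, hC⟩ := h.bddAbove_range
  refine ⟨max C 0, le_max_right _ _, fun n => le_trans (hC ⟨n, rfl⟩) (le_max_left _ _)⟩

lemma continuous_dt (x : Fin d → ℝ) : Continuous (fun s => dt s x) := by
  unfold dt; fun_prop

lemma continuous_phi {ι : Type*} (S : Finset ι) (p : ι → ℝ) (X : ι → Fin d → ℝ) :
    Continuous (phi S p X) := by
  unfold phi
  have := fun v => continuous_dt (X v)
  fun_prop

lemma int_GG (n : ℕ) (hn : 1 ≤ n) (x : Fin d → ℝ) : ∫ s, GG n x s = (pref n x : ℂ) := by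
  have hn0 : (0 : ℝ) < n := by exact_mod_cast hn
  unfold GG
  rw [integral_fintype_prod_volume_eq_prod (fun (i : Fin d) (t : ℝ) => g1 n (x i) t)]
  simp_rw [fun i => g1_zero n (x i) hn0]
  rw [← Complex.ofReal_prod, Finset.prod_mul_distrib]
  congr 1
  rw [pref, ← Real.exp_sum, Finset.prod_const, Finset.card_univ, Fintype.card_fin]
  congr 2
  rw [neg_div, Finset.sum_div, ← Finset.sum_neg_distrib]
  exact Finset.sum_congr rfl fun i _ => by ring

lemma GG_eq' (n : ℕ) (x s : Fin d → ℝ) :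
    GG n x s = Complex.exp (-(n * qq s : ℝ)) * Complex.exp (-(Complex.I * (dt s x : ℂ))) := by
  rw [GG_eq, ← Complex.exp_add]
  congr 1
  simp only [qq, dt]
  push_cast; ring

/-- tail of Gaussian polynomial integrals -/
lemma tail_est {m : ℕ} {f : (Fin d → ℝ) → ℂ} (hf : f ∈ PO d m) (δ : ℝ) (hδ : 0 < δ) (k : ℕ) :
    ∃ C : ℝ, 0 ≤ C ∧ ∀ n : ℕ, 1 ≤ n → ∀ x : Fin d → ℝ,
      ‖∫ s in (Metric.ball (0 : Fin d → ℝ) δ)ᶜ, f s * GG n x s‖ ≤ C / (n : ℝ) ^ k := by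
  set ρ := Real.exp (-(δ ^ 2 / 2)) with hρ
  have hρ0 : 0 < ρ := Real.exp_pos _
  have hρ1 : ρ < 1 := Real.exp_lt_one_iff.mpr (by have := sq_pos_of_pos hδ; linarith)
  obtain ⟨C, hC, hb⟩ := pow_geom_bdd ρ hρ0.le hρ1 k
  have hgi := (PO.integrable hf 1 one_pos 0).norm
  set A := ∫ s, ‖f s * GG 1 0 s‖ with hA
  have hA0 : 0 ≤ A := integral_nonneg fun s => norm_nonneg _
  refine ⟨C / ρ * A, by positivity, fun n hn x => ?_⟩
  have hn0 : (0 : ℝ) < n := by exact_mod_cast hn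
  have hms : MeasurableSet (Metric.ball (0 : Fin d → ℝ) δ)ᶜ := Metric.isOpen_ball.measurableSet.compl
  have h1 : ‖∫ s in (Metric.ball (0 : Fin d → ℝ) δ)ᶜ, f s * GG n x s‖ ≤
      ∫ s in (Metric.ball (0 : Fin d → ℝ) δ)ᶜ, (ρ ^ n / ρ) * ‖f s * GG 1 0 s‖ := by
    refine norm_integral_le_of_norm_le (hgi.const_mul _).integrableOn ?_
    refine (ae_restrict_iff' hms).mpr (Filter.Eventually.of_forall fun s hs => ?_)
    have hs' : δ ≤ ‖s‖ := by
      simpa using hs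
    rw [norm_mul, norm_mul, norm_GG, norm_GG]
    have hq := norm_sq_le s
    have hqd : δ ^ 2 ≤ ∑ i, s i ^ 2 := by
      have : δ ^ 2 ≤ ‖s‖ ^ 2 := by gcongr
      rw [qq] at hq; linarith
    have hρn : ρ ^ n / ρ = Real.exp (-(((n : ℝ) - 1) * (δ ^ 2 / 2))) := by
      rw [hρ, ← Real.exp_nat_mul, ← Real.exp_sub]; congr 1; ring
    have hkey : Real.exp (-(n / 2) * ∑ i, s i ^ 2) ≤
        (ρ ^ n / ρ) * Real.exp (-(1 / 2) * ∑ i, s i ^ 2) := by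
      rw [hρn, ← Real.exp_add]
      apply Real.exp_le_exp.mpr
      have hn1 : (1 : ℝ) ≤ n := by exact_mod_cast hn
      nlinarith
    calc ‖f s‖ * Real.exp (-(n / 2) * ∑ i, s i ^ 2) ≤
        ‖f s‖ * ((ρ ^ n / ρ) * Real.exp (-(1 / 2) * ∑ i, s i ^ 2)) := by gcongr
      _ = _ := by ring
  refine h1.trans ?_
  rw [integral_const_mul]
  have h2 : ∫ s in (Metric.ball (0 : Fin d → ℝ) δ)ᶜ, ‖f s * GG 1 0 s‖ ≤ A :=
    setIntegral_le_integral hgi (Filter.Eventually.of_forall fun s => norm_nonneg _)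
  rw [le_div_iff₀ (by positivity)]
  calc ρ ^ n / ρ * (∫ s in (Metric.ball (0 : Fin d → ℝ) δ)ᶜ, ‖f s * GG 1 0 s‖) * (n : ℝ) ^ k
      ≤ ρ ^ n / ρ * A * (n : ℝ) ^ k := by gcongr
    _ = ((n : ℝ) ^ k * ρ ^ n) / ρ * A := by ring
    _ ≤ C / ρ * A := by gcongr; exact hb n

theorem core {ι : Type*} (S : Finset ι) (p : ι → ℝ) (X : ι → Fin d → ℝ)
    (ht : ∑ v ∈ S, p v = 1)
    (hm : ∀ i, ∑ v ∈ S, p v * X v i = 0)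
    (hc : ∀ i j, ∑ v ∈ S, p v * X v i * X v j = if i = j then 1 else 0) (K : ℕ)
    (D : Set (Fin d → ℝ)) (hD : IsCompact D) (hD0 : D ∈ nhds (0 : Fin d → ℝ))
    (hφ : ∀ s ∈ D, s ≠ 0 → ‖phi S p X s‖ < 1) :
    ∃ F, Good d 1 F ∧ ∃ C : ℝ, ∀ n : ℕ, 1 ≤ n → ∀ x : Fin d → ℝ,
      ‖(∫ s in D, phi S p X s ^ n * Complex.exp (-(Complex.I * (dt s x : ℂ)))) -
        (pref n x : ℂ) * (1 + F n x)‖ ≤ C / (n : ℝ) ^ K := by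
  obtain ⟨T, hT, δ₀, hδ₀, C₁, hC₁, hloc⟩ := local_est S p X ht hm hc K
  obtain ⟨δ₁, hδ₁, hball⟩ := Metric.mem_nhds_iff.mp hD0
  set δ := min δ₀ δ₁ with hδd
  have hδ : 0 < δ := lt_min hδ₀ hδ₁
  set B := Metric.ball (0 : Fin d → ℝ) δ with hB
  have hBD : B ⊆ D := (Metric.ball_subset_ball (min_le_right _ _)).trans hball
  have hBm : MeasurableSet B := Metric.isOpen_ball.measurableSet
  set J := 2 * (K + 1) with hJ
  -- away from zero
  have hρ : ∃ ρ : ℝ, 0 ≤ ρ ∧ ρ < 1 ∧ ∀ s ∈ D \ B, ‖phi S p X s‖ ≤ ρ := by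
    have hcomp : IsCompact (D \ B) := hD.diff Metric.isOpen_ball
    rcases (D \ B).eq_empty_or_nonempty with he | hne
    · exact ⟨0, le_rfl, one_pos, fun s hs => by rw [he] at hs; exact hs.elim⟩
    · obtain ⟨s₀, hs₀, hmax⟩ := hcomp.exists_isMaxOn hne
        (continuous_phi S p X).norm.continuousOn
      refine ⟨‖phi S p X s₀‖, norm_nonneg _, hφ s₀ hs₀.1 ?_, fun s hs => hmax hs⟩
      rintro rfl
      exact hs₀.2 (Metric.mem_ball_self hδ)
  obtain ⟨ρ, hρ0, hρ1, hρ⟩ := hρ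
  obtain ⟨C₂, hC₂, hgeo⟩ := pow_geom_bdd ρ hρ0 hρ1 K
  have hTj : ∀ j, T ^ j ∈ PO d (3 * j) := fun j => PO.pow hT j
  choose F hFgood hFint using fun j => PO.gauss (hTj j)
  choose C₃ hC₃ htail using fun j => tail_est (hTj j) δ hδ (K + j)
  refine ⟨fun n x => ∑ j ∈ Finset.range (2 * K + 1), (n.choose (j + 1) : ℂ) * F (j + 1) n x, ?_,
    C₁ * volume.real B + C₂ * volume.real D + ∑ j ∈ Finset.range J, C₃ j, ?_⟩
  · refine Good.sum _ fun j _ => ?_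
    have h1 : Good d (j + 1) (fun n x => (n.choose (j + 1) : ℂ) * F (j + 1) n x) := by
      refine Good.choose ((hFgood (j + 1)).mono (by omega))
    exact h1.mono (by omega)
  intro n hn x
  have hn0 : (0 : ℝ) < n := by exact_mod_cast hn
  set e : (Fin d → ℝ) → ℂ := fun s => Complex.exp (-(Complex.I * (dt s x : ℂ))) with he
  have hene : ∀ s, ‖e s‖ = 1 := fun s => by
    simp only [he]
    rw [show -(Complex.I * (dt s x : ℂ)) = ((-dt s x : ℝ) : ℂ) * Complex.I by push_cast; ring]
    exact Complex.norm_exp_ofReal_mul_I _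
  have hec : Continuous e := by
    have := continuous_dt x
    simp only [he]; fun_prop
  set f : (Fin d → ℝ) → ℂ := fun s => phi S p X s ^ n * e s with hf
  have hfc : Continuous f := ((continuous_phi S p X).pow n).mul hec
  have hfD : IntegrableOn f D := hfc.continuousOn.integrableOn_compact hD
  set A : (Fin d → ℝ) → ℂ := fun s => ∑ j ∈ Finset.range J, (n.choose j : ℂ) * ((T ^ j) s * GG n x s)
    with hA
  have hAi : ∀ j ∈ Finset.range J, Integrable (fun s => (n.choose j : ℂ) * ((T ^ j) s * GG n x s)) :=
    fun j _ => (PO.integrable (hTj j) n hn0 x).const_mul _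
  have hAint : Integrable A := integrable_finsetSum _ hAi
  have hAtot : ∫ s, A s = (pref n x : ℂ) *
      (1 + ∑ j ∈ Finset.range (2 * K + 1), (n.choose (j + 1) : ℂ) * F (j + 1) n x) := by
    simp only [hA]
    rw [integral_finsetSum _ hAi, hJ, show 2 * (K + 1) = 2 * K + 1 + 1 by ring,
      Finset.sum_range_succ']
    simp only [integral_const_mul, pow_zero, Pi.one_apply, one_mul, Nat.choose_zero_right,
      Nat.cast_one, int_GG n hn x]
    rw [add_comm, mul_add, mul_one, Finset.mul_sum]
    congr 1
    refine Finset.sum_congr rfl fun j _ => ?_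
    rw [hFint (j + 1) n hn x]; ring
  have split1 : ∫ s in D, f s = (∫ s in B, f s) + ∫ s in D \ B, f s := by
    rw [← setIntegral_union Set.disjoint_sdiff_right (hD.measurableSet.diff hBm)
      (hfD.mono_set hBD) (hfD.mono_set Set.sdiff_subset), Set.union_sdiff_cancel hBD]
  have split2 : ∫ s, A s = (∫ s in B, A s) + ∫ s in Bᶜ, A s :=
    (integral_add_compl hBm hAint).symm
  have est1 : ‖(∫ s in B, f s) - ∫ s in B, A s‖ ≤ C₁ / (n : ℝ) ^ K * volume.real B := by
    rw [← integral_sub (hfD.mono_set hBD) hAint.integrableOn]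
    refine norm_setIntegral_le_of_norm_le_const
      ((measure_mono hBD).trans_lt hD.measure_lt_top) fun s hs => ?_
    have hsδ : ‖s‖ ≤ δ₀ := by
      have : ‖s‖ < δ := by simpa [hB] using hs
      exact this.le.trans (min_le_left _ _)
    have h := hloc s hsδ n hn
    have e1 : f s - A s = (phi S p X s ^ n - (∑ j ∈ Finset.range J, (n.choose j : ℂ) * T s ^ j) *
        Complex.exp (-(n * qq s : ℝ))) * e s := by
      simp only [hf, hA, GG_eq', Pi.pow_apply, ← mul_assoc, he]
      rw [← Finset.sum_mul, ← Finset.sum_mul, sub_mul]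
    rw [e1, norm_mul, hene, mul_one]
    exact h
  have est2 : ‖∫ s in D \ B, f s‖ ≤ C₂ / (n : ℝ) ^ K * volume.real D := by
    have h := norm_setIntegral_le_of_norm_le_const (f := f) (s := D \ B) (μ := volume) (C := ρ ^ n)
      ((measure_mono Set.sdiff_subset).trans_lt hD.measure_lt_top) (fun s hs => by
        simp only [hf]
        rw [norm_mul, hene, mul_one, norm_pow]
        exact pow_le_pow_left₀ (norm_nonneg _) (hρ s hs) n)
    refine h.trans ?_
    have h1 : ρ ^ n ≤ C₂ / (n : ℝ) ^ K := by
      rw [le_div_iff₀ (by positivity), mul_comm]; exact hgeo n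
    have h2 : volume.real (D \ B) ≤ volume.real D :=
      measureReal_mono Set.sdiff_subset hD.measure_lt_top.ne
    gcongr
  have est3 : ‖∫ s in Bᶜ, A s‖ ≤ (∑ j ∈ Finset.range J, C₃ j) / (n : ℝ) ^ K := by
    simp only [hA]
    rw [integral_finsetSum _ (fun j hj => (hAi j hj).integrableOn), Finset.sum_div]
    refine (norm_sum_le _ _).trans (Finset.sum_le_sum fun j _ => ?_)
    rw [integral_const_mul, norm_mul, Complex.norm_natCast]
    have h1 : (n.choose j : ℝ) ≤ (n : ℝ) ^ j := by exact_mod_cast Nat.choose_le_pow n j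
    have h2 := htail j n hn x
    have h3 := hC₃ j
    calc (n.choose j : ℝ) * ‖∫ s in Bᶜ, (T ^ j) s * GG n x s‖ ≤
        (n : ℝ) ^ j * (C₃ j / (n : ℝ) ^ (K + j)) :=
          mul_le_mul h1 h2 (norm_nonneg _) (by positivity)
      _ = C₃ j / (n : ℝ) ^ K := by rw [pow_add]; field_simp
  have key : (∫ s in D, f s) - (pref n x : ℂ) *
      (1 + ∑ j ∈ Finset.range (2 * K + 1), (n.choose (j + 1) : ℂ) * F (j + 1) n x) =
      ((∫ s in B, f s) - ∫ s in B, A s) + (∫ s in D \ B, f s) - ∫ s in Bᶜ, A s := by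
    rw [← hAtot, split1, split2]; ring
  rw [key]
  refine (norm_sub_le _ _).trans ((add_le_add ((norm_add_le _ _).trans (add_le_add est1 est2))
    est3).trans (le_of_eq ?_))
  ring

end LocExp

namespace LocExp
open MeasureTheory
variable {d : ℕ}

/-- the space-time lattice of the walk -/
def Yl (R : RW d) : AddSubgroup (ℤ × EuclideanSpace ℝ (Fin d)) :=
  AddSubgroup.closure ((fun v => ((1 : ℤ), v)) '' (R.p.support : Set (EuclideanSpace ℝ (Fin d))))

lemma mem_Yl (R : RW d) {v : EuclideanSpace ℝ (Fin d)} (hv : v ∈ R.p.support) :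
    ((1 : ℤ), v) ∈ Yl R := AddSubgroup.subset_closure ⟨v, hv, rfl⟩

lemma P_mem (R : RW d) (n : ℕ) : ∀ z, R.P n z ≠ 0 → ((n : ℤ), z) ∈ Yl R := by
  induction n with
  | zero =>
    intro z hz
    have : z = 0 := by
      by_contra h
      exact hz (by simp [RW.P, h])
    subst this
    exact (Yl R).zero_mem
  | succ n ih =>
    intro z hz
    rw [RW.P] at hz
    obtain ⟨v, hv, hne⟩ := Finset.exists_ne_zero_of_sum_ne_zero hz
    have h1 := ih (z - v) (right_ne_zero_of_mul hne)
    have h2 := (Yl R).add_mem h1 (mem_Yl R hv)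
    simpa using h2

lemma Yl_Z (R : RW d) (Z : AddSubgroup (EuclideanSpace ℝ (Fin d))) (hRZ : R.OnLattice Z)
    (q : ℤ × EuclideanSpace ℝ (Fin d)) (hq : q ∈ Yl R) : q.2 ∈ Z := by
  induction hq using AddSubgroup.closure_induction with
  | mem x hx => obtain ⟨v, hv, rfl⟩ := hx; exact hRZ.1 v hv
  | zero => exact Z.zero_mem
  | add x y _ _ hx hy => exact Z.add_mem hx hy
  | neg x _ hx => exact Z.neg_mem hx

lemma Z_Yl (R : RW d) (Z : AddSubgroup (EuclideanSpace ℝ (Fin d))) (hRZ : R.OnLattice Z)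
    (z : EuclideanSpace ℝ (Fin d)) (hz : z ∈ Z) : ∃ n : ℕ, ((n : ℤ), z) ∈ Yl R := by
  obtain ⟨n, hn⟩ := hRZ.2 z hz
  exact ⟨n, P_mem R n z hn.ne'⟩

lemma supp_nonempty (R : RW d) : R.p.support.Nonempty := by
  by_contra h
  rw [Finset.not_nonempty_iff_eq_empty] at h
  have := R.total
  rw [h] at this
  simp at this

/-- the spatial lattice at time zero -/
def Lam (R : RW d) : AddSubgroup (EuclideanSpace ℝ (Fin d)) :=
  (Yl R).comap (AddMonoidHom.inr ℤ (EuclideanSpace ℝ (Fin d)))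

lemma mem_Lam (R : RW d) (z : EuclideanSpace ℝ (Fin d)) : z ∈ Lam R ↔ ((0 : ℤ), z) ∈ Yl R := Iff.rfl

lemma span_Lam (R : RW d) (Z : AddSubgroup (EuclideanSpace ℝ (Fin d))) (hZ : IsLattice Z)
    (hRZ : R.OnLattice Z) (hbal : R.Balanced) :
    Submodule.span ℝ (Lam R : Set (EuclideanSpace ℝ (Fin d))) = ⊤ := by
  set V := Submodule.span ℝ (Lam R : Set (EuclideanSpace ℝ (Fin d))) with hV
  obtain ⟨v0, hv0⟩ := supp_nonempty R
  have h1 : ∀ v ∈ R.p.support, v - v0 ∈ V := by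
    intro v hv
    refine Submodule.subset_span ?_
    have := (Yl R).sub_mem (mem_Yl R hv) (mem_Yl R hv0)
    simp only [Prod.mk_sub_mk, sub_self] at this
    exact this
  have h2 : v0 ∈ V := by
    have h3 : ∑ v ∈ R.p.support, R.p v • (v - v0) ∈ V :=
      Submodule.sum_mem _ fun v hv => Submodule.smul_mem _ _ (h1 v hv)
    have hb : ∑ v ∈ R.p.support, R.p v • v = 0 := hbal
    simp only [smul_sub, Finset.sum_sub_distrib, ← Finset.sum_smul, R.total, hb, one_smul,
      zero_sub] at h3
    simpa using V.neg_mem h3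
  have h3 : ∀ v ∈ R.p.support, v ∈ V := fun v hv => by
    simpa using V.add_mem (h1 v hv) h2
  have h4 : ∀ q ∈ Yl R, q.2 ∈ V := by
    intro q hq
    induction hq using AddSubgroup.closure_induction with
    | mem x hx => obtain ⟨v, hv, rfl⟩ := hx; exact h3 v hv
    | zero => exact V.zero_mem
    | add x y _ _ hx hy => exact V.add_mem hx hy
    | neg x _ hx => exact V.neg_mem hx
  rw [eq_top_iff, ← hZ.2, Submodule.span_le]
  intro z hz
  obtain ⟨n, hn⟩ := Z_Yl R Z hRZ z hz
  exact h4 _ hn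

lemma span_Yl (R : RW d) (Z : AddSubgroup (EuclideanSpace ℝ (Fin d))) (hZ : IsLattice Z)
    (hRZ : R.OnLattice Z) (hbal : R.Balanced) :
    Submodule.span ℝ
      ((fun q : ℤ × EuclideanSpace ℝ (Fin d) => ((q.1 : ℝ), q.2)) '' (Yl R : Set _)) = ⊤ := by
  set W := Submodule.span ℝ
      ((fun q : ℤ × EuclideanSpace ℝ (Fin d) => ((q.1 : ℝ), q.2)) '' (Yl R : Set _)) with hW
  have h0 : ∀ x, ((0 : ℝ), x) ∈ W := by
    have h1 : Submodule.span ℝ (Lam R : Set (EuclideanSpace ℝ (Fin d))) ≤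
        W.comap (LinearMap.inr ℝ ℝ (EuclideanSpace ℝ (Fin d))) := by
      rw [Submodule.span_le]
      intro z hz
      refine Submodule.subset_span ⟨((0 : ℤ), z), hz, ?_⟩
      simp
    rw [span_Lam R Z hZ hRZ hbal] at h1
    intro x
    exact h1 (Submodule.mem_top (x := x))
  obtain ⟨v0, hv0⟩ := supp_nonempty R
  have h1 : ((1 : ℝ), v0) ∈ W := Submodule.subset_span ⟨((1 : ℤ), v0), mem_Yl R hv0, by simp⟩
  rw [eq_top_iff]
  rintro ⟨a, x⟩ -
  have := W.add_mem (W.smul_mem a h1) (h0 (x - a • v0))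
  simpa using this

lemma exists_basis (R : RW d) (Z : AddSubgroup (EuclideanSpace ℝ (Fin d))) (hZ : IsLattice Z)
    (hRZ : R.OnLattice Z) (hbal : R.Balanced) :
    ∃ b : Module.Basis (Fin d) ℝ (EuclideanSpace ℝ (Fin d)),
      (∀ i, b i ∈ Lam R) ∧ ∀ z ∈ Lam R, ∃ k : Fin d → ℤ, ∀ i, b.equivFun z i = k i := by
  set L : Submodule ℤ (EuclideanSpace ℝ (Fin d)) := AddSubgroup.toIntSubmodule (Lam R) with hL
  have hmem : ∀ z, z ∈ L ↔ z ∈ Lam R := fun z => Iff.rfl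
  obtain ⟨ε, hε, hd⟩ := hZ.1
  have hdisc : DiscreteTopology L := by
    apply discreteTopology_of_isOpen_singleton_zero
    rw [Metric.isOpen_singleton_iff]
    refine ⟨ε, hε, fun y hy => ?_⟩
    by_contra hne
    have hy' : (y : EuclideanSpace ℝ (Fin d)) ≠ 0 := fun h => hne (Subtype.ext h)
    have h1 := hd y (Yl_Z R Z hRZ _ ((hmem _).mp y.2)) hy'
    have h2 : dist (y : EuclideanSpace ℝ (Fin d)) 0 < ε := hy
    rw [dist_zero_right] at h2
    linarith
  have hlat : IsZLattice ℝ L := ⟨span_Lam R Z hZ hRZ hbal⟩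
  have := ZLattice.module_free ℝ L
  have := ZLattice.module_finite ℝ L
  have hr : Module.finrank ℤ L = d := by rw [ZLattice.rank ℝ L]; simp
  set bz := Module.finBasisOfFinrankEq ℤ L hr
  refine ⟨bz.ofZLatticeBasis ℝ L, fun i => ?_, fun z hz => ⟨fun i => bz.repr ⟨z, hz⟩ i, fun i => ?_⟩⟩
  · rw [Module.Basis.ofZLatticeBasis_apply]; exact (bz i).2
  · exact Module.Basis.ofZLatticeBasis_repr_apply ℝ L bz ⟨z, hz⟩ i

/-- the fundamental cube -/
def cube (d : ℕ) : Set (Fin d → ℝ) := Set.pi Set.univ fun _ => Set.Icc (-Real.pi) Real.pi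

lemma cube_compact : IsCompact (cube d) := isCompact_univ_pi fun _ => isCompact_Icc

lemma cube_nhds : cube d ∈ nhds (0 : Fin d → ℝ) :=
  set_pi_mem_nhds Set.finite_univ fun i _ =>
    Icc_mem_nhds (by simpa using Real.pi_pos) (by simpa using Real.pi_pos)

lemma int_one (k : ℤ) : ∫ t in Set.Icc (-Real.pi) Real.pi, Complex.exp (-(Complex.I * (t * k : ℂ))) =
    if k = 0 then (2 * Real.pi : ℂ) else 0 := by
  rw [integral_Icc_eq_integral_Ioc, ← intervalIntegral.integral_of_le (by linarith [Real.pi_pos])]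
  split_ifs with h
  · subst h
    simp
    ring
  · have hk : (-(Complex.I * k) : ℂ) ≠ 0 := by
      simpa using h
    have e : ∀ t : ℝ, Complex.exp (-(Complex.I * (t * k : ℂ))) =
        Complex.exp (-(Complex.I * k) * t) := fun t => by congr 1; ring
    simp_rw [e]
    rw [integral_exp_mul_complex hk]
    have e2 : (-(Complex.I * k) : ℂ) * ((-Real.pi : ℝ) : ℂ) =
        -(Complex.I * k) * (Real.pi : ℂ) + k * (2 * Real.pi * Complex.I) := by
      push_cast; ring
    rw [e2, Complex.exp_add, Complex.exp_int_mul_two_pi_mul_I, mul_one, sub_self, zero_div]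

lemma int_cube (k : Fin d → ℤ) (w : Fin d → ℝ) (hw : ∀ i, w i = k i) :
    ∫ t in cube d, Complex.exp (-(Complex.I * (dt t w : ℂ))) =
      if w = 0 then (2 * Real.pi : ℂ) ^ d else 0 := by
  have e : ∀ t : Fin d → ℝ, Complex.exp (-(Complex.I * (dt t w : ℂ))) =
      ∏ i, Complex.exp (-(Complex.I * (t i * (k i : ℂ)))) := by
    intro t
    rw [← Complex.exp_sum]
    congr 1
    simp only [dt, hw]
    push_cast
    rw [Finset.mul_sum, Finset.sum_neg_distrib]
  simp_rw [e]
  rw [cube, volume_pi, Measure.restrict_pi_pi, integral_fintype_prod_eq_prod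
    (fun (i : Fin d) (t : ℝ) => Complex.exp (-(Complex.I * (t * (k i : ℂ)))))]
  simp_rw [int_one]
  split_ifs with h
  · have : ∀ i, k i = 0 := fun i => by
      have := hw i; rw [h] at this; simpa using this.symm
    simp [this]
  · have : ∃ i, k i ≠ 0 := by
      by_contra hcon
      push Not at hcon
      exact h (funext fun i => by rw [hw i, hcon i]; simp)
    obtain ⟨i, hi⟩ := this
    exact Finset.prod_eq_zero (Finset.mem_univ i) (by simp [hi])

lemma dt_sub (s x y : Fin d → ℝ) : dt s (x - y) = dt s x - dt s y := by
  simp [dt, mul_sub, Finset.sum_sub_distrib]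

lemma dt_add (s x y : Fin d → ℝ) : dt s (x + y) = dt s x + dt s y := by
  simp [dt, mul_add, Finset.sum_add_distrib]

lemma inversion (R : RW d) (b : Module.Basis (Fin d) ℝ (EuclideanSpace ℝ (Fin d)))
    (hb : ∀ z ∈ Lam R, ∃ k : Fin d → ℤ, ∀ i, b.equivFun z i = k i) (n : ℕ) :
    ∀ z, ((n : ℤ), z) ∈ Yl R →
      ∫ t in cube d, phi R.p.support R.p (fun v => b.equivFun v) t ^ n *
        Complex.exp (-(Complex.I * (dt t (b.equivFun z) : ℂ))) =
        (2 * Real.pi : ℂ) ^ d * (R.P n z : ℂ) := by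
  induction n with
  | zero =>
    intro z hz
    obtain ⟨k, hk⟩ := hb z hz
    simp only [pow_zero, one_mul]
    rw [int_cube k _ hk]
    by_cases h : z = 0
    · subst h; simp [RW.P]
    · have : b.equivFun z ≠ 0 := by simpa using h
      simp [RW.P, h, this]
  | succ n ih =>
    intro z hz
    have e : ∀ t : Fin d → ℝ, phi R.p.support R.p (fun v => b.equivFun v) t ^ (n + 1) *
        Complex.exp (-(Complex.I * (dt t (b.equivFun z) : ℂ))) =
        ∑ v ∈ R.p.support, (R.p v : ℂ) * (phi R.p.support R.p (fun v => b.equivFun v) t ^ n *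
        Complex.exp (-(Complex.I * (dt t (b.equivFun (z - v)) : ℂ)))) := by
      intro t
      have hph : phi R.p.support R.p (fun v => b.equivFun v) t = ∑ v ∈ R.p.support,
        (R.p v : ℂ) * Complex.exp (Complex.I * (dt t (b.equivFun v) : ℂ)) := rfl
      rw [pow_succ]
      generalize phi R.p.support R.p (fun v => b.equivFun v) t ^ n = A
      rw [hph, Finset.mul_sum, Finset.sum_mul]
      refine Finset.sum_congr rfl fun v _ => ?_
      rw [map_sub, dt_sub]
      have : Complex.exp (-(Complex.I * ((dt t (b.equivFun z) - dt t (b.equivFun v) : ℝ) : ℂ))) =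
        Complex.exp (Complex.I * (dt t (b.equivFun v) : ℂ)) *
          Complex.exp (-(Complex.I * (dt t (b.equivFun z) : ℂ))) := by
        rw [← Complex.exp_add]; congr 1; push_cast; ring
      rw [this]; ring
    simp_rw [e]
    rw [integral_finsetSum]
    · simp_rw [integral_const_mul]
      rw [RW.P]
      push_cast
      rw [Finset.mul_sum]
      refine Finset.sum_congr rfl fun v hv => ?_
      rw [ih (z - v)]
      · ring
      · have := (Yl R).sub_mem hz (mem_Yl R hv)
        simpa using this
    · intro v _
      refine Integrable.const_mul ?_ _
      refine (Continuous.continuousOn ?_).integrableOn_compact cube_compact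
      have h1 := continuous_phi R.p.support R.p (fun v => (b.equivFun v : Fin d → ℝ))
      have h2 := continuous_dt (b.equivFun (z - v))
      fun_prop

lemma all_eq {ι : Type*} (S : Finset ι) (p : ι → ℝ) (c : ι → ℂ) (hp : ∀ v ∈ S, 0 < p v)
    (ht : ∑ v ∈ S, p v = 1) (hc : ∀ v ∈ S, ‖c v‖ = 1)
    (h : 1 ≤ ‖∑ v ∈ S, (p v : ℂ) * c v‖) : ∃ u : ℂ, ‖u‖ = 1 ∧ ∀ v ∈ S, c v = u := by
  set u := ∑ v ∈ S, (p v : ℂ) * c v with hu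
  have hu1 : ‖u‖ = 1 := by
    refine le_antisymm ?_ h
    rw [← ht, hu]
    refine (norm_sum_le _ _).trans (Finset.sum_le_sum fun v hv => ?_)
    rw [norm_mul, hc v hv, mul_one, Complex.norm_real, Real.norm_of_nonneg (hp v hv).le]
  refine ⟨u, hu1, ?_⟩
  have hsu : u * (starRingEnd ℂ) u = 1 := by
    rw [Complex.mul_conj, Complex.normSq_eq_norm_sq, hu1]; norm_num
  have h1 : ∑ v ∈ S, p v * (1 - (c v * (starRingEnd ℂ) u).re) = 0 := by
    have h2 : ∑ v ∈ S, p v * (c v * (starRingEnd ℂ) u).re = 1 := by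
      have h3 := congrArg Complex.re hsu
      conv at h3 => lhs; rw [hu]
      rw [← hu, Finset.sum_mul, Complex.re_sum] at h3
      simp only [mul_assoc, Complex.re_ofReal_mul, Complex.one_re] at h3
      exact h3
    simp only [mul_sub, mul_one, Finset.sum_sub_distrib, ht, h2, sub_self]
  have hn : ∀ v ∈ S, ‖c v * (starRingEnd ℂ) u‖ = 1 := fun v hv => by
    rw [norm_mul, hc v hv, RCLike.norm_conj, hu1, mul_one]
  rw [Finset.sum_eq_zero_iff_of_nonneg] at h1
  · intro v hv
    have h2 := h1 v hv
    have h3 : (c v * (starRingEnd ℂ) u).re = 1 := by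
      rcases mul_eq_zero.mp h2 with h4 | h4
      · exact absurd h4 (hp v hv).ne'
      · linarith
    have h4 : c v * (starRingEnd ℂ) u = 1 := by
      have h5 := hn v hv
      have h6 : (c v * (starRingEnd ℂ) u).im = 0 := by
        have h7 := Complex.sq_norm (c v * (starRingEnd ℂ) u)
        rw [h5, Complex.normSq_apply, h3] at h7
        nlinarith
      exact Complex.ext h3 h6
    calc c v = c v * (u * (starRingEnd ℂ) u) := by rw [hsu, mul_one]
      _ = c v * (starRingEnd ℂ) u * u := by ring
      _ = u := by rw [h4, one_mul]
  · intro v hv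
    have h2 := Complex.re_le_norm (c v * (starRingEnd ℂ) u)
    rw [hn v hv] at h2
    exact mul_nonneg (hp v hv).le (by linarith)

lemma supp_pos (R : RW d) (v) (hv : v ∈ R.p.support) : 0 < R.p v :=
  lt_of_le_of_ne (R.nonneg v) (Ne.symm (Finsupp.mem_support_iff.mp hv))

lemma phi_lt (R : RW d) (b : Module.Basis (Fin d) ℝ (EuclideanSpace ℝ (Fin d)))
    (hb : ∀ i, b i ∈ Lam R) (t : Fin d → ℝ) (ht : t ∈ cube d) (ht0 : t ≠ 0) :
    ‖phi R.p.support R.p (fun v => (b.equivFun v : Fin d → ℝ)) t‖ < 1 := by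
  by_contra hcon
  push Not at hcon
  obtain ⟨u, hu, hall⟩ := all_eq R.p.support R.p _ (supp_pos R) R.total (fun v _ => by
    rw [mul_comm]; exact Complex.norm_exp_ofReal_mul_I _) hcon
  have hu0 : u ≠ 0 := fun h => by simp [h] at hu
  have hY : ∀ q ∈ Yl R, Complex.exp (Complex.I * (dt t (b.equivFun q.2) : ℂ)) = u ^ q.1 := by
    intro q hq
    induction hq using AddSubgroup.closure_induction with
    | mem x hx => obtain ⟨v, hv, rfl⟩ := hx; simpa using hall v hv
    | zero => simp [dt]
    | add x y _ _ hx hy =>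
      rw [Prod.snd_add, map_add, dt_add, Complex.ofReal_add, mul_add, Complex.exp_add, hx, hy,
        Prod.fst_add, zpow_add₀ hu0]
    | neg x _ hx =>
      have : dt t (b.equivFun (-x).2) = - dt t (b.equivFun x.2) := by
        simp [dt]
      rw [this, Complex.ofReal_neg, mul_neg, Complex.exp_neg, hx, Prod.fst_neg, zpow_neg]
  apply ht0
  funext i
  have h1 := hY _ (hb i)
  have h2 : dt t (b.equivFun (b i)) = t i := by
    simp [dt, Finsupp.single_apply]
  simp only [AddMonoidHom.inr_apply, zpow_zero] at h1
  rw [h2, Complex.exp_eq_one_iff] at h1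
  obtain ⟨k, hk⟩ := h1
  have hk' : t i = k * (2 * Real.pi) := by
    have : (t i : ℂ) = k * (2 * Real.pi) := by
      have hI := Complex.I_ne_zero
      apply mul_left_cancel₀ hI
      rw [hk]; ring
    exact_mod_cast this
  have hti := ht i (Set.mem_univ i)
  rw [Set.mem_Icc, hk'] at hti
  have hpi := Real.pi_pos
  have k1 : (k : ℝ) < 1 := by nlinarith
  have k2 : (-1 : ℝ) < k := by nlinarith
  have k0 : k = 0 := by
    have : k < 1 := by exact_mod_cast k1
    have : -1 < k := by exact_mod_cast k2
    omega
  rw [hk', k0]; simp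

lemma corr_posDef (R : RW d) (Z : AddSubgroup (EuclideanSpace ℝ (Fin d))) (hZ : IsLattice Z)
    (hRZ : R.OnLattice Z) : R.corr.PosDef := by
  have hq : ∀ x : Fin d → ℝ, dotProduct x (R.corr.mulVec x) =
      ∑ v ∈ R.p.support, R.p v * (∑ i, v i * x i) ^ 2 := by
    intro x
    have h : ∀ v : EuclideanSpace ℝ (Fin d), R.p v * (∑ i, v i * x i) ^ 2 =
        ∑ i, ∑ j, x i * (R.p v * v i * v j * x j) := by
      intro v
      rw [sq, Finset.sum_mul_sum, Finset.mul_sum]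
      refine Finset.sum_congr rfl fun i _ => ?_
      rw [Finset.mul_sum]
      exact Finset.sum_congr rfl fun j _ => by ring
    simp_rw [h]
    rw [Finset.sum_comm]
    simp only [dotProduct, Matrix.mulVec, RW.corr, Matrix.of_apply]
    refine Finset.sum_congr rfl fun i _ => ?_
    rw [Finset.sum_comm, Finset.mul_sum]
    refine Finset.sum_congr rfl fun j _ => ?_
    rw [Finset.sum_mul, Finset.mul_sum]
  refine Matrix.PosDef.of_dotProduct_mulVec_pos ?_ ?_
  · ext i j
    simp only [RW.corr, Matrix.conjTranspose_apply, Matrix.of_apply, star_trivial]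
    exact Finset.sum_congr rfl fun v _ => by ring
  · intro x hx
    rw [star_trivial, hq]
    have hnn : ∀ v ∈ R.p.support, 0 ≤ R.p v * (∑ i, v i * x i) ^ 2 := fun v hv =>
      mul_nonneg (R.nonneg v) (sq_nonneg _)
    refine lt_of_le_of_ne (Finset.sum_nonneg hnn) fun h0 => hx ?_
    have h1 := (Finset.sum_eq_zero_iff_of_nonneg hnn).mp h0.symm
    have h2 : ∀ v ∈ R.p.support, ∑ i, v i * x i = 0 := fun v hv => by
      rcases mul_eq_zero.mp (h1 v hv) with h | h
      · exact absurd h (supp_pos R v hv).ne'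
      · exact pow_eq_zero_iff (two_ne_zero) |>.mp h
    let ℓ : EuclideanSpace ℝ (Fin d) →ₗ[ℝ] ℝ :=
      { toFun := fun v => ∑ i, v i * x i
        map_add' := fun a b => by simp [add_mul, Finset.sum_add_distrib]
        map_smul' := fun c a => by simp [mul_assoc, Finset.mul_sum] }
    have h3 : ∀ q ∈ Yl R, ℓ q.2 = 0 := by
      intro q hq
      induction hq using AddSubgroup.closure_induction with
      | mem x hx => obtain ⟨v, hv, rfl⟩ := hx; exact h2 v hv
      | zero => simp
      | add x y _ _ hx hy => simp [hx, hy]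
      | neg x _ hx => simp [hx]
    have h4 : (⊤ : Submodule ℝ (EuclideanSpace ℝ (Fin d))) ≤ LinearMap.ker ℓ := by
      rw [← hZ.2, Submodule.span_le]
      intro z hz
      obtain ⟨n, hn⟩ := Z_Yl R Z hRZ z hz
      exact h3 _ hn
    funext i
    have h5 : ℓ (EuclideanSpace.single i 1) = 0 := h4 (Submodule.mem_top)
    simpa [ℓ, Pi.single_apply] using h5

end LocExp

namespace LocExp
open MeasureTheory
variable {d : ℕ}

open scoped MatrixOrder in
lemma exists_factor (M : Matrix (Fin d) (Fin d) ℝ) (hM : M.PosDef) :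
    ∃ W : Matrix (Fin d) (Fin d) ℝ, IsUnit W.det ∧ W * M * W.transpose = 1 := by
  obtain ⟨y, hy, rfl⟩ := CStarAlgebra.isStrictlyPositive_iff_eq_star_mul_self.mp
        hM.isStrictlyPositive
  have hd : IsUnit y.det := (Matrix.isUnit_iff_isUnit_det y).mp hy
  have hs : star y = y.transpose := by
    rw [Matrix.star_eq_conjTranspose]; ext i j; simp
  refine ⟨(y.transpose)⁻¹, ?_, ?_⟩
  · rw [Matrix.det_nonsing_inv, Matrix.det_transpose]
    simpa using hd
  · rw [hs, ← Matrix.mul_assoc, Matrix.nonsing_inv_mul _ (by rwa [Matrix.det_transpose]),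
      Matrix.one_mul, Matrix.transpose_nonsing_inv, Matrix.transpose_transpose,
      Matrix.mul_nonsing_inv _ hd]

lemma exists_A (b : Module.Basis (Fin d) ℝ (EuclideanSpace ℝ (Fin d)))
    (W : Matrix (Fin d) (Fin d) ℝ) (hW : IsUnit W.det) :
    ∃ A : Matrix (Fin d) (Fin d) ℝ, A.det ≠ 0 ∧
      ∀ z : EuclideanSpace ℝ (Fin d), (b.equivFun z : Fin d → ℝ) =
        A.mulVec (W.mulVec (fun j => z j)) := by
  let e := (WithLp.linearEquiv 2 ℝ (Fin d → ℝ)).symm ≪≫ₗ b.equivFun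
  have hG : IsUnit (LinearMap.toMatrix' (e : (Fin d → ℝ) →ₗ[ℝ] (Fin d → ℝ))).det := by
    rw [LinearMap.det_toMatrix']
    exact LinearEquiv.isUnit_det' e
  refine ⟨LinearMap.toMatrix' (e : (Fin d → ℝ) →ₗ[ℝ] (Fin d → ℝ)) * W⁻¹, ?_, ?_⟩
  · rw [Matrix.det_mul, Matrix.det_nonsing_inv]
    exact (hG.mul (by simpa using hW)).ne_zero
  · intro z
    rw [Matrix.mulVec_mulVec, Matrix.mul_assoc, Matrix.nonsing_inv_mul _ hW, Matrix.mul_one,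
      LinearMap.toMatrix'_mulVec]
    rfl

lemma dt_mulVec (A : Matrix (Fin d) (Fin d) ℝ) (t x : Fin d → ℝ) :
    dt t (A.mulVec x) = dt (A.transpose.mulVec t) x := by
  change dotProduct t (A.mulVec x) = dotProduct (A.transpose.mulVec t) x
  rw [Matrix.dotProduct_mulVec, Matrix.mulVec_transpose]

lemma mulVec_inj (E : Matrix (Fin d) (Fin d) ℝ) (hE : E.det ≠ 0) :
    Function.Injective E.mulVec :=
  Matrix.mulVec_injective_iff_isUnit.mpr ((Matrix.isUnit_iff_isUnit_det E).mpr (IsUnit.mk0 _ hE))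

lemma change_var (E : Matrix (Fin d) (Fin d) ℝ) (hE : E.det ≠ 0) (f : (Fin d → ℝ) → ℂ) :
    ∫ s in E.mulVec '' cube d, f s = ((|E.det| : ℝ) : ℂ) * ∫ t in cube d, f (E.mulVec t) := by
  have h := integral_image_eq_integral_abs_det_fderiv_smul volume
    (s := cube d) (f := E.mulVec) (f' := fun _ => (Matrix.toLin' E).toContinuousLinearMap)
    cube_compact.measurableSet
    (fun x _ => ((Matrix.toLin' E).toContinuousLinearMap.hasFDerivAt (x := x)).hasFDerivWithinAt)
    ((mulVec_inj E hE).injOn) f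
  rw [h, ← integral_const_mul]
  refine setIntegral_congr_fun cube_compact.measurableSet fun t _ => ?_
  have : (Matrix.toLin' E).toContinuousLinearMap.det = E.det := by
    rw [ContinuousLinearMap.det]; simp
  simp only [this]
  rw [Complex.real_smul]

lemma image_nhds (E : Matrix (Fin d) (Fin d) ℝ) (hE : E.det ≠ 0) :
    E.mulVec '' cube d ∈ nhds (0 : Fin d → ℝ) := by
  have hc : Continuous (E⁻¹).mulVec := by
    exact (Matrix.toLin' E⁻¹).toContinuousLinearMap.continuous
  have h0 : (E⁻¹).mulVec 0 = 0 := Matrix.mulVec_zero _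
  have h1 : (E⁻¹).mulVec ⁻¹' cube d ∈ nhds (0 : Fin d → ℝ) := by
    refine hc.continuousAt.preimage_mem_nhds ?_
    rw [h0]; exact cube_nhds
  refine Filter.mem_of_superset h1 fun s hs => ⟨(E⁻¹).mulVec s, hs, ?_⟩
  rw [Matrix.mulVec_mulVec, Matrix.mul_nonsing_inv _ (IsUnit.mk0 _ hE), Matrix.one_mulVec]

lemma image_compact (E : Matrix (Fin d) (Fin d) ℝ) : IsCompact (E.mulVec '' cube d) :=
  cube_compact.image (Matrix.toLin' E).toContinuousLinearMap.continuous

lemma re_poly {m : ℕ} (Q : MvPolynomial (Fin m) ℂ) : ∃ Q1 Q2 : MvPolynomial (Fin m) ℝ,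
    ∀ y : Fin m → ℝ, MvPolynomial.eval (fun i => (y i : ℂ)) Q =
      ((MvPolynomial.eval y Q1 : ℝ) : ℂ) + ((MvPolynomial.eval y Q2 : ℝ) : ℂ) * Complex.I := by
  induction Q using MvPolynomial.induction_on with
  | C a =>
    refine ⟨MvPolynomial.C a.re, MvPolynomial.C a.im, fun y => ?_⟩
    simp [Complex.re_add_im]
  | add p q hp hq =>
    obtain ⟨p1, p2, hp⟩ := hp
    obtain ⟨q1, q2, hq⟩ := hq
    refine ⟨p1 + q1, p2 + q2, fun y => ?_⟩
    rw [map_add, hp, hq, map_add, map_add]; push_cast; ring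
  | mul_X p i hp =>
    obtain ⟨p1, p2, hp⟩ := hp
    refine ⟨p1 * MvPolynomial.X i, p2 * MvPolynomial.X i, fun y => ?_⟩
    rw [map_mul, hp, map_mul, map_mul, MvPolynomial.eval_X, MvPolynomial.eval_X]; push_cast; ring

lemma subst_poly (W : Matrix (Fin d) (Fin d) ℝ) (Q : MvPolynomial (Fin (d + 1)) ℝ) :
    ∃ Q' : MvPolynomial (Fin (d + 1)) ℝ, ∀ (a : ℝ) (x : Fin d → ℝ),
      MvPolynomial.eval (Fin.cons a x : Fin (d + 1) → ℝ) Q' =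
        MvPolynomial.eval (Fin.cons a (W.mulVec x) : Fin (d + 1) → ℝ) Q := by
  refine ⟨MvPolynomial.bind₁ (Fin.cons (MvPolynomial.X 0)
    (fun i => ∑ j, MvPolynomial.C (W i j) * MvPolynomial.X j.succ) :
      Fin (d + 1) → MvPolynomial (Fin (d + 1)) ℝ) Q, fun a x => ?_⟩
  have := MvPolynomial.eval₂Hom_bind₁ (RingHom.id ℝ) (Fin.cons a x : Fin (d + 1) → ℝ)
    (Fin.cons (MvPolynomial.X 0)
    (fun i => ∑ j, MvPolynomial.C (W i j) * MvPolynomial.X j.succ) :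
      Fin (d + 1) → MvPolynomial (Fin (d + 1)) ℝ) Q
  change MvPolynomial.eval₂Hom _ _ _ = MvPolynomial.eval₂Hom (RingHom.id ℝ) _ _
  erw [this]
  congr 2
  funext i
  refine Fin.cases ?_ (fun i => ?_) i
  · simp
  · simp [Matrix.mulVec, dotProduct]

lemma small (C κ : ℝ) (N : ℕ) (hC : 0 ≤ C) (hκ : 0 ≤ κ) (ε : ℝ) (hε : 0 < ε) :
    ∃ n₀ : ℕ, ∀ n : ℕ, n₀ ≤ n → 1 ≤ n ∧
      C * (1 / √(n : ℝ)) ^ 1 * (1 + κ * √(Real.log n)) ^ N ≤ ε := by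
  have h := (isLittleO_log_rpow_rpow_atTop (N : ℝ) (s := 1 / 2) (by norm_num))
  have hpos : 0 < ε / (C * (1 + κ) ^ N + 1) := by positivity
  have h1 := (h.def hpos)
  have h2 := (tendsto_natCast_atTop_atTop (R := ℝ)).eventually h1
  obtain ⟨n₀, hn₀⟩ := Filter.eventually_atTop.mp h2
  refine ⟨max n₀ 3, fun n hn => ?_⟩
  have hn3 : 3 ≤ n := le_trans (le_max_right _ _) hn
  have h3 := hn₀ n (le_trans (le_max_left _ _) hn)
  refine ⟨by omega, ?_⟩
  have hn3' : (3 : ℝ) ≤ n := by exact_mod_cast hn3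
  have hl : 1 ≤ Real.log n := by
    rw [Real.le_log_iff_exp_le (by linarith)]
    linarith [Real.exp_one_lt_d9]
  rw [Real.rpow_natCast, ← Real.sqrt_eq_rpow, Real.norm_of_nonneg (by positivity),
    Real.norm_of_nonneg (by positivity)] at h3
  have hsl : √(Real.log n) ≤ Real.log n := by
    rw [Real.sqrt_le_left (by linarith)]; nlinarith
  have h4 : (1 + κ * √(Real.log n)) ^ N ≤ (1 + κ) ^ N * Real.log n ^ N := by
    rw [← mul_pow]
    gcongr
    nlinarith
  have hsn : 0 < √(n : ℝ) := Real.sqrt_pos.mpr (by linarith)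
  calc C * (1 / √(n : ℝ)) ^ 1 * (1 + κ * √(Real.log n)) ^ N
      ≤ C * (1 / √(n : ℝ)) ^ 1 * ((1 + κ) ^ N * (ε / (C * (1 + κ) ^ N + 1) * √(n : ℝ))) := by
        gcongr
        exact h4.trans (by gcongr)
    _ = ε * (C * (1 + κ) ^ N / (C * (1 + κ) ^ N + 1)) := by
        field_simp
    _ ≤ ε * 1 := by
        gcongr
        rw [div_le_one (by positivity)]; linarith
    _ = ε := mul_one ε

lemma X_mean (R : RW d) (hbal : R.Balanced) (W : Matrix (Fin d) (Fin d) ℝ) (i : Fin d) :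
    ∑ v ∈ R.p.support, R.p v * (W.mulVec (fun j => v j)) i = 0 := by
  have h : ∀ j, ∑ v ∈ R.p.support, R.p v * v j = 0 := by
    intro j
    have := congrArg (fun v : EuclideanSpace ℝ (Fin d) => v j) hbal
    simpa [WithLp.ofLp_sum] using this
  simp only [Matrix.mulVec, dotProduct, Finset.mul_sum]
  rw [Finset.sum_comm]
  refine Finset.sum_eq_zero fun j _ => ?_
  calc ∑ v ∈ R.p.support, R.p v * (W i j * v j)
      = W i j * ∑ v ∈ R.p.support, R.p v * v j := by
        rw [Finset.mul_sum]; exact Finset.sum_congr rfl fun v _ => by ring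
    _ = 0 := by rw [h, mul_zero]

lemma X_cov (R : RW d) (W : Matrix (Fin d) (Fin d) ℝ) (hW : W * R.corr * W.transpose = 1)
    (i j : Fin d) :
    ∑ v ∈ R.p.support, R.p v * (W.mulVec (fun j => v j)) i * (W.mulVec (fun j => v j)) j =
      if i = j then 1 else 0 := by
  have h := congrFun (congrFun hW i) j
  rw [Matrix.one_apply] at h
  rw [← h]
  simp only [Matrix.mul_apply, Matrix.transpose_apply, RW.corr, Matrix.of_apply, Matrix.mulVec,
    dotProduct, Finset.mul_sum, Finset.sum_mul]
  rw [Finset.sum_comm]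
  refine Finset.sum_congr rfl fun a _ => ?_
  rw [Finset.sum_comm]
  refine Finset.sum_congr rfl fun b _ => ?_
  refine Finset.sum_congr rfl fun v _ => ?_
  ring

lemma main_est (Z : AddSubgroup (EuclideanSpace ℝ (Fin d))) (hZ : IsLattice Z)
    (R : RW d) (hRZ : R.OnLattice Z) (hbal : R.Balanced) (K : ℕ) :
    ∃ W : Matrix (Fin d) (Fin d) ℝ, IsUnit W.det ∧ ∃ c : ℝ, 0 < c ∧ ∃ F, Good d 1 F ∧ ∃ C : ℝ,
      ∀ n : ℕ, 1 ≤ n → ∀ z : EuclideanSpace ℝ (Fin d), ((n : ℤ), z) ∈ Yl R →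
        ‖(R.P n z : ℂ) - c * (pref n (W.mulVec fun j => z j) : ℂ) *
          (1 + F n (W.mulVec fun j => z j))‖ ≤ C / (n : ℝ) ^ K := by
  obtain ⟨b, hbL, hbi⟩ := exists_basis R Z hZ hRZ hbal
  obtain ⟨W, hWd, hW⟩ := exists_factor R.corr (corr_posDef R Z hZ hRZ)
  obtain ⟨A, hA, hAz⟩ := exists_A b W hWd
  set X : EuclideanSpace ℝ (Fin d) → Fin d → ℝ := fun v => W.mulVec fun j => v j with hX
  set E := A.transpose with hEdef
  have hE : E.det ≠ 0 := by rwa [hEdef, Matrix.det_transpose]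
  have hdt : ∀ t z, dt t (b.equivFun z) = dt (E.mulVec t) (X z) := fun t z => by
    rw [hAz, dt_mulVec]
  have hphi : ∀ t, phi R.p.support R.p (fun v => (b.equivFun v : Fin d → ℝ)) t =
      phi R.p.support R.p X (E.mulVec t) := fun t => by
    unfold phi
    exact Finset.sum_congr rfl fun v _ => by rw [hdt]
  have hφ : ∀ s ∈ E.mulVec '' cube d, s ≠ 0 → ‖phi R.p.support R.p X s‖ < 1 := by
    rintro _ ⟨t, ht, rfl⟩ hs
    rw [← hphi]
    refine phi_lt R b hbL t ht ?_
    rintro rfl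
    exact hs (Matrix.mulVec_zero _)
  obtain ⟨F, hF, C, hC⟩ := core R.p.support R.p X R.total (X_mean R hbal W) (X_cov R W hW) K
    (E.mulVec '' cube d) (image_compact E) (image_nhds E hE) hφ
  set q : ℝ := |E.det| * (2 * Real.pi) ^ d with hq
  have hqpos : 0 < q := by have := abs_pos.mpr hE; positivity
  refine ⟨W, hWd, q⁻¹, inv_pos.mpr hqpos, F, hF, q⁻¹ * C, fun n hn z hz => ?_⟩
  have h1 := hC n hn (X z)
  rw [change_var E hE] at h1
  simp_rw [← hphi, ← hdt] at h1
  rw [inversion R b hbi n z hz] at h1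
  have hqc : (q : ℂ) ≠ 0 := by exact_mod_cast hqpos.ne'
  have h2 : (R.P n z : ℂ) - ((q⁻¹ : ℝ) : ℂ) * (pref n (X z) : ℂ) * (1 + F n (X z)) =
      ((q⁻¹ : ℝ) : ℂ) * (((|E.det| : ℝ) : ℂ) * ((2 * Real.pi : ℂ) ^ d * (R.P n z : ℂ)) -
        (pref n (X z) : ℂ) * (1 + F n (X z))) := by
    have h3 : ((|E.det| : ℝ) : ℂ) * ((2 * Real.pi : ℂ) ^ d * (R.P n z : ℂ)) =
        (q : ℂ) * (R.P n z : ℂ) := by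
      rw [hq]; push_cast; ring
    rw [h3, mul_sub, Complex.ofReal_inv, inv_mul_cancel_left₀ hqc, mul_assoc]
  change ‖(R.P n z : ℂ) - ((q⁻¹ : ℝ) : ℂ) * (pref n (X z) : ℂ) * (1 + F n (X z))‖ ≤ _
  rw [h2, norm_mul, Complex.norm_real, Real.norm_of_nonneg (inv_pos.mpr hqpos).le, mul_div_assoc]
  exact mul_le_mul_of_nonneg_left h1 (inv_pos.mpr hqpos).le

lemma MB_posDef (W : Matrix (Fin d) (Fin d) ℝ) (hW : IsUnit W.det) :
    ((1 / 2 : ℝ) • (W.transpose * W)).PosDef := by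
  refine Matrix.PosDef.smul ?_ (by norm_num)
  have h := Matrix.PosDef.conjTranspose_mul_self W
    (Matrix.mulVec_injective_iff_isUnit.mpr ((Matrix.isUnit_iff_isUnit_det W).mpr hW))
  rwa [Matrix.conjTranspose_eq_transpose_of_trivial] at h

lemma MB_form (W : Matrix (Fin d) (Fin d) ℝ) (x : Fin d → ℝ) :
    ∑ i, ((1 / 2 : ℝ) • (W.transpose * W)).mulVec x i * x i =
      (∑ i, (W.mulVec x) i ^ 2) / 2 := by
  change dotProduct (((1 / 2 : ℝ) • (W.transpose * W)).mulVec x) x = _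
  have h2 : ∑ i, (W.mulVec x) i ^ 2 = dotProduct (W.mulVec x) (W.mulVec x) := by
    simp [dotProduct, sq]
  rw [h2, Matrix.smul_mulVec, smul_dotProduct, ← Matrix.mulVec_mulVec, Matrix.mulVec_transpose,
    ← Matrix.dotProduct_mulVec, smul_eq_mul]
  ring

lemma pref_eq (n : ℕ) (x : Fin d → ℝ) :
    pref n x = √(2 * Real.pi) ^ d * (n : ℝ) ^ (-(d : ℝ) / 2) *
      Real.exp (-((∑ i, x i ^ 2) / 2) / n) := by
  have h1 : (n : ℝ) ^ (-(d : ℝ) / 2) = (√(n : ℝ) ^ d)⁻¹ := by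
    rw [neg_div, Real.rpow_neg (Nat.cast_nonneg n), Real.sqrt_eq_rpow, ← Real.rpow_natCast,
      ← Real.rpow_mul (Nat.cast_nonneg n)]
    congr 2; ring
  rw [pref, h1, Real.sqrt_div (by positivity), div_pow, div_eq_mul_inv]
  congr 2
  rw [← neg_div, div_div]

lemma norm_bound (W : Matrix (Fin d) (Fin d) ℝ) : ∃ κ : ℝ, 0 ≤ κ ∧
    ∀ z : EuclideanSpace ℝ (Fin d), ‖W.mulVec fun j => z j‖ ≤ κ * ‖z‖ := by
  let T : EuclideanSpace ℝ (Fin d) →L[ℝ] (Fin d → ℝ) :=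
    ((Matrix.toLin' W) ∘ₗ (WithLp.linearEquiv 2 ℝ (Fin d → ℝ)).toLinearMap).toContinuousLinearMap
  exact ⟨‖T‖, norm_nonneg _, fun z => T.le_opNorm z⟩

lemma final (Z : AddSubgroup (EuclideanSpace ℝ (Fin d))) (hZ : IsLattice Z)
    (R : RW d) (hRZ : R.OnLattice Z) (hbal : R.Balanced) (K : ℕ) :
    ∃ (τ' : ℝ), 0 < τ' ∧
      ∃ (MB : Matrix (Fin d) (Fin d) ℝ), MB.PosDef ∧
      ∃ (L : ℕ) (Qp : MvPolynomial (Fin (d + 1)) ℝ),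
        (∀ c > (0 : ℝ), ∀ ε > (0 : ℝ), ∃ N : ℕ, ∀ n : ℕ, N ≤ n →
          ∀ z : EuclideanSpace ℝ (Fin d),
            ‖z‖ ≤ c * Real.sqrt (n * Real.log n) →
            |MvPolynomial.eval (Fin.cons (n : ℝ) fun i => z i) Qp / (n : ℝ) ^ L - 1| ≤ ε) ∧
        (∃ C₀ : ℝ, ∀ (n : ℕ), 1 ≤ n → ∀ z ∈ Z, ((n : ℤ), z) ∈ Yl R →
          |R.P n z -
              τ' * (n : ℝ) ^ (-(d : ℝ) / 2) *
                Real.exp (-(∑ i, MB.mulVec (fun j => z j) i * z i) / n) *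
                (MvPolynomial.eval (Fin.cons (n : ℝ) fun i => z i) Qp / (n : ℝ) ^ L)| ≤
            C₀ / (n : ℝ) ^ K) := by
  obtain ⟨W, hW, c, hc, F, hF, C, hC⟩ := main_est Z hZ R hRZ hbal K
  obtain ⟨⟨L, Q, hQ⟩, CF, N, hCF, hFb⟩ := hF
  obtain ⟨Q1, Q2, hQ12⟩ := re_poly Q
  obtain ⟨Q', hQ'⟩ := subst_poly W Q1
  have key : ∀ n : ℕ, 1 ≤ n → ∀ z : EuclideanSpace ℝ (Fin d),
      MvPolynomial.eval (Fin.cons (n : ℝ) fun i => z i) (MvPolynomial.X 0 ^ L + Q') /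
        (n : ℝ) ^ L = 1 + (F n (W.mulVec fun j => z j)).re := by
    intro n hn z
    have hn0 : (n : ℝ) ≠ 0 := by positivity
    have h1 := hQ n hn (W.mulVec fun j => z j)
    have h2 : (Fin.cons (n : ℂ) (fun i => (((W.mulVec fun j => z j) i : ℝ) : ℂ)) :
        Fin (d + 1) → ℂ) = fun i => (((Fin.cons (n : ℝ) (W.mulVec fun j => z j) :
          Fin (d + 1) → ℝ) i : ℝ) : ℂ) := by
      funext i
      refine Fin.cases ?_ (fun i => ?_) i <;> simp
    rw [h2, hQ12] at h1
    have h3 := congrArg Complex.re h1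
    have h4 : (n : ℂ) ^ L = (((n : ℝ) ^ L : ℝ) : ℂ) := by push_cast; rfl
    rw [h4, Complex.re_mul_ofReal, ← hQ'] at h3
    simp only [Complex.add_re, Complex.ofReal_re, Complex.mul_re, Complex.I_re, mul_zero,
      Complex.ofReal_im, zero_mul, sub_zero, add_zero] at h3
    rw [map_add, map_pow, MvPolynomial.eval_X, Fin.cons_zero, ← h3]
    field_simp
  refine ⟨c * √(2 * Real.pi) ^ d, by positivity, _, MB_posDef W hW, L,
    MvPolynomial.X 0 ^ L + Q', ?_, C, ?_⟩
  · intro c' hc' ε hε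
    obtain ⟨κ, hκ, hκz⟩ := norm_bound W
    obtain ⟨n₀, hn₀⟩ := small CF (κ * c') N hCF (by positivity) ε hε
    refine ⟨n₀, fun n hn z hz => ?_⟩
    obtain ⟨hn1, hs⟩ := hn₀ n hn
    rw [key n hn1, add_sub_cancel_left]
    refine (Complex.abs_re_le_norm _).trans ((hFb n hn1 _).trans (le_trans ?_ hs))
    have hsn : 0 < √(n : ℝ) := Real.sqrt_pos.mpr (by positivity)
    gcongr
    rw [div_le_iff₀ hsn]
    refine (hκz z).trans ?_
    rw [Real.sqrt_mul (Nat.cast_nonneg n)] at hz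
    calc κ * ‖z‖ ≤ κ * (c' * (√(n : ℝ) * √(Real.log n))) := by gcongr
      _ = _ := by ring
  · intro n hn z _ hz
    rw [key n hn, MB_form]
    refine le_trans ?_ (hC n hn z hz)
    refine le_trans (le_of_eq ?_) (Complex.abs_re_le_norm _)
    congr 1
    rw [pref_eq]
    rw [Complex.sub_re, ← Complex.ofReal_mul, Complex.re_ofReal_mul]
    simp only [Complex.add_re, Complex.one_re, Complex.ofReal_re]
    ring

end LocExp

/-- **Local expansion of the `n`-step probabilities** (Lemma 3).  For a `d`-dimensional
balanced bounded random walk on a lattice `Z` and any `K`, there are a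
`(d+1)`-dimensional sublattice `Y ⊆ ℤ × Z`, a constant `τ' > 0`, a positive definite
quadratic form `B` and a function `Q(n,z) = Qp(n,z)/n^L` (so `n^L·Q` is a polynomial in
`n` and the coordinates of `z`) with `Q = 1 + o(1)` uniformly for `‖z‖ ≤ C√(n log n)`,
such that `P_n(z) = τ'·n^{-d/2}·e^{-B(z)/n}·Q(n,z) + O(n^{-K})` on `Y`, while
`P_n(z) = 0` off `Y`. -/
theorem local_expansion
    {d : ℕ} (hd : 1 ≤ d) (Z : AddSubgroup (EuclideanSpace ℝ (Fin d))) (hZ : IsLattice Z)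
    (R : RW d) (hRZ : R.OnLattice Z) (hbal : R.Balanced) (K : ℕ) :
    ∃ (Y : AddSubgroup (ℤ × EuclideanSpace ℝ (Fin d))),
      (∀ q ∈ Y, q.2 ∈ Z) ∧
      Submodule.span ℝ
          ((fun q : ℤ × EuclideanSpace ℝ (Fin d) => ((q.1 : ℝ), q.2)) '' (Y : Set _)) = ⊤ ∧
      ∃ (τ' : ℝ), 0 < τ' ∧
      ∃ (MB : Matrix (Fin d) (Fin d) ℝ), MB.PosDef ∧
      ∃ (L : ℕ) (Qp : MvPolynomial (Fin (d + 1)) ℝ),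
        -- `Q(n,z) := Qp(n, z) / n^L` satisfies `Q = 1 + o(1)` uniformly for
        -- `‖z‖ ≤ C √(n log n)`:
        (∀ c > (0 : ℝ), ∀ ε > (0 : ℝ), ∃ N : ℕ, ∀ n : ℕ, N ≤ n →
          ∀ z : EuclideanSpace ℝ (Fin d),
            ‖z‖ ≤ c * Real.sqrt (n * Real.log n) →
            |MvPolynomial.eval (Fin.cons (n : ℝ) fun i => z i) Qp / (n : ℝ) ^ L - 1| ≤ ε) ∧
        (∃ C₀ : ℝ, ∀ (n : ℕ), 1 ≤ n → ∀ z ∈ Z, ((n : ℤ), z) ∈ Y →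
          |R.P n z -
              τ' * (n : ℝ) ^ (-(d : ℝ) / 2) *
                Real.exp (-(∑ i, MB.mulVec (fun j => z j) i * z i) / n) *
                (MvPolynomial.eval (Fin.cons (n : ℝ) fun i => z i) Qp / (n : ℝ) ^ L)| ≤
            C₀ / (n : ℝ) ^ K) ∧
        (∀ (n : ℕ), ∀ z ∈ Z, ((n : ℤ), z) ∉ Y → R.P n z = 0) := by
  exact ⟨LocExp.Yl R, LocExp.Yl_Z R Z hRZ, LocExp.span_Yl R Z hZ hRZ hbal, by
    obtain ⟨τ', h1, MB, h2, L, Qp, h3, h4⟩ := LocExp.final Z hZ R hRZ hbal K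
    exact ⟨τ', h1, MB, h2, L, Qp, h3, h4, fun n z _ hz => by
      by_contra h
      exact hz (LocExp.P_mem R n z h)⟩⟩
end
end

section
/- Let q ∈ ℕ, 1 ≤ j ≤ q and s > 1. Then for every K > 0, as r → ∞, ∑_{n ≥ j, n ≡ j (mod q)} n^{−s}·e^{−r/n} = Γ(s−1)/(q·r^{s−1}) + O(r^{−K}); that is, the error is superpolynomially small in r. -/
open scoped BigOperators
open MeasureTheory Filter Topology Set
open scoped FourierTransform

/-- The profile `x ^ (-s) * exp (-r / x)` extended by zero to `x ≤ 0`. -/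
noncomputable def prof (s r x : ℝ) : ℝ := if 0 < x then x ^ (-s) * Real.exp (-r / x) else 0

lemma prof_pos (s r : ℝ) {x : ℝ} (hx : 0 < x) : prof s r x = x ^ (-s) * Real.exp (-r / x) :=
  if_pos hx

lemma prof_nonpos (s r : ℝ) {x : ℝ} (hx : x ≤ 0) : prof s r x = 0 :=
  if_neg (not_lt.mpr hx)

lemma prof_nonneg (s r x : ℝ) : 0 ≤ prof s r x := by
  unfold prof; split_ifs
  · positivity
  · exact le_rfl

lemma prof_tendsto_zero (s : ℝ) {r : ℝ} (hr : 0 < r) :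
    Tendsto (prof s r) (𝓝 0) (𝓝 0) := by
  suffices h : Tendsto (prof s r) (𝓝[≤] 0 ⊔ 𝓝[>] 0) (𝓝 0) by
    rwa [nhdsLE_sup_nhdsGT] at h
  rw [tendsto_sup]
  constructor
  · refine tendsto_const_nhds.congr' ?_
    filter_upwards [self_mem_nhdsWithin] with x hx
    exact (prof_nonpos s r hx).symm
  · have h := (tendsto_rpow_mul_exp_neg_mul_atTop_nhds_zero s r hr).comp
      (tendsto_inv_nhdsGT_zero (𝕜 := ℝ))
    refine h.congr' ?_
    filter_upwards [self_mem_nhdsWithin] with x hx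
    have hx : 0 < x := hx
    rw [prof_pos s r hx, Real.rpow_neg hx.le, ← Real.inv_rpow hx.le]
    simp only [Function.comp, div_eq_mul_inv]

lemma prof_hasDerivAt (s : ℝ) {r : ℝ} (hr : 0 < r) (x : ℝ) :
    HasDerivAt (prof s r) (-s * prof (s + 1) r x + r * prof (s + 2) r x) x := by
  rcases lt_trichotomy x 0 with hx | rfl | hx
  · rw [prof_nonpos _ _ hx.le, prof_nonpos _ _ hx.le]
    simp only [mul_zero, add_zero]
    refine (hasDerivAt_const x (0 : ℝ)).congr_of_eventuallyEq ?_
    filter_upwards [eventually_lt_nhds hx] with y hy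
    exact prof_nonpos _ _ hy.le
  · rw [prof_nonpos _ _ le_rfl, prof_nonpos _ _ le_rfl]
    simp only [mul_zero, add_zero]
    rw [hasDerivAt_iff_tendsto_slope_zero]
    refine ((prof_tendsto_zero (s + 1) hr).mono_left nhdsWithin_le_nhds).congr' ?_
    filter_upwards [self_mem_nhdsWithin] with y hy
    rw [prof_nonpos _ _ (le_refl (0 : ℝ)), zero_add, sub_zero, smul_eq_mul]
    rcases lt_or_gt_of_ne (show y ≠ 0 from hy) with h | h
    · rw [prof_nonpos _ _ h.le, prof_nonpos _ _ h.le, mul_zero]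
    · rw [prof_pos _ _ h, prof_pos _ _ h, neg_add, Real.rpow_add h, Real.rpow_neg_one]
      ring
  · have h1 : HasDerivAt (fun y : ℝ => y ^ (-s)) (-s * x ^ (-s - 1)) x :=
      Real.hasDerivAt_rpow_const (Or.inl hx.ne')
    have h2 : HasDerivAt (fun y : ℝ => Real.exp (-r / y)) (Real.exp (-r / x) * (r * (x ^ 2)⁻¹)) x := by
      have h3 : HasDerivAt (fun y : ℝ => -r / y) (r * (x ^ 2)⁻¹) x := by
        have := (hasDerivAt_inv hx.ne').const_mul (-r)
        simpa [div_eq_mul_inv] using this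
      exact h3.exp
    have h4 := h1.mul h2
    refine (h4.congr_of_eventuallyEq ?_).congr_deriv ?_
    · filter_upwards [eventually_gt_nhds hx] with y hy
      exact prof_pos _ _ hy
    · rw [prof_pos _ _ hx, prof_pos _ _ hx,
        show -(s + 2) = -s - (2 : ℕ) by push_cast; ring, Real.rpow_sub_natCast hx.ne',
        show -(s + 1) = -s - 1 by ring]
      field_simp

lemma prof_integrableOn_and {s r : ℝ} (hs : 1 < s) (hr : 0 < r) :
    IntegrableOn (prof s r) (Ioi 0) ∧
    ∫ x in Ioi 0, prof s r x = (1 / r) ^ (s - 1) * Real.Gamma (s - 1) := by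
  have hs' : 0 < s - 1 := by linarith
  have key := Real.integral_rpow_mul_exp_neg_mul_Ioi hs' hr
  have hint : IntegrableOn (fun t : ℝ => t ^ (s - 1 - 1) * Real.exp (-(r * t))) (Ioi 0) :=
    .of_integral_ne_zero (by
      rw [key]
      have := Real.Gamma_pos_of_pos hs'
      positivity)
  have heq : EqOn (fun x : ℝ => (|(-1 : ℝ)| * x ^ ((-1 : ℝ) - 1)) •
      (fun t : ℝ => t ^ (s - 1 - 1) * Real.exp (-(r * t))) (x ^ (-1 : ℝ))) (prof s r) (Ioi 0) := by
    intro x hx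
    have hx : 0 < x := hx
    simp only [smul_eq_mul]
    rw [prof_pos _ _ hx, ← Real.rpow_mul hx.le, abs_neg, abs_one, one_mul, ← mul_assoc,
      ← Real.rpow_add hx, Real.rpow_neg_one]
    congr 2
    · ring
    · ring
  constructor
  · exact ((integrableOn_Ioi_comp_rpow_iff _ (by norm_num : (-1 : ℝ) ≠ 0)).mpr hint).congr_fun
      heq measurableSet_Ioi
  · rw [← key, ← integral_comp_rpow_Ioi
      (fun t : ℝ => t ^ (s - 1 - 1) * Real.exp (-(r * t))) (by norm_num : (-1 : ℝ) ≠ 0)]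
    exact (setIntegral_congr_fun measurableSet_Ioi heq).symm

lemma prof_indicator (s r : ℝ) : (Ioi (0 : ℝ)).indicator (prof s r) = prof s r := by
  ext x
  by_cases hx : x ∈ Ioi (0 : ℝ)
  · rw [indicator_of_mem hx]
  · rw [indicator_of_notMem hx, prof_nonpos _ _ (not_lt.mp hx)]

lemma prof_integrable {s r : ℝ} (hs : 1 < s) (hr : 0 < r) : Integrable (prof s r) := by
  rw [← prof_indicator, integrable_indicator_iff measurableSet_Ioi]
  exact (prof_integrableOn_and hs hr).1

lemma prof_integral {s r : ℝ} (hs : 1 < s) (hr : 0 < r) :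
    ∫ x, prof s r x = (1 / r) ^ (s - 1) * Real.Gamma (s - 1) := by
  rw [← (prof_integrableOn_and hs hr).2, ← integral_indicator measurableSet_Ioi, prof_indicator]

/-- Complex version of the profile. -/
noncomputable def cprof (s r : ℝ) (x : ℝ) : ℂ := (prof s r x : ℂ)

lemma cprof_hasDerivAt (s : ℝ) {r : ℝ} (hr : 0 < r) (x : ℝ) :
    HasDerivAt (cprof s r) (((-s : ℝ) : ℂ) • cprof (s + 1) r x + (r : ℂ) • cprof (s + 2) r x) x := by
  refine (prof_hasDerivAt s hr x).ofReal_comp.congr_deriv ?_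
  simp [cprof]

lemma cprof_integrable {s r : ℝ} (hs : 1 < s) (hr : 0 < r) : Integrable (cprof s r) :=
  (prof_integrable hs hr).ofReal

lemma cprof_fourier_zero {s r : ℝ} (hs : 1 < s) (hr : 0 < r) :
    𝓕 (cprof s r) 0 = (((1 / r) ^ (s - 1) * Real.Gamma (s - 1) : ℝ) : ℂ) := by
  rw [Real.fourier_real_eq_integral_exp_smul, ← prof_integral hs hr, ← integral_complex_ofReal]
  simp [cprof]

lemma cprof_fourier_le {s r : ℝ} (hs : 1 < s) (hr : 0 < r) (t : ℝ) :
    ‖𝓕 (cprof s r) t‖ ≤ (1 / r) ^ (s - 1) * Real.Gamma (s - 1) := by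
  rw [← prof_integral hs hr, Real.fourier_real_eq_integral_exp_smul]
  refine (norm_integral_le_integral_norm _).trans (le_of_eq ?_)
  congr 1 with x
  rw [norm_smul, Complex.norm_exp_ofReal_mul_I, one_mul, cprof, Complex.norm_real,
    Real.norm_of_nonneg (prof_nonneg _ _ _)]

lemma cprof_fourier_rec {s r : ℝ} (hs : 1 < s) (hr : 0 < r) (t : ℝ) :
    (2 * Real.pi * Complex.I * t) • 𝓕 (cprof s r) t =
      ((-s : ℝ) : ℂ) • 𝓕 (cprof (s + 1) r) t + (r : ℂ) • 𝓕 (cprof (s + 2) r) t := by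
  have hd : deriv (cprof s r) =
      fun x => ((-s : ℝ) : ℂ) • cprof (s + 1) r x + (r : ℂ) • cprof (s + 2) r x :=
    funext fun x => (cprof_hasDerivAt s hr x).deriv
  have i1 : Integrable (cprof (s + 1) r) := cprof_integrable (by linarith) hr
  have i2 : Integrable (cprof (s + 2) r) := cprof_integrable (by linarith) hr
  have h := Real.fourier_deriv (cprof_integrable hs hr)
    (fun x => (cprof_hasDerivAt s hr x).differentiableAt)
    (by rw [hd]; exact (i1.smul ((-s : ℝ) : ℂ)).add (i2.smul (r : ℂ)))
  have h' := congrFun h t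
  rw [← h', hd]
  have j1 : Integrable (fun v : ℝ => Real.fourierChar (-(v * t)) • cprof (s + 1) r v) := by
    simpa [mul_comm] using (Real.fourierIntegral_convergent_iff (μ := volume) (f := cprof (s + 1) r) t).2 i1
  have j2 : Integrable (fun v : ℝ => Real.fourierChar (-(v * t)) • cprof (s + 2) r v) := by
    simpa [mul_comm] using (Real.fourierIntegral_convergent_iff (μ := volume) (f := cprof (s + 2) r) t).2 i2
  rw [Real.fourier_real_eq, Real.fourier_real_eq, Real.fourier_real_eq, ← integral_smul,
    ← integral_smul, ← integral_add (by exact j1.smul ((-s : ℝ) : ℂ)) (by exact j2.smul (r : ℂ))]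
  congr 1 with x
  simp only [smul_add, Pi.smul_apply]
  rw [smul_comm, smul_comm _ (r : ℂ)]

lemma cprof_fourier_decay (N : ℕ) : ∀ s : ℝ, 1 < s → ∃ C : ℝ, 0 ≤ C ∧ ∀ r : ℝ, 0 < r → ∀ t : ℝ,
    |t| ^ N * ‖𝓕 (cprof s r) t‖ ≤ C * (1 / r) ^ (s - 1 + N) := by
  induction N with
  | zero =>
    intro s hs
    refine ⟨Real.Gamma (s - 1), (Real.Gamma_pos_of_pos (by linarith)).le, fun r hr t => ?_⟩
    have := cprof_fourier_le hs hr t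
    simp only [pow_zero, one_mul, Nat.cast_zero, add_zero]
    linarith
  | succ N ih =>
    intro s hs
    obtain ⟨C1, h1, H1⟩ := ih (s + 1) (by linarith)
    obtain ⟨C2, h2, H2⟩ := ih (s + 2) (by linarith)
    refine ⟨s * C1 + C2, by nlinarith, fun r hr t => ?_⟩
    have hrec := congrArg norm (cprof_fourier_rec hs hr t)
    have e1 := H1 r hr t
    have e2 := H2 r hr t
    have hn : ‖(2 * Real.pi * Complex.I * t : ℂ)‖ = 2 * Real.pi * |t| := by
      simp [abs_of_pos Real.pi_pos]
    rw [norm_smul, hn] at hrec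
    have hle : 2 * Real.pi * |t| * ‖𝓕 (cprof s r) t‖ ≤
        s * ‖𝓕 (cprof (s + 1) r) t‖ + r * ‖𝓕 (cprof (s + 2) r) t‖ := by
      rw [hrec]
      refine (norm_add_le _ _).trans (le_of_eq ?_)
      rw [norm_smul, norm_smul, Complex.norm_real, Complex.norm_real, norm_neg,
        Real.norm_of_nonneg (by linarith : 0 ≤ s), Real.norm_of_nonneg hr.le]
    have hpi : |t| * ‖𝓕 (cprof s r) t‖ ≤ 2 * Real.pi * |t| * ‖𝓕 (cprof s r) t‖ := by
      have h0 : 0 ≤ |t| * ‖𝓕 (cprof s r) t‖ := by positivity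
      nlinarith [Real.pi_gt_three]
    have hp1 : (1 / r) ^ (s + 1 - 1 + (N : ℝ)) = (1 / r) ^ (s - 1 + ((N + 1 : ℕ) : ℝ)) := by
      congr 1; push_cast; ring
    have hp2 : r * (1 / r) ^ (s + 2 - 1 + (N : ℝ)) = (1 / r) ^ (s - 1 + ((N + 1 : ℕ) : ℝ)) := by
      rw [show s + 2 - 1 + (N : ℝ) = (s - 1 + ((N + 1 : ℕ) : ℝ)) + 1 by push_cast; ring,
        Real.rpow_add (by positivity), Real.rpow_one]
      field_simp
    calc |t| ^ (N + 1) * ‖𝓕 (cprof s r) t‖ = |t| ^ N * (|t| * ‖𝓕 (cprof s r) t‖) := by ring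
      _ ≤ |t| ^ N * (s * ‖𝓕 (cprof (s + 1) r) t‖ + r * ‖𝓕 (cprof (s + 2) r) t‖) := by
        gcongr; exact hpi.trans hle
      _ = s * (|t| ^ N * ‖𝓕 (cprof (s + 1) r) t‖) + r * (|t| ^ N * ‖𝓕 (cprof (s + 2) r) t‖) := by
        ring
      _ ≤ s * (C1 * (1 / r) ^ (s + 1 - 1 + (N : ℝ))) + r * (C2 * (1 / r) ^ (s + 2 - 1 + (N : ℝ))) := by
        gcongr
      _ = s * C1 * (1 / r) ^ (s + 1 - 1 + (N : ℝ)) + C2 * (r * (1 / r) ^ (s + 2 - 1 + (N : ℝ))) := by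
        ring
      _ = _ := by rw [hp1, hp2]; ring

lemma cprof_isBigO {s r : ℝ} (hr : 0 < r) :
    (cprof s r) =O[cocompact ℝ] (fun x : ℝ => |x| ^ (-s)) := by
  refine Asymptotics.isBigO_of_le _ fun x => ?_
  rw [cprof, Complex.norm_real]
  rcases le_or_gt x 0 with hx | hx
  · rw [prof_nonpos _ _ hx, norm_zero]; positivity
  · rw [Real.norm_of_nonneg (prof_nonneg _ _ _), Real.norm_of_nonneg (by positivity),
      prof_pos _ _ hx, abs_of_pos hx]
    have : Real.exp (-r / x) ≤ 1 := by
      rw [Real.exp_le_one_iff]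
      exact div_nonpos_of_nonpos_of_nonneg (by linarith) hx.le
    have h0 : 0 ≤ x ^ (-s) := by positivity
    nlinarith

lemma poisson_est {s : ℝ} (hs : 1 < s) (K : ℕ) : ∃ C : ℝ, 0 ≤ C ∧ ∀ r : ℝ, 1 ≤ r → ∀ x : ℝ,
    ‖∑' n : ℤ, cprof s r (x + n) - (((1 / r) ^ (s - 1) * Real.Gamma (s - 1) : ℝ) : ℂ)‖
      ≤ C / r ^ K := by
  obtain ⟨C, hC, H⟩ := cprof_fourier_decay (K + 2) s hs
  have hsum : Summable (fun n : ℤ => 1 / (n : ℝ) ^ (2 : ℕ)) :=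
    Real.summable_one_div_int_pow.mpr (by norm_num)
  refine ⟨C * ∑' n : ℤ, 1 / (n : ℝ) ^ (2 : ℕ), by positivity, fun r hr x => ?_⟩
  have hr0 : 0 < r := by linarith
  have hpow : (1 / r) ^ (s - 1 + ((K + 2 : ℕ) : ℝ)) ≤ 1 / r ^ K := by
    rw [one_div, Real.inv_rpow hr0.le, one_div]
    apply inv_anti₀ (by positivity)
    rw [← Real.rpow_natCast]
    apply Real.rpow_le_rpow_of_exponent_le hr
    push_cast; linarith
  have hb : ∀ n : ℤ, n ≠ 0 → ‖𝓕 (cprof s r) n‖ ≤ C / r ^ K * (1 / (n : ℝ) ^ (2 : ℕ)) := by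
    intro n hn
    have h1 := H r hr0 n
    have hn1 : (1 : ℝ) ≤ |(n : ℝ)| := by exact_mod_cast Int.one_le_abs hn
    have h2 : |(n : ℝ)| ^ 2 * ‖𝓕 (cprof s r) n‖ ≤ |(n : ℝ)| ^ (K + 2) * ‖𝓕 (cprof s r) n‖ := by
      gcongr
      omega
    have h3 : |(n : ℝ)| ^ 2 * ‖𝓕 (cprof s r) n‖ ≤ C * (1 / r ^ K) :=
      h2.trans (h1.trans (by gcongr))
    rw [sq_abs] at h3
    have hn2 : 0 < (n : ℝ) ^ 2 := by positivity
    rw [mul_one_div, le_div_iff₀ hn2]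
    calc _ = _ := mul_comm _ _
      _ ≤ _ := h3
      _ = _ := by ring
  have hg : Summable (fun n : ℤ => C / r ^ K * (1 / (n : ℝ) ^ (2 : ℕ))) := hsum.mul_left _
  have hF : Summable (fun n : ℤ => 𝓕 (cprof s r) n) := by
    refine Summable.of_norm_bounded_eventually hg ?_
    filter_upwards [(Set.finite_singleton (0 : ℤ)).compl_mem_cofinite] with n hn
    exact hb n hn
  have hcont : Continuous (cprof s r) :=
    continuous_iff_continuousAt.mpr fun y => (cprof_hasDerivAt s hr0 y).continuousAt
  have hP := Real.tsum_eq_tsum_fourier_of_rpow_decay_of_summable hcont hs (cprof_isBigO hr0) hF x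
  have hF' : Summable (fun n : ℤ => 𝓕 (cprof s r) n * fourier n (x : UnitAddCircle)) := by
    refine Summable.of_norm ?_
    refine hF.norm.congr fun n => ?_
    rw [norm_mul, fourier_apply, Circle.norm_coe, mul_one]
  rw [hP, hF'.tsum_eq_add_tsum_ite 0]
  have h0 : 𝓕 (cprof s r) ((0 : ℤ) : ℝ) * fourier 0 (x : UnitAddCircle) =
      (((1 / r) ^ (s - 1) * Real.Gamma (s - 1) : ℝ) : ℂ) := by
    rw [Int.cast_zero, cprof_fourier_zero hs hr0, fourier_zero, mul_one]
  rw [h0, add_sub_cancel_left]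
  have : C * (∑' n : ℤ, 1 / (n : ℝ) ^ (2 : ℕ)) / r ^ K =
      ∑' n : ℤ, C / r ^ K * (1 / (n : ℝ) ^ (2 : ℕ)) := by
    rw [tsum_mul_left]; ring
  rw [this]
  refine tsum_of_norm_bounded hg.hasSum fun n => ?_
  split_ifs with hn
  · rw [norm_zero]; positivity
  · rw [norm_mul, fourier_apply, Circle.norm_coe, mul_one]
    exact hb n hn

lemma tsum_int_eq {s r x : ℝ} (hx1 : x ≤ 1) :
    ∑' n : ℤ, cprof s r (x + n) = ((∑' m : ℕ, prof s r (x + m) : ℝ) : ℂ) := by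
  rw [Complex.ofReal_tsum]
  have hinj : Function.Injective (fun m : ℕ => (m : ℤ)) := Nat.cast_injective
  rw [← hinj.tsum_eq (f := fun n : ℤ => cprof s r (x + n))]
  · simp [cprof]
  · intro n hn
    by_contra hcon
    apply hn
    have hneg : n < 0 := by
      by_contra h
      exact hcon ⟨n.toNat, by simp only; omega⟩
    have : (n : ℝ) ≤ -1 := by exact_mod_cast (by omega : n ≤ -1)
    simp only [cprof]
    rw [prof_nonpos _ _ (by linarith), Complex.ofReal_zero]

/-- **Superpolynomial summation estimate** (Lemma 4, case `s > 1`).  For `1 ≤ j ≤ q` and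
`s > 1`, the sum over `n ≡ j (mod q)`, `n ≥ j` (i.e. `n = j + q·m`) satisfies
`∑ n^{-s} e^{-r/n} = Γ(s-1)/(q·r^{s-1}) + O(r^{-K})` for every `K > 0` as `r → ∞`. -/
theorem sum_exp_superpolynomial (q j : ℕ) (hj : 1 ≤ j) (hjq : j ≤ q)
    (s : ℝ) (hs : 1 < s) (K : ℕ) (hK : 0 < K) :
    ∃ C r₀ : ℝ, ∀ r : ℝ, r₀ ≤ r →
      |(∑' m : ℕ, ((j + q * m : ℕ) : ℝ) ^ (-s) * Real.exp (-r / ((j + q * m : ℕ) : ℝ))) -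
          Real.Gamma (s - 1) / ((q : ℝ) * r ^ (s - 1))| ≤ C / r ^ K := by
  obtain ⟨C, hC, H⟩ := poisson_est hs K
  have hq : (0 : ℝ) < q := by exact_mod_cast (by omega : 0 < q)
  have hj0 : (0 : ℝ) < j := by exact_mod_cast hj
  have hjq' : (j : ℝ) ≤ q := by exact_mod_cast hjq
  refine ⟨(q : ℝ) ^ (-s) * (C * q ^ K), q, fun r hr => ?_⟩
  have hr0 : 0 < r := by linarith
  have hR := H (r / q) ((one_le_div hq).mpr hr) (j / q)
  rw [tsum_int_eq ((div_le_one hq).mpr hjq'), ← Complex.ofReal_sub,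
    Complex.norm_real, Real.norm_eq_abs] at hR
  have hterm : ∀ m : ℕ, ((j + q * m : ℕ) : ℝ) ^ (-s) * Real.exp (-r / ((j + q * m : ℕ) : ℝ)) =
      (q : ℝ) ^ (-s) * prof s (r / q) (j / q + m) := by
    intro m
    have hp : (0 : ℝ) < j / q + m := by positivity
    have he : ((j + q * m : ℕ) : ℝ) = q * (j / q + m) := by push_cast; field_simp
    rw [prof_pos _ _ hp, he, Real.mul_rpow hq.le hp.le, mul_assoc]
    congr 3
    rw [neg_div, neg_div, div_div]
  have hmain : Real.Gamma (s - 1) / ((q : ℝ) * r ^ (s - 1)) =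
      (q : ℝ) ^ (-s) * ((1 / (r / q)) ^ (s - 1) * Real.Gamma (s - 1)) := by
    rw [one_div_div, Real.div_rpow hq.le hr0.le, Real.rpow_neg hq.le,
      show s = (s - 1) + 1 by ring, Real.rpow_add hq, Real.rpow_one]
    simp only [add_sub_cancel_right]
    have : (q : ℝ) ^ (s - 1) ≠ 0 := by positivity
    field_simp
  simp_rw [hterm]
  rw [tsum_mul_left, hmain, ← mul_sub, abs_mul, abs_of_pos (by positivity), mul_div_assoc]
  gcongr
  refine hR.trans (le_of_eq ?_)
  rw [div_pow]
  field_simp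
end
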